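/- Fix a constant m ≥ 1. There exist constants C > 0 and c ≥ 0 (depending only on m) such that the following holds. Let p be an odd prime, let g, h : 𝔽_p* → 𝔽_p* be arbitrary functions with μ(g·h) ≤ m (where (g·h)(x) := g(x)h(x)), and define f(x,y) = g(x)(h(x)+y) on 𝔽_p* × 𝔽_p*. Then for every nonempty finite subset A ⊆ 𝔽_p* with |A| ≤ p^{3/5}, one has max{|f(A,A)|, |A·A|} ≥ C (log(2|A|))^{−c} |A|^{11/9}. -/

import Mathlib

open Finset Pointwise

/-- `mu g` is `max_{t ∈ 𝔽_p*} |{x ∈ 𝔽_p* : g x = t}|`. -/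
def mu {p : ℕ} [NeZero p] (g : ZMod p → ZMod p) : ℕ :=
  Finset.sup (Finset.univ.filter fun t : ZMod p => t ≠ 0)
    (fun t => (Finset.univ.filter fun x : ZMod p => x ≠ 0 ∧ g x = t).card)


namespace PP
open MvPolynomial

variable {K : Type*} [Field K]

/-- restriction of a polynomial in `z,u,v` (variables `0,1,2`) to a parametrized line -/
noncomputable def res (a b : Fin 3 → K) : MvPolynomial (Fin 3) K →ₐ[K] Polynomial K :=
  aeval (fun i => Polynomial.C (a i) * Polynomial.X + Polynomial.C (b i))

lemma res_deriv (a b : Fin 3 → K) (F : MvPolynomial (Fin 3) K) :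
    Polynomial.derivative (res a b F) = ∑ i, Polynomial.C (a i) * res a b (pderiv i F) := by
  induction F using MvPolynomial.induction_on with
  | C r => simp [res]
  | add p q hp hq => simp [hp, hq, mul_add, Finset.sum_add_distrib]
  | mul_X p n hp =>
    rw [map_mul, Polynomial.derivative_mul, hp]
    simp only [Derivation.leibniz, smul_eq_mul, map_add, map_mul, mul_add, Finset.sum_add_distrib, pderiv_X]
    have : ∀ i, res a b (Pi.single (M := fun _ => MvPolynomial (Fin 3) K) n 1 i) = if i = n then 1 else 0 := by
      intro i
      by_cases h : i = n
      · subst h; simp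
      · simp [h, Pi.single_eq_of_ne]
    have h2 : Polynomial.derivative (res a b (X n)) = Polynomial.C (a n) := by simp [res]
    rw [h2, add_comm]
    congr 1
    · simp only [Fin.sum_univ_three, pderiv_X, this]
      fin_cases n <;> simp [mul_comm]
    · rw [Finset.sum_mul]; exact Finset.sum_congr rfl fun i _ => by ring

lemma res_natDegree (a b : Fin 3 → K) (F : MvPolynomial (Fin 3) K) :
    (res a b F).natDegree ≤ F.totalDegree := by
  have := MvPolynomial.aeval_natDegree_le F (n := 1) (m := F.totalDegree) le_rfl
    (fun i => Polynomial.C (a i) * Polynomial.X + Polynomial.C (b i)) (fun i => Polynomial.natDegree_linear_le)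
  simpa [res] using this

lemma pderiv_comm (i j : Fin 3) (F : MvPolynomial (Fin 3) K) :
    pderiv i (pderiv j F) = pderiv j (pderiv i F) := by
  induction F using MvPolynomial.induction_on with
  | C r => simp
  | add p q hp hq => simp [hp, hq]
  | mul_X p n hp =>
    have h : ∀ i j : Fin 3, pderiv i (pderiv j (X n : MvPolynomial (Fin 3) K)) = 0 := by
      intro i j
      rw [pderiv_X]
      by_cases h : j = n
      · subst h; simp
      · rw [Pi.single_eq_of_ne (Ne.symm h), map_zero]
    simp only [Derivation.leibniz, smul_eq_mul, map_add, hp, h]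
    ring

/-- `P`-line: `u = t, v = Y, z = X t + Z` -/
noncomputable def rP (q : K × K × K) : MvPolynomial (Fin 3) K →ₐ[K] Polynomial K :=
  res ![q.1, 1, 0] ![q.2.2, 0, q.2.1]
/-- `Pi`-line `(s,c,e)`: `u = s, v = t, z = c t + e` -/
noncomputable def rPi (q : K × K × K) : MvPolynomial (Fin 3) K →ₐ[K] Polynomial K :=
  res ![q.2.1, 0, 1] ![q.2.2, q.1, 0]

/-- the ruling polynomial in direction `i` -/
noncomputable def TT (i : Fin 3) (F : MvPolynomial (Fin 3) K) : MvPolynomial (Fin 3) K :=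
  (pderiv 0 F)^2 * pderiv i (pderiv i F) - 2 * pderiv 0 F * pderiv i F * pderiv i (pderiv 0 F)
    + (pderiv i F)^2 * pderiv 0 (pderiv 0 F)

lemma TT_res_aux {R : Type*} [CommRing R] (a f0 fi f00 fi0 fii : R)
    (h1 : fi = - a * f0) (h2 : fii + a * fi0 + a * (fi0 + a * f00) = 0) :
    f0^2 * fii - 2 * f0 * fi * fi0 + fi^2 * f00 = 0 := by
  subst h1; linear_combination f0^2 * h2

lemma TT_rP (q : K × K × K) (F : MvPolynomial (Fin 3) K) (h : rP q F = 0) : rP q (TT 1 F) = 0 := by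
  have d : ∀ G, Polynomial.derivative (rP q G) = Polynomial.C q.1 * rP q (pderiv 0 G) + rP q (pderiv 1 G) := by
    intro G; rw [rP, res_deriv]; simp [Fin.sum_univ_three]
  have h1 : Polynomial.C q.1 * rP q (pderiv 0 F) + rP q (pderiv 1 F) = 0 := by rw [← d, h]; simp
  have h2 := congrArg Polynomial.derivative h1
  simp only [Polynomial.derivative_add, Polynomial.derivative_mul, d, Polynomial.derivative_C, map_zero] at h2
  simp only [TT, map_add, map_sub, map_mul, map_pow, map_ofNat]
  rw [pderiv_comm 0 1] at h2
  exact TT_res_aux (Polynomial.C q.1) _ _ _ _ _ (by linear_combination h1) (by linear_combination h2)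

lemma TT_rPi (q : K × K × K) (F : MvPolynomial (Fin 3) K) (h : rPi q F = 0) : rPi q (TT 2 F) = 0 := by
  have d : ∀ G, Polynomial.derivative (rPi q G) = Polynomial.C q.2.1 * rPi q (pderiv 0 G) + rPi q (pderiv 2 G) := by
    intro G; rw [rPi, res_deriv]; simp [Fin.sum_univ_three]
  have h1 : Polynomial.C q.2.1 * rPi q (pderiv 0 F) + rPi q (pderiv 2 F) = 0 := by rw [← d, h]; simp
  have h2 := congrArg Polynomial.derivative h1
  simp only [Polynomial.derivative_add, Polynomial.derivative_mul, d, Polynomial.derivative_C, map_zero] at h2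
  simp only [TT, map_add, map_sub, map_mul, map_pow, map_ofNat]
  rw [pderiv_comm 0 2] at h2
  exact TT_res_aux (Polynomial.C q.2.1) _ _ _ _ _ (by linear_combination h1) (by linear_combination h2)

lemma pderiv_totalDegree (i : Fin 3) (F : MvPolynomial (Fin 3) K) :
    (pderiv i F).totalDegree ≤ F.totalDegree - 1 := by
  conv_lhs => rw [F.as_sum, map_sum]
  refine totalDegree_finsetSum_le fun s hs => ?_
  rw [pderiv_monomial]
  by_cases h0 : s i = 0
  · simp [h0]
  refine (totalDegree_monomial_le _ _).trans ?_
  have h1 := le_totalDegree hs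
  have h2 : (s - Finsupp.single i 1) + Finsupp.single i 1 = s := by
    ext j
    by_cases hj : j = i
    · subst hj; simp; omega
    · simp [Finsupp.single_apply, Ne.symm hj]
  have h3 : (s - Finsupp.single i 1).degree + 1 = s.degree := by
    conv_rhs => rw [← h2, map_add]
    simp
  have h4 : s.degree = s.sum fun _ e => e := rfl
  have h5 : (s - Finsupp.single i 1).degree = (s - Finsupp.single i 1).sum fun _ e => e := rfl
  rw [← h4] at h1
  have : (s - Finsupp.single i 1).degree ≤ F.totalDegree - 1 := by omega
  exact this

lemma TT_totalDegree (i : Fin 3) (F : MvPolynomial (Fin 3) K) : (TT i F).totalDegree ≤ 3 * F.totalDegree := by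
  have h : ∀ j, (pderiv j F).totalDegree ≤ F.totalDegree := fun j => (pderiv_totalDegree j F).trans (Nat.sub_le _ _)
  have h' : ∀ j k, (pderiv j (pderiv k F)).totalDegree ≤ F.totalDegree := fun j k =>
    (pderiv_totalDegree j _).trans ((Nat.sub_le _ _).trans (h k))
  have m3 : ∀ A B C : MvPolynomial (Fin 3) K, A.totalDegree ≤ F.totalDegree → B.totalDegree ≤ F.totalDegree →
      C.totalDegree ≤ F.totalDegree → (A * B * C).totalDegree ≤ 3 * F.totalDegree := by
    intro A B C hA hB hC
    have h1 := totalDegree_mul (A * B) C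
    have h2 := totalDegree_mul A B
    omega
  have e : TT i F = (pderiv 0 F * pderiv 0 F * pderiv i (pderiv i F)
     - (pderiv 0 F * pderiv i F * pderiv i (pderiv 0 F) + pderiv 0 F * pderiv i F * pderiv i (pderiv 0 F)))
    + pderiv i F * pderiv i F * pderiv 0 (pderiv 0 F) := by unfold TT; ring
  rw [e]
  refine (totalDegree_add _ _).trans (max_le ((totalDegree_sub _ _).trans (max_le ?_ ((totalDegree_add _ _).trans (max_le ?_ ?_)))) ?_)
  all_goals exact m3 _ _ _ (by simp [h, h']) (by simp [h, h']) (by simp [h, h'])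
end PP


namespace PP
open MvPolynomial
variable {K : Type*} [Field K]

/-- if all elements of `S` vanish at `x0` and `S` is closed under derivatives, small degree forces zero -/
lemma zero_of_closed (p : ℕ) (hp : ∀ i : ℕ, 0 < i → i < p → (i : K) ≠ 0) (x0 : Fin 3 → K)
    (S : Set (MvPolynomial (Fin 3) K)) (h0 : ∀ q ∈ S, eval x0 q = 0)
    (hd : ∀ q ∈ S, ∀ i, pderiv i q ∈ S) :
    ∀ n, ∀ q ∈ S, q.totalDegree ≤ n → n < p → q = 0 := by
  intro n
  induction n with
  | zero =>
    intro q hq hn _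
    rw [totalDegree_eq_zero_iff_eq_C.1 (Nat.le_zero.1 hn)] at hq ⊢
    have := h0 _ hq
    simp at this
    simp [this]
  | succ n ih =>
    intro q hq hn hnp
    have hz : ∀ i, pderiv i q = 0 := fun i =>
      ih _ (hd q hq i) ((pderiv_totalDegree i q).trans (by omega)) (by omega)
    have hc : q = C (coeff 0 q) := by
      ext s
      rw [coeff_C]
      split_ifs with hs
      · rw [← hs]
      · by_contra hne
        have : ∃ i, s i ≠ 0 := by
          by_contra hall
          push Not at hall
          exact hs (by ext i; simp [hall i])
        obtain ⟨i, hi⟩ := this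
        have h1 : coeff (s - Finsupp.single i 1) (pderiv i q) = coeff s q * (s i : K) := by
          have h2 : (s - Finsupp.single i 1) + Finsupp.single i 1 = s := by
            ext j
            by_cases hj : j = i
            · subst hj; simp; omega
            · simp [Finsupp.single_apply, Ne.symm hj]
          have h3 : (s - Finsupp.single i 1 : Fin 3 →₀ ℕ) i + 1 = s i := by simp; omega
          rw [coeff_pderiv, h2, ← h3]; push_cast; ring
        rw [hz i, coeff_zero] at h1
        have h2 : s i ≤ q.totalDegree := (le_degreeOf_of_mem_support i (mem_support_iff.2 hne)).trans (degreeOf_le_totalDegree q i)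
        exact (mul_ne_zero hne (hp (s i) (by omega) (by omega))) h1.symm
    rw [hc] at hq ⊢
    have := h0 _ hq
    simp at this
    simp [this]


section classify
variable (F : MvPolynomial (Fin 3) K) (x0 : Fin 3 → K)

/-- tangential derivation in direction `i` -/
noncomputable def DD (i : Fin 3) (q : MvPolynomial (Fin 3) K) : MvPolynomial (Fin 3) K :=
  pderiv 0 F * pderiv i q - pderiv i F * pderiv 0 q

noncomputable def N12 : MvPolynomial (Fin 3) K :=
  -(pderiv 1 (pderiv 2 F) * (pderiv 0 F)^2 - pderiv 1 F * pderiv 0 F * pderiv 2 (pderiv 0 F)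
    - pderiv 2 F * pderiv 0 F * pderiv 1 (pderiv 0 F) + pderiv 1 F * pderiv 2 F * pderiv 0 (pderiv 0 F))

lemma DD_mul (i : Fin 3) (a b : MvPolynomial (Fin 3) K) : DD F i (a * b) = a * DD F i b + b * DD F i a := by
  simp only [DD, Derivation.leibniz, smul_eq_mul]; ring
lemma DD_add (i : Fin 3) (a b : MvPolynomial (Fin 3) K) : DD F i (a + b) = DD F i a + DD F i b := by
  simp only [DD, map_add]; ring
lemma DD_self (i : Fin 3) : DD F i F = 0 := by simp only [DD]; ring

lemma DN1 : pderiv 0 F * DD F 1 (N12 F) - 3 * N12 F * DD F 1 (pderiv 0 F)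
    = -(pderiv 0 F * DD F 2 (TT 1 F) - 3 * TT 1 F * DD F 2 (pderiv 0 F)) := by
  have e2 : (2 : MvPolynomial (Fin 3) K) = C 2 := (map_ofNat C 2).symm
  simp only [DD, N12, TT, e2, map_add, map_sub, map_neg, pderiv_C, Derivation.leibniz, Derivation.leibniz_pow, smul_eq_mul,
    pderiv_comm 1 0, pderiv_comm 2 0, pderiv_comm 2 1]
  simp only [← e2, nsmul_eq_mul]
  push_cast
  ring

lemma DN2 : pderiv 0 F * DD F 2 (N12 F) - 3 * N12 F * DD F 2 (pderiv 0 F)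
    = -(pderiv 0 F * DD F 1 (TT 2 F) - 3 * TT 2 F * DD F 1 (pderiv 0 F)) := by
  have e2 : (2 : MvPolynomial (Fin 3) K) = C 2 := (map_ofNat C 2).symm
  simp only [DD, N12, TT, e2, map_add, map_sub, map_neg, pderiv_C, Derivation.leibniz, Derivation.leibniz_pow, smul_eq_mul,
    pderiv_comm 1 0, pderiv_comm 2 0, pderiv_comm 2 1]
  simp only [← e2, nsmul_eq_mul]
  push_cast
  ring

/-- bilinear surface `z = w0 + w1 u + w2 v + w3 u v` -/
noncomputable def bil (w : Fin 4 → K) : MvPolynomial (Fin 3) K :=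
  C (w 0) + C (w 1) * X 1 + C (w 2) * X 2 + C (w 3) * X 1 * X 2

/-- substitution `z ↦ bil w` -/
noncomputable def sub (w : Fin 4 → K) : MvPolynomial (Fin 3) K →ₐ[K] MvPolynomial (Fin 3) K :=
  aeval ![bil w, X 1, X 2]

lemma bil_p0 (w : Fin 4 → K) : pderiv 0 (bil w) = 0 := by
  simp [bil, Derivation.leibniz, pderiv_X]
lemma bil_p1 (w : Fin 4 → K) : pderiv 1 (bil w) = C (w 1) + C (w 3) * X 2 := by
  simp [bil, Derivation.leibniz, pderiv_X]; ring
lemma bil_p2 (w : Fin 4 → K) : pderiv 2 (bil w) = C (w 2) + C (w 3) * X 1 := by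
  simp [bil, Derivation.leibniz, pderiv_X]

lemma sub_p0 (w : Fin 4 → K) (q : MvPolynomial (Fin 3) K) : pderiv 0 (sub w q) = 0 := by
  induction q using MvPolynomial.induction_on with
  | C r => simp [sub]
  | add p q hp hq => simp [hp, hq]
  | mul_X p n hp =>
    rw [map_mul, Derivation.leibniz, hp]
    have : pderiv 0 (sub w (X n)) = 0 := by
      fin_cases n <;> simp [sub, bil_p0, pderiv_X]
    simp [this]

lemma sub_dvd (w : Fin 4 → K) (q : MvPolynomial (Fin 3) K) : (X 0 - bil w) ∣ q - sub w q := by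
  induction q using MvPolynomial.induction_on with
  | C r => simp [sub]
  | add p q hp hq => 
    have := dvd_add hp hq
    rw [map_add]; convert this using 1; ring
  | mul_X p n hp =>
    have : (X 0 - bil w) ∣ X n - sub w (X n) := by
      fin_cases n <;> simp [sub]
    have h := dvd_add (hp.mul_right (X n)) (this.mul_left (sub w p))
    rw [map_mul]; convert h using 1; ring

lemma bil_deg (w : Fin 4 → K) : (bil w).totalDegree ≤ 2 := by
  unfold bil
  have h1 : ∀ i : Fin 3, (X i : MvPolynomial (Fin 3) K).totalDegree ≤ 1 := fun i => (totalDegree_X i).le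
  have hC : ∀ (c : K) (q : MvPolynomial (Fin 3) K), (C c * q).totalDegree ≤ q.totalDegree := by
    intro c q; exact (totalDegree_mul _ _).trans (by simp)
  refine (totalDegree_add _ _).trans (max_le ((totalDegree_add _ _).trans (max_le ((totalDegree_add _ _).trans (max_le (by simp) ?_)) ?_)) ?_)
  · exact (hC _ _).trans ((h1 _).trans (by norm_num))
  · exact (hC _ _).trans ((h1 _).trans (by norm_num))
  · rw [mul_assoc]
    exact (hC _ _).trans ((totalDegree_mul _ _).trans (add_le_add (h1 _) (h1 _)))

lemma sub_deg (w : Fin 4 → K) (q : MvPolynomial (Fin 3) K) : (sub w q).totalDegree ≤ 2 * q.totalDegree := by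
  have hb := bil_deg w
  have hX : ∀ n, (sub w (X n)).totalDegree ≤ 2 := by
    intro n
    fin_cases n <;> simp [sub, hb, totalDegree_X]
  conv_lhs => rw [q.as_sum, map_sum]
  refine totalDegree_finsetSum_le fun s hs => ?_
  have h1 := le_totalDegree hs
  rw [sub, aeval_monomial]
  refine (totalDegree_mul _ _).trans ?_
  simp only [MvPolynomial.algebraMap_eq, totalDegree_C, zero_add]
  refine (totalDegree_finset_prod _ _).trans ?_
  refine le_trans ?_ (Nat.mul_le_mul_left 2 h1)
  rw [Finsupp.sum, Finset.mul_sum]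
  refine Finset.sum_le_sum fun i _ => (totalDegree_pow _ _).trans ?_
  have := hX i
  simp only [sub, aeval_X] at this
  calc _ ≤ s i * 2 := Nat.mul_le_mul_left _ this
    _ = _ := by ring

theorem classify (p : ℕ) (hp : ∀ i : ℕ, 0 < i → i < p → (i : K) ≠ 0) (hF : 2 * F.totalDegree < p)
    (hF0 : eval x0 F = 0) (hFz : eval x0 (pderiv 0 F) ≠ 0) (hT1 : F ∣ TT 1 F) (hT2 : F ∣ TT 2 F) :
    ∃ w : Fin 4 → K, (X 0 - bil w) ∣ F := by
  set fz := eval x0 (pderiv 0 F) with hfz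
  obtain ⟨W, hW⟩ : ∃ W, W = eval x0 (N12 F) / fz ^ 3 := ⟨_, rfl⟩
  obtain ⟨a, ha⟩ : ∃ a, a = - eval x0 (pderiv 1 F) / fz := ⟨_, rfl⟩
  obtain ⟨b, hb⟩ : ∃ b, b = - eval x0 (pderiv 2 F) / fz := ⟨_, rfl⟩
  obtain ⟨w, hw⟩ : ∃ w : Fin 4 → K, w = ![x0 0 - (a - W * x0 2) * x0 1 - (b - W * x0 1) * x0 2 - W * x0 1 * x0 2,
    a - W * x0 2, b - W * x0 1, W] := ⟨_, rfl⟩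
  have w0 : w 0 = x0 0 - (a - W * x0 2) * x0 1 - (b - W * x0 1) * x0 2 - W * x0 1 * x0 2 := by simp [hw]
  have w1 : w 1 = a - W * x0 2 := by simp [hw]
  have w2 : w 2 = b - W * x0 1 := by simp [hw]
  have w3 : w 3 = W := by simp [hw]
  refine ⟨w, ?_⟩
  set H := X 0 - bil w with hH
  set H1 := pderiv 1 F + pderiv 0 F * (C (w 1) + C (w 3) * X 2) with hH1
  set H2 := pderiv 2 F + pderiv 0 F * (C (w 2) + C (w 3) * X 1) with hH2
  set H12 := N12 F - C (w 3) * (pderiv 0 F)^3 with hH12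
  set J : Ideal (MvPolynomial (Fin 3) K) := Ideal.span {F, H, H1, H2, H12} with hJ
  have mF : F ∈ J := Ideal.subset_span (by simp)
  have mH : H ∈ J := Ideal.subset_span (by simp)
  have mH1 : H1 ∈ J := Ideal.subset_span (by simp)
  have mH2 : H2 ∈ J := Ideal.subset_span (by simp)
  have mH12 : H12 ∈ J := Ideal.subset_span (by simp)
  -- everything vanishes at x0
  have vJ : ∀ q ∈ J, eval x0 q = 0 := by
    intro q hq
    have : J ≤ RingHom.ker (eval x0) := by
      rw [hJ, Ideal.span_le]
      intro g hg
      simp only [Set.mem_insert_iff, Set.mem_singleton_iff] at hg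
      rw [SetLike.mem_coe, RingHom.mem_ker]
      rcases hg with rfl | rfl | rfl | rfl | rfl
      · exact hF0
      · simp [hH, bil, w0, w1, w2, w3]; ring
      · simp only [hH1, map_add, map_mul, eval_C, eval_X, ← hfz, w1, w3, ha]; field_simp; ring
      · simp only [hH2, map_add, map_mul, eval_C, eval_X, ← hfz, w2, w3, hb]; field_simp; ring
      · simp only [hH12, map_sub, map_mul, map_pow, eval_C, ← hfz, w3, hW]; field_simp; ring
    exact this hq
  set S : Set (MvPolynomial (Fin 3) K) := {q | ∃ k : ℕ, (pderiv 0 F)^k * q ∈ J} with hS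
  have vS : ∀ q ∈ S, eval x0 q = 0 := by
    rintro q ⟨k, hk⟩
    have := vJ _ hk
    simp only [map_mul, map_pow, ← hfz] at this
    exact (mul_eq_zero.1 this).resolve_left (pow_ne_zero _ hFz)
  have Sadd : ∀ q r, q ∈ S → r ∈ S → q + r ∈ S := by
    rintro q r ⟨k, hk⟩ ⟨l, hl⟩
    refine ⟨k + l, ?_⟩
    have := J.add_mem (J.mul_mem_left ((pderiv 0 F)^l) hk) (J.mul_mem_left ((pderiv 0 F)^k) hl)
    convert this using 1; ring
  have Smul : ∀ q r, q ∈ S → r * q ∈ S := by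
    rintro q r ⟨k, hk⟩
    refine ⟨k, ?_⟩
    have := J.mul_mem_left r hk
    convert this using 1; ring
  have Sz : ∀ q (k : ℕ), (pderiv 0 F)^k * q ∈ S → q ∈ S := by
    rintro q k ⟨l, hl⟩
    refine ⟨l + k, ?_⟩
    convert hl using 1; ring
  have JS : ∀ q ∈ J, q ∈ S := fun q hq => ⟨0, by simpa using hq⟩
  -- derivations preserve S
  have key : ∀ i : Fin 3, (∀ g ∈ ({F, H, H1, H2, H12} : Set (MvPolynomial (Fin 3) K)), DD F i g ∈ S) →
      ∀ q ∈ S, DD F i q ∈ S := by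
    intro i hg
    have hJS : ∀ q ∈ J, DD F i q ∈ S := by
      intro q hq
      rw [hJ] at hq
      induction hq using Submodule.span_induction with
      | mem x hx => exact hg x hx
      | zero => simpa [DD] using JS 0 J.zero_mem
      | add x y _ _ hx hy => rw [DD_add]; exact Sadd _ _ hx hy
      | smul r x hx' hx =>
        rw [smul_eq_mul, DD_mul]
        exact Sadd _ _ (Smul _ _ hx) (by rw [mul_comm]; exact Smul _ _ (JS _ hx'))
    rintro q ⟨k, hk⟩
    have h1 := hJS _ hk
    have h3 : DD F i q * (pderiv 0 F)^k ∈ S := by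
      have e : DD F i q * (pderiv 0 F)^k = DD F i ((pderiv 0 F)^k * q) + (-1) * (DD F i ((pderiv 0 F)^k) * q) := by
        rw [DD_mul]; ring
      rw [e]
      refine Sadd _ _ h1 (Smul _ _ (Smul _ _ ⟨k, hk⟩))
    exact Sz _ k (by rwa [mul_comm] at h3)
  have hcl1 : ∀ q ∈ S, DD F 1 q ∈ S := by
    apply key
    intro g hg
    simp only [Set.mem_insert_iff, Set.mem_singleton_iff] at hg
    rcases hg with rfl | rfl | rfl | rfl | rfl
    · rw [DD_self]; exact JS _ J.zero_mem
    · have : DD F 1 H = (-1) * H1 := by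
        simp only [DD, hH, map_sub, bil_p0, bil_p1, pderiv_X, hH1]
        simp; ring
      rw [this]; exact Smul _ _ (JS _ mH1)
    · apply Sz _ 1
      obtain ⟨t, ht⟩ := hT1
      have : (pderiv 0 F)^1 * DD F 1 H1 = t * F + DD F 1 (pderiv 0 F) * H1 := by
        rw [mul_comm t F, ← ht]
        simp only [DD, hH1, TT, map_add, Derivation.leibniz, smul_eq_mul, pderiv_C, pderiv_X, pderiv_comm 1 0]
        simp; ring
      rw [this]
      exact Sadd _ _ (Smul _ _ (JS _ mF)) (Smul _ _ (JS _ mH1))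
    · apply Sz _ 1
      have : (pderiv 0 F)^1 * DD F 1 H2 = (-1) * H12 + DD F 1 (pderiv 0 F) * H2 := by
        simp only [DD, hH2, hH12, N12, map_add, Derivation.leibniz, smul_eq_mul, pderiv_C, pderiv_X, pderiv_comm 1 0,
          pderiv_comm 2 0, pderiv_comm 2 1]
        simp; ring
      rw [this]
      exact Sadd _ _ (Smul _ _ (JS _ mH12)) (Smul _ _ (JS _ mH2))
    · apply Sz _ 1
      have e := DN1 F
      obtain ⟨t, ht⟩ := hT1
      rw [ht, DD_mul, DD_self] at e
      have : (pderiv 0 F)^1 * DD F 1 H12 =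
        (-(pderiv 0 F * DD F 2 t) + 3 * t * DD F 2 (pderiv 0 F)) * F + 3 * DD F 1 (pderiv 0 F) * H12 := by
        have e2 : DD F 1 H12 = DD F 1 (N12 F) - 3 * C (w 3) * (pderiv 0 F)^2 * DD F 1 (pderiv 0 F) := by
          simp only [DD, hH12, map_sub, Derivation.leibniz, Derivation.leibniz_pow, smul_eq_mul, pderiv_C, nsmul_eq_mul]
          push_cast; ring
        rw [e2, hH12]
        linear_combination e
      rw [this]
      exact Sadd _ _ (Smul _ _ (JS _ mF)) (Smul _ _ (JS _ mH12))
  have hcl2 : ∀ q ∈ S, DD F 2 q ∈ S := by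
    apply key
    intro g hg
    simp only [Set.mem_insert_iff, Set.mem_singleton_iff] at hg
    rcases hg with rfl | rfl | rfl | rfl | rfl
    · rw [DD_self]; exact JS _ J.zero_mem
    · have : DD F 2 H = (-1) * H2 := by
        simp only [DD, hH, map_sub, bil_p0, bil_p2, pderiv_X, hH2]
        simp; ring
      rw [this]; exact Smul _ _ (JS _ mH2)
    · apply Sz _ 1
      have : (pderiv 0 F)^1 * DD F 2 H1 = (-1) * H12 + DD F 2 (pderiv 0 F) * H1 := by
        simp only [DD, hH1, hH12, N12, map_add, Derivation.leibniz, smul_eq_mul, pderiv_C, pderiv_X, pderiv_comm 1 0,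
          pderiv_comm 2 0, pderiv_comm 2 1]
        simp; ring
      rw [this]
      exact Sadd _ _ (Smul _ _ (JS _ mH12)) (Smul _ _ (JS _ mH1))
    · apply Sz _ 1
      obtain ⟨t, ht⟩ := hT2
      have : (pderiv 0 F)^1 * DD F 2 H2 = t * F + DD F 2 (pderiv 0 F) * H2 := by
        rw [mul_comm t F, ← ht]
        simp only [DD, hH2, TT, map_add, Derivation.leibniz, smul_eq_mul, pderiv_C, pderiv_X, pderiv_comm 2 0]
        simp; ring
      rw [this]
      exact Sadd _ _ (Smul _ _ (JS _ mF)) (Smul _ _ (JS _ mH2))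
    · apply Sz _ 1
      have e := DN2 F
      obtain ⟨t, ht⟩ := hT2
      rw [ht, DD_mul, DD_self] at e
      have : (pderiv 0 F)^1 * DD F 2 H12 =
        (-(pderiv 0 F * DD F 1 t) + 3 * t * DD F 1 (pderiv 0 F)) * F + 3 * DD F 2 (pderiv 0 F) * H12 := by
        have e2 : DD F 2 H12 = DD F 2 (N12 F) - 3 * C (w 3) * (pderiv 0 F)^2 * DD F 2 (pderiv 0 F) := by
          simp only [DD, hH12, map_sub, Derivation.leibniz, Derivation.leibniz_pow, smul_eq_mul, pderiv_C, nsmul_eq_mul]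
          push_cast; ring
        rw [e2, hH12]
        linear_combination e
      rw [this]
      exact Sadd _ _ (Smul _ _ (JS _ mF)) (Smul _ _ (JS _ mH12))
  have hG : sub w F ∈ S := by
    apply JS
    obtain ⟨t, ht⟩ := sub_dvd w F
    have : sub w F = F - t * H := by rw [hH]; linear_combination -ht
    rw [this]
    exact J.sub_mem mF (J.mul_mem_left _ mH)
  have hz : sub w F = 0 := by
    refine zero_of_closed p hp x0 {q | q ∈ S ∧ pderiv 0 q = 0} (fun q hq => vS q hq.1) ?_
      (2 * F.totalDegree) _ ⟨hG, sub_p0 w F⟩ (sub_deg w F) hF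
    rintro q ⟨hq, hq0⟩ i
    have h1 : ∀ i : Fin 3, DD F i q ∈ S → pderiv i q ∈ S := by
      intro i hi
      apply Sz _ 1
      have : (pderiv 0 F)^1 * pderiv i q = DD F i q := by simp [DD, hq0]
      rwa [this]
    refine ⟨?_, by rw [pderiv_comm, hq0, map_zero]⟩
    fin_cases i
    · simp only [Fin.zero_eta, hq0]; exact JS _ J.zero_mem
    · exact h1 _ (hcl1 q hq)
    · exact h1 _ (hcl2 q hq)
  have := sub_dvd w F
  rwa [hz, sub_zero] at this

end classify
end PP


namespace PP
open MvPolynomial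
variable {K : Type*} [Field K]

lemma det_totalDegree {n : ℕ} {σ : Type*} (M : Matrix (Fin n) (Fin n) (MvPolynomial σ K)) (b : ℕ)
    (h : ∀ i j, (M i j).totalDegree ≤ b) : M.det.totalDegree ≤ n * b := by
  rw [Matrix.det_apply]
  refine totalDegree_finsetSum_le fun s _ => ?_
  refine (totalDegree_smul_le _ _).trans ?_
  refine (totalDegree_finset_prod _ _).trans ?_
  refine (Finset.sum_le_sum fun i _ => h _ _).trans ?_
  simp

lemma coeff_fse_deg {n : ℕ} (F : MvPolynomial (Fin (n+1)) K) (i : ℕ) :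
    ((finSuccEquiv K n F).coeff i).totalDegree ≤ F.totalDegree := by
  by_cases h : (finSuccEquiv K n F).coeff i = 0
  · simp [h]
  · have := totalDegree_coeff_finSuccEquiv_add_le F i h
    omega

lemma fse_natDegree {n : ℕ} (F : MvPolynomial (Fin (n+1)) K) :
    (finSuccEquiv K n F).natDegree ≤ F.totalDegree := by
  rw [natDegree_finSuccEquiv]; exact degreeOf_le_totalDegree F 0

lemma exists_elim (F G : MvPolynomial (Fin 3) K) (hF : Irreducible F) (hFG : ¬ F ∣ G) (a : ℕ)
    (hFa : F.totalDegree ≤ a) (hGa : G.totalDegree ≤ 3 * a) :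
    ∃ R : MvPolynomial (Fin 2) K, R ≠ 0 ∧ R.totalDegree ≤ 12 * a ^ 2 ∧ ∃ A B, A * F + B * G = rename Fin.succ R := by
  have ren : ∀ R : MvPolynomial (Fin 2) K, finSuccEquiv K 2 (rename Fin.succ R) = Polynomial.C R := by
    intro R
    induction R using MvPolynomial.induction_on with
    | C r => simp [finSuccEquiv_apply]
    | add p q hp hq => simp [hp, hq]
    | mul_X p n hp => rw [map_mul, map_mul, hp, rename_X, finSuccEquiv_X_succ, map_mul]
  set f := finSuccEquiv K 2 F with hf
  set g := finSuccEquiv K 2 G with hg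
  have hfi : Irreducible f := (MulEquiv.irreducible_iff (finSuccEquiv K 2)).2 hF
  have hfg : ¬ f ∣ g := by
    rwa [hf, hg, map_dvd_iff]
  have a1 : 1 ≤ a := by
    by_contra hlt
    have h0 : F.totalDegree = 0 := by omega
    rw [totalDegree_eq_zero_iff_eq_C] at h0
    rw [h0] at hF
    by_cases hc : coeff 0 F = 0
    · rw [hc] at hF; simp at hF
    · exact hF.not_isUnit ((isUnit_iff_ne_zero.2 hc).map C)
  by_cases hd : f.natDegree = 0
  · obtain ⟨R, hR⟩ := Polynomial.natDegree_eq_zero.1 hd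
    refine ⟨R, ?_, ?_, 1, 0, ?_⟩
    · rintro rfl; apply hfi.ne_zero; rw [← hR]; simp
    · have := coeff_fse_deg F 0
      rw [← hf, ← hR, Polynomial.coeff_C_zero] at this
      nlinarith
    · apply (finSuccEquiv K 2).injective
      rw [ren, hR, hf]; simp
  · refine ⟨f.resultant g, ?_, ?_, ?_⟩
    · let L := FractionRing (MvPolynomial (Fin 2) K)
      have hprim : f.IsPrimitive := hfi.isPrimitive hd
      have hirr := (hprim.irreducible_iff_irreducible_map_fraction_map (K := L)).1 hfi
      have hnd : ¬ f.map (algebraMap _ L) ∣ g.map (algebraMap _ L) := fun h =>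
        hfg (hprim.dvd_of_fraction_map_dvd_fraction_map (K := L) h)
      have hcop : IsCoprime (f.map (algebraMap _ L)) (g.map (algebraMap _ L)) :=
        (hirr.coprime_iff_not_dvd).2 hnd
      intro h0
      have h1 : (f.map (algebraMap _ L)).resultant (g.map (algebraMap _ L)) = 0 := by
        have hinj := IsFractionRing.injective (MvPolynomial (Fin 2) K) L
        rw [Polynomial.natDegree_map_eq_of_injective hinj, Polynomial.natDegree_map_eq_of_injective hinj,
          Polynomial.resultant_map_map, h0, map_zero]
      exact (Polynomial.resultant_eq_zero_iff.1 h1).2 hcop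
    · have h1 : f.natDegree ≤ a := (fse_natDegree F).trans hFa
      have h2 : g.natDegree ≤ 3 * a := (fse_natDegree G).trans hGa
      rw [Polynomial.resultant]
      refine (det_totalDegree _ (3 * a) ?_).trans ?_
      · intro i j
        rw [Polynomial.sylvester, Matrix.of_apply]
        refine Fin.addCases (fun j => ?_) (fun j => ?_) j
        · rw [Fin.addCases_left]
          split_ifs
          · exact (coeff_fse_deg G _).trans hGa
          · simp
        · rw [Fin.addCases_right]
          split_ifs
          · exact (coeff_fse_deg F _).trans (by omega)
          · simp
      · nlinarith
    · obtain ⟨p, q, _, _, e⟩ := Polynomial.exists_mul_add_mul_eq_C_resultant f g le_rfl le_rfl (Or.inl hd)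
      refine ⟨(finSuccEquiv K 2).symm p, (finSuccEquiv K 2).symm q, ?_⟩
      apply (finSuccEquiv K 2).injective
      rw [ren, ← e]
      simp only [map_add, map_mul, AlgEquiv.apply_symm_apply]
      ring

lemma bezR [Infinite K] (R : MvPolynomial (Fin 2) K) (hR : R ≠ 0) (S : Finset (K × K × K))
    (hinj : Set.InjOn (fun q : K × K × K => q.1) S) (h1 : ∀ q ∈ S, rPi q (rename Fin.succ R) = 0) :
    S.card ≤ R.totalDegree := by
  classical
  set f := finSuccEquiv K 1 R with hf
  have hf0 : f ≠ 0 := by rw [hf]; simpa using hR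
  set Z : Finset (MvPolynomial (Fin 1) K) := S.image (fun q => C q.1) with hZ
  have hcard : Z.card = S.card := by
    rw [hZ, Finset.card_image_of_injOn]
    intro x hx y hy hxy
    exact hinj hx hy (C_injective _ _ hxy)
  rw [← hcard]
  refine le_trans ?_ (fse_natDegree R)
  apply Polynomial.card_le_degree_of_subset_roots
  intro z hz
  rw [Finset.mem_val, hZ, Finset.mem_image] at hz
  obtain ⟨q, hq, rfl⟩ := hz
  rw [Polynomial.mem_roots hf0, Polynomial.IsRoot]
  apply MvPolynomial.funext
  intro x
  have h3 : rPi q (rename Fin.succ R) = 0 := h1 q hq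
  have h4 : Polynomial.eval (x 0) (rPi q (rename Fin.succ R)) = eval (Fin.cons q.1 x) R := by
    have : (Polynomial.aeval (x 0)).comp ((rPi q).comp (rename Fin.succ)) = aeval (Fin.cons q.1 x : Fin 2 → K) := by
      apply algHom_ext
      intro i
      fin_cases i <;> simp [rPi, res]
    have := DFunLike.congr_fun this R
    simpa [Polynomial.aeval_def, aeval_def, Polynomial.eval₂_eq_eval_map] using this
  rw [h3] at h4
  have h5 := eval_polynomial_eval_finSuccEquiv (x := x) R (C q.1)
  rw [hf, h5]
  simp only [eval_C, Polynomial.eval_zero, map_zero] at h4 ⊢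
  exact h4.symm

lemma bez [Infinite K] (F G : MvPolynomial (Fin 3) K) (hF : Irreducible F) (hFG : ¬ F ∣ G) (a : ℕ)
    (hFa : F.totalDegree ≤ a) (hGa : G.totalDegree ≤ 3 * a) (S : Finset (K × K × K))
    (hinj : Set.InjOn (fun q : K × K × K => q.1) S) (h1 : ∀ q ∈ S, rPi q F = 0) (h2 : ∀ q ∈ S, rPi q G = 0) :
    S.card ≤ 12 * a ^ 2 := by
  obtain ⟨R, hR, hdeg, A, B, e⟩ := exists_elim F G hF hFG a hFa hGa
  refine (bezR R hR S hinj fun q hq => ?_).trans hdeg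
  rw [← e]; simp [h1 q hq, h2 q hq]

lemma fse_ren (R : MvPolynomial (Fin 2) K) : finSuccEquiv K 2 (rename Fin.succ R) = Polynomial.C R := by
  induction R using MvPolynomial.induction_on with
  | C r => simp [finSuccEquiv_apply]
  | add p q hp hq => simp [hp, hq]
  | mul_X p n hp => rw [map_mul, map_mul, hp, rename_X, finSuccEquiv_X_succ, map_mul]

lemma bez0 [Infinite K] (p : ℕ) (hp : ∀ i : ℕ, 0 < i → i < p → (i : K) ≠ 0)
    (F : MvPolynomial (Fin 3) K) (hF : F ≠ 0) (hz : pderiv 0 F = 0) (hd : F.totalDegree < p) (S : Finset (K × K × K))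
    (hinj : Set.InjOn (fun q : K × K × K => q.1) S) (h1 : ∀ q ∈ S, rPi q F = 0) :
    S.card ≤ F.totalDegree := by
  have h0 : (finSuccEquiv K 2 F).natDegree = 0 := by
    rw [natDegree_finSuccEquiv, degreeOf_eq_sup, ← Nat.le_zero]
    apply Finset.sup_le
    intro s hs
    by_contra hi
    have h1 : coeff (s - Finsupp.single 0 1) (pderiv 0 F) = coeff s F * (s 0 : K) := by
      have h2 : (s - Finsupp.single 0 1) + Finsupp.single 0 1 = s := by
        ext j
        by_cases hj : j = 0
        · subst hj; simp; omega
        · simp [Finsupp.single_apply, Ne.symm hj]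
      have h3 : (s - Finsupp.single 0 1 : Fin 3 →₀ ℕ) 0 + 1 = s 0 := by simp; omega
      rw [coeff_pderiv, h2, ← h3]; push_cast; ring
    rw [hz, coeff_zero] at h1
    have h2 : s 0 ≤ F.totalDegree := (le_degreeOf_of_mem_support 0 hs).trans (degreeOf_le_totalDegree F 0)
    exact (mul_ne_zero (mem_support_iff.1 hs) (hp (s 0) (by omega) (by omega))) h1.symm
  obtain ⟨R, hR⟩ := Polynomial.natDegree_eq_zero.1 h0
  have hFR : F = rename Fin.succ R := by
    apply (finSuccEquiv K 2).injective
    rw [fse_ren, hR]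
  refine (bezR R ?_ S hinj fun q hq => ?_).trans ?_
  · rintro rfl; exact hF (by simpa using hFR)
  · rw [← hFR]; exact h1 q hq
  · have := coeff_fse_deg F 0
    rwa [← hR, Polynomial.coeff_C_zero] at this

end PP


namespace PP
open MvPolynomial
variable {K : Type*} [Field K]

/-- incidence of `P = (X,Y,Z)` and `π = (s,c,e)` -/
def inc (P q : K × K × K) : Prop := P.1 * q.1 + P.2.2 = q.2.1 * P.2.1 + q.2.2
def onP (P : K × K × K) (w : Fin 4 → K) : Prop := P.1 = w 1 + w 3 * P.2.1 ∧ P.2.2 = w 0 + w 2 * P.2.1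
def onPi (q : K × K × K) (w : Fin 4 → K) : Prop := q.2.1 = w 2 + w 3 * q.1 ∧ q.2.2 = w 0 + w 1 * q.1

lemma eval_res (a b : Fin 3 → K) (t : K) (F : MvPolynomial (Fin 3) K) :
    (res a b F).eval t = eval (fun i => a i * t + b i) F := by
  have : (Polynomial.aeval t).comp (res a b) = aeval (fun i => a i * t + b i) := by
    apply algHom_ext
    intro i
    simp [res]
  have := DFunLike.congr_fun this F
  simpa [Polynomial.aeval_def, aeval_def, Polynomial.eval₂_eq_eval_map] using this

lemma eval_inc (P q : K × K × K) (h : inc P q) (F : MvPolynomial (Fin 3) K) :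
    (rPi q F).eval P.2.1 = (rP P F).eval q.1 := by
  rw [rPi, rP, eval_res, eval_res]
  congr 2
  unfold inc at h
  funext i
  fin_cases i
  · simpa using h.symm
  · simp
  · simp

open Classical in
lemma count_root (G : MvPolynomial (Fin 3) K) (q : K × K × K) (hq : rPi q G ≠ 0) (S : Finset (K × K × K))
    (hinj : Set.InjOn (fun P : K × K × K => P.2.1) S) (h : ∀ P ∈ S, rP P G = 0 ∧ inc P q) :
    S.card ≤ G.totalDegree := by
  have hc : (S.image (fun P : K × K × K => P.2.1)).card = S.card := Finset.card_image_of_injOn hinj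
  rw [← hc]
  refine le_trans ?_ (res_natDegree ![q.2.1, 0, 1] ![q.2.2, q.1, 0] G)
  apply Polynomial.card_le_degree_of_subset_roots (p := rPi q G)
  intro y hy
  rw [Finset.mem_val, Finset.mem_image] at hy
  obtain ⟨P, hP, rfl⟩ := hy
  rw [Polynomial.mem_roots hq, Polynomial.IsRoot]
  obtain ⟨h1, h2⟩ := h P hP
  rw [eval_inc P q h2, h1, Polynomial.eval_zero]

lemma onP_of (P : K × K × K) (w : Fin 4 → K) (h : rP P (X 0 - bil w) = 0) : onP P w := by
  have e : rP P (X 0 - bil w) = Polynomial.C (P.1 - (w 1 + w 3 * P.2.1)) * Polynomial.X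
      + Polynomial.C (P.2.2 - (w 0 + w 2 * P.2.1)) := by
    simp [rP, res, bil]; ring
  rw [e] at h
  have h0 := congrArg (fun f => Polynomial.coeff f 0) h
  have h1 := congrArg (fun f => Polynomial.coeff f 1) h
  simp [Polynomial.coeff_C] at h0 h1
  exact ⟨by linear_combination h1, by linear_combination h0⟩

lemma onPi_of (q : K × K × K) (w : Fin 4 → K) (h : rPi q (X 0 - bil w) = 0) : onPi q w := by
  have e : rPi q (X 0 - bil w) = Polynomial.C (q.2.1 - (w 2 + w 3 * q.1)) * Polynomial.X
      + Polynomial.C (q.2.2 - (w 0 + w 1 * q.1)) := by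
    simp [rPi, res, bil]; ring
  rw [e] at h
  have h0 := congrArg (fun f => Polynomial.coeff f 0) h
  have h1 := congrArg (fun f => Polynomial.coeff f 1) h
  simp [Polynomial.coeff_C] at h0 h1
  exact ⟨by linear_combination h1, by linear_combination h0⟩

variable (PS QS : Finset (K × K × K))

open Classical in
def Claim (F : MvPolynomial (Fin 3) K) : Prop :=
  ∃ Bad : Finset (K × K × K), Bad.card ≤ 37 * F.totalDegree ^ 2 ∧ ∃ B : Finset (Fin 4 → K), B.card ≤ F.totalDegree ∧
    ∀ q ∈ QS, q ∉ Bad → (PS.filter fun P => rP P F = 0 ∧ inc P q ∧ ¬ ∃ w ∈ B, onP P w ∧ onPi q w).card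
      ≤ 3 * F.totalDegree

lemma irr_deg_pos (F : MvPolynomial (Fin 3) K) (hF : Irreducible F) : 1 ≤ F.totalDegree := by
  by_contra hlt
  have h0 : F.totalDegree = 0 := by omega
  rw [totalDegree_eq_zero_iff_eq_C] at h0
  rw [h0] at hF
  by_cases hc : coeff 0 F = 0
  · rw [hc] at hF; simp at hF
  · exact hF.not_isUnit ((isUnit_iff_ne_zero.2 hc).map C)

lemma bil_not_unit (w : Fin 4 → K) : ¬ IsUnit (X 0 - bil w : MvPolynomial (Fin 3) K) := by
  intro hu
  have := hu.map (eval (![w 0, 0, 0] : Fin 3 → K))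
  simp [bil] at this

open Classical in
lemma cnt_root (hPS : Set.InjOn (fun P : K × K × K => P.2.1) PS) (F G : MvPolynomial (Fin 3) K)
    (q : K × K × K) (hq : rPi q G ≠ 0) (hG : ∀ P, rP P F = 0 → rP P G = 0) (B : Finset (Fin 4 → K)) :
    (PS.filter fun P => rP P F = 0 ∧ inc P q ∧ ¬ ∃ w ∈ B, onP P w ∧ onPi q w).card ≤ G.totalDegree := by
  refine count_root G q hq _ (hPS.mono (Finset.coe_subset.2 (Finset.filter_subset _ _))) ?_
  intro P hP
  rw [Finset.mem_filter] at hP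
  exact ⟨hG P hP.2.1, hP.2.2.1⟩

open Classical in
lemma cnt_zero (F : MvPolynomial (Fin 3) K) (q : K × K × K) (w : Fin 4 → K) (hass : F ∣ X 0 - bil w) (hq0 : rPi q F = 0) :
    (PS.filter fun P => rP P F = 0 ∧ inc P q ∧ ¬ ∃ w' ∈ ({w} : Finset (Fin 4 → K)), onP P w' ∧ onPi q w').card = 0 := by
  have hqw : onPi q w := onPi_of q w (by
    obtain ⟨t, ht⟩ := hass; rw [ht, map_mul, hq0, zero_mul])
  rw [Finset.card_eq_zero, Finset.filter_eq_empty_iff]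
  rintro P hP ⟨h1, h2, h3⟩
  refine h3 ⟨w, Finset.mem_singleton_self w, onP_of P w ?_, hqw⟩
  obtain ⟨t, ht⟩ := hass; rw [ht, map_mul, h1, zero_mul]

lemma exists_w [Infinite K] (p : ℕ) (hp : ∀ i : ℕ, 0 < i → i < p → (i : K) ≠ 0)
    (F : MvPolynomial (Fin 3) K) (hF : Irreducible F) (hd : 2 * F.totalDegree < p)
    (d1 : F ∣ TT 1 F) (d2 : F ∣ TT 2 F) (q : K × K × K) (hq0 : rPi q F = 0) (hq1 : rPi q (pderiv 0 F) ≠ 0) :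
    ∃ w : Fin 4 → K, F ∣ (X 0 - bil w) := by
  obtain ⟨t, ht⟩ : ∃ t : K, (rPi q (pderiv 0 F)).eval t ≠ 0 := by
    by_contra hall
    push Not at hall
    exact hq1 (Polynomial.funext fun t => by simp [hall t])
  rw [rPi, eval_res] at ht
  have ht0 : (rPi q F).eval t = 0 := by rw [hq0]; simp
  rw [rPi, eval_res] at ht0
  obtain ⟨w, hw⟩ := classify F _ p hp hd ht0 ht d1 d2
  refine ⟨w, ?_⟩
  obtain ⟨t, ht⟩ := hw
  have := (hF.isUnit_or_isUnit ht).resolve_left (bil_not_unit w)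
  exact (this.dvd_mul_right).1 (by rw [← ht])

open Classical in
lemma claim_irr [Infinite K] (p : ℕ) (hp : ∀ i : ℕ, 0 < i → i < p → (i : K) ≠ 0)
    (hPS : Set.InjOn (fun P : K × K × K => P.2.1) PS) (hQS : Set.InjOn (fun q : K × K × K => q.1) QS)
    (F : MvPolynomial (Fin 3) K) (hF : Irreducible F) (hd : 2 * F.totalDegree < p) : Claim PS QS F := by
  have hdpos := irr_deg_pos F hF
  have bz : ∀ G : MvPolynomial (Fin 3) K, G.totalDegree ≤ 3 * F.totalDegree → ¬ F ∣ G →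
      (QS.filter fun q => rPi q F = 0 ∧ rPi q G = 0).card ≤ 12 * F.totalDegree ^ 2 := by
    intro G hG hFG
    refine bez F G hF hFG _ le_rfl hG _ (hQS.mono (Finset.coe_subset.2 (Finset.filter_subset _ _))) ?_ ?_
    · intro q hq; exact (Finset.mem_filter.1 hq).2.1
    · intro q hq; exact (Finset.mem_filter.1 hq).2.2
  have small : ∀ G : MvPolynomial (Fin 3) K, G.totalDegree < F.totalDegree → F ∣ G → G = 0 := by
    intro G hG hdvd
    by_contra h0
    obtain ⟨t, rfl⟩ := hdvd
    rw [totalDegree_mul_of_isDomain hF.ne_zero (right_ne_zero_of_mul h0)] at hG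
    omega
  have cF := fun q hq => cnt_root PS hPS F F q hq (fun P h => h)
  have nb : ∀ (G : MvPolynomial (Fin 3) K) (q), q ∈ QS → q ∉ (QS.filter fun q => rPi q F = 0 ∧ rPi q G = 0) →
      rPi q F = 0 → rPi q G ≠ 0 := by
    intro G q hq hb h0 h1
    exact hb (Finset.mem_filter.2 ⟨hq, h0, h1⟩)
  by_cases hz : pderiv 0 F = 0
  · -- F does not depend on z
    refine ⟨QS.filter fun q => rPi q F = 0 , ?_, ∅, by simp, ?_⟩
    · refine (bez0 p hp F hF.ne_zero hz (by omega) _ (hQS.mono (Finset.coe_subset.2 (Finset.filter_subset _ _)))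
        fun q hq => (Finset.mem_filter.1 hq).2).trans (by nlinarith)
    · intro q hq hb
      have hq0 : rPi q F ≠ 0 := fun h => hb (Finset.mem_filter.2 ⟨hq, h⟩)
      exact (cF q hq0 _).trans (by omega)
  have degz : (pderiv 0 F).totalDegree < F.totalDegree := by
    have := pderiv_totalDegree 0 F; omega
  have hndz : ¬ F ∣ pderiv 0 F := fun h => hz (small _ degz h)
  have hT1 := TT_totalDegree 1 F
  have hT2 := TT_totalDegree 2 F
  have cz := bz _ (by omega) hndz
  have em : ∀ q : K × K × K, (∅ : Finset (Fin 4 → K)).card ≤ F.totalDegree := fun _ => by rw [Finset.card_empty]; exact Nat.zero_le _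
  by_cases d2 : F ∣ TT 2 F
  swap
  · refine ⟨QS.filter fun q => rPi q F = 0 ∧ rPi q (TT 2 F) = 0, (bz _ hT2 d2).trans (by nlinarith), ∅, em 0, ?_⟩
    intro q hq hb
    exact (cF q (fun h => nb _ q hq hb h (TT_rPi q F h)) _).trans (by omega)
  by_cases d1 : F ∣ TT 1 F
  swap
  · refine ⟨QS.filter fun q => rPi q F = 0 ∧ rPi q (TT 1 F) = 0, (bz _ hT1 d1).trans (by nlinarith), ∅, em 0, ?_⟩
    intro q hq hb
    by_cases hq0 : rPi q F = 0
    · exact (cnt_root PS hPS F (TT 1 F) q (nb _ q hq hb hq0) (fun P h => TT_rP P F h) _).trans hT1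
    · exact (cF q hq0 _).trans (by omega)
  by_cases hex : ∃ w : Fin 4 → K, F ∣ (X 0 - bil w)
  · obtain ⟨w, hass⟩ := hex
    refine ⟨∅, by rw [Finset.card_empty]; exact Nat.zero_le _, {w}, by rw [Finset.card_singleton]; exact hdpos, ?_⟩
    intro q hq _
    by_cases hq0 : rPi q F = 0
    · rw [cnt_zero PS F q w hass hq0]; exact Nat.zero_le _
    · exact (cF q hq0 _).trans (by omega)
  · refine ⟨QS.filter fun q => rPi q F = 0 ∧ rPi q (pderiv 0 F) = 0, cz.trans (by nlinarith), ∅, em 0, ?_⟩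
    intro q hq hb
    by_cases hq0 : rPi q F = 0
    · exact absurd (exists_w p hp F hF hd d1 d2 q hq0 (nb _ q hq hb hq0)) hex
    · exact (cF q hq0 _).trans (by omega)

open Classical in
lemma claim_all [Infinite K] (p : ℕ) (hp : ∀ i : ℕ, 0 < i → i < p → (i : K) ≠ 0)
    (hPS : Set.InjOn (fun P : K × K × K => P.2.1) PS) (hQS : Set.InjOn (fun q : K × K × K => q.1) QS)
    (F : MvPolynomial (Fin 3) K) : F ≠ 0 → 2 * F.totalDegree < p → Claim PS QS F := by
  induction F using WfDvdMonoid.induction_on_irreducible with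
  | zero => intro h; exact absurd rfl h
  | unit u hu =>
    intro h0 hd
    refine ⟨∅, by simp, ∅, by simp, ?_⟩
    intro q hq _
    rw [Finset.card_eq_zero.2]
    · omega
    · rw [Finset.filter_eq_empty_iff]
      rintro P hP ⟨h1, _⟩
      have := hu.map (rP P)
      rw [h1] at this
      exact not_isUnit_zero this
  | mul a i ha hi ih =>
    intro h0 hd
    have hdeg : (i * a).totalDegree = i.totalDegree + a.totalDegree := totalDegree_mul_of_isDomain hi.ne_zero ha
    obtain ⟨Bad1, b1, B1, c1, h1⟩ := claim_irr PS QS p hp hPS hQS i hi (by omega)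
    obtain ⟨Bad2, b2, B2, c2, h2⟩ := ih ha (by omega)
    unfold Claim
    rw [hdeg]
    refine ⟨Bad1 ∪ Bad2, (Finset.card_union_le _ _).trans (by nlinarith), B1 ∪ B2, (Finset.card_union_le _ _).trans (by omega), ?_⟩
    intro q hq hb
    rw [Finset.mem_union, not_or] at hb
    have := add_le_add (h1 q hq hb.1) (h2 q hq hb.2)
    refine le_trans (le_trans (Finset.card_le_card ?_) (Finset.card_union_le _ _)) (this.trans (by omega))
    intro P hP
    rw [Finset.mem_filter] at hP
    obtain ⟨hP, hz, hi, hn⟩ := hP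
    rw [map_mul, mul_eq_zero] at hz
    rw [Finset.mem_union, Finset.mem_filter, Finset.mem_filter]
    rcases hz with hz | hz
    · refine Or.inl ⟨hP, hz, hi, ?_⟩
      rintro ⟨w, hw, hh⟩
      exact hn ⟨w, Finset.mem_union_left _ hw, hh⟩
    · refine Or.inr ⟨hP, hz, hi, ?_⟩
      rintro ⟨w, hw, hh⟩
      exact hn ⟨w, Finset.mem_union_right _ hw, hh⟩

end PP


namespace PP
open MvPolynomial
variable {K : Type*} [Field K]

/-- monomial exponent from a box index -/
noncomputable def mexp (e : ℕ) (i : Fin 3 → Fin (e+1)) : Fin 3 →₀ ℕ := Finsupp.equivFunOnFinite.symm (fun j => (i j : ℕ))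

lemma mexp_inj (e : ℕ) : Function.Injective (mexp e) := by
  intro i j h
  funext k
  have := DFunLike.congr_fun h k
  simp [mexp] at this
  exact Fin.ext this

lemma exists_F (PS : Finset (K × K × K)) (e : ℕ) (he : 2 * PS.card < (e+1)^2) :
    ∃ F : MvPolynomial (Fin 3) K, F ≠ 0 ∧ F.totalDegree ≤ 3 * e ∧ ∀ P ∈ PS, rP P F = 0 := by
  classical
  let Φ : ((Fin 3 → Fin (e+1)) → K) →ₗ[K] MvPolynomial (Fin 3) K :=
    ∑ i, (monomial (mexp e i)).comp (LinearMap.proj i)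
  have hΦ : ∀ c, Φ c = ∑ i, monomial (mexp e i) (c i) := by intro c; simp [Φ, LinearMap.sum_apply]
  let Ψ : ((Fin 3 → Fin (e+1)) → K) →ₗ[K] (PS × Fin (2*e+1) → K) :=
    LinearMap.pi fun x => (Polynomial.lcoeff K x.2).comp ((rP x.1.1).toLinearMap.comp Φ)
  have hker : ∃ c, c ≠ 0 ∧ Ψ c = 0 := by
    have hlt : Module.finrank K (PS × Fin (2*e+1) → K) < Module.finrank K ((Fin 3 → Fin (e+1)) → K) := by
      simp only [Module.finrank_fintype_fun_eq_card, Fintype.card_prod, Fintype.card_coe, Fintype.card_fin,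
        Fintype.card_pi, Finset.prod_const, Finset.card_univ]
      calc PS.card * (2*e+1) ≤ PS.card * (2 * (e+1)) := Nat.mul_le_mul_left _ (by omega)
        _ = (2 * PS.card) * (e+1) := by ring
        _ < (e+1)^2 * (e+1) := Nat.mul_lt_mul_of_pos_right he (by omega)
        _ = _ := by ring
    have := LinearMap.ker_ne_bot_of_finrank_lt hlt (f := Ψ)
    obtain ⟨c, hc, hc0⟩ := (Submodule.ne_bot_iff _).1 this
    exact ⟨c, hc0, hc⟩
  obtain ⟨c, hc0, hc⟩ := hker
  have cf : ∀ i, coeff (mexp e i) (Φ c) = c i := by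
    intro i
    rw [hΦ, coeff_sum, Finset.sum_eq_single i]
    · simp
    · intro j _ hj
      rw [coeff_monomial, if_neg (fun h => hj (mexp_inj e h))]
    · simp
  refine ⟨Φ c, ?_, ?_, ?_⟩
  · intro h
    apply hc0
    funext i
    rw [← cf i, h]; simp
  · rw [hΦ]
    refine totalDegree_finsetSum_le fun i _ => (totalDegree_monomial_le _ _).trans ?_
    rw [Finsupp.sum_fintype _ _ (by simp)]
    simp only [mexp, Finsupp.equivFunOnFinite_symm_apply_apply, Fin.sum_univ_three]
    have := (i 0).2; have := (i 1).2; have := (i 2).2; simp only [id]; omega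
  · intro P hP
    have hdeg : (rP P (Φ c)).natDegree ≤ 2 * e := by
      rw [hΦ, map_sum]
      refine Polynomial.natDegree_sum_le_of_forall_le _ _ fun i _ => ?_
      rw [rP, res, aeval_monomial]
      refine (Polynomial.natDegree_C_mul_le _ _).trans ?_
      rw [Finsupp.prod_fintype _ _ (by simp)]
      simp only [mexp, Finsupp.equivFunOnFinite_symm_apply_apply, Fin.sum_univ_three, Fin.prod_univ_three]
      refine Polynomial.natDegree_mul_le.trans ?_
      have h1 : ∀ a b : K, ∀ n : ℕ, ((Polynomial.C a * Polynomial.X + Polynomial.C b)^n).natDegree ≤ n := by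
        intro a b n
        refine Polynomial.natDegree_pow_le.trans ?_
        exact (Nat.mul_le_mul_left n Polynomial.natDegree_linear_le).trans (by simp)
      have h2 := h1 (![P.1, 1, 0] 0) (![P.2.2, 0, P.2.1] 0) (i 0)
      have h3 := h1 (![P.1, 1, 0] 1) (![P.2.2, 0, P.2.1] 1) (i 1)
      have h4 : ((Polynomial.C ((![P.1, 1, 0] : Fin 3 → K) 2) * Polynomial.X + Polynomial.C ((![P.2.2, 0, P.2.1] : Fin 3 → K) 2))^(i 2 : ℕ)).natDegree = 0 := by
        simp only [Matrix.cons_val]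
        rw [map_zero, zero_mul, zero_add, ← Polynomial.C_pow, Polynomial.natDegree_C]
      rw [h4, add_zero]
      refine Polynomial.natDegree_mul_le.trans ?_
      have := (i 0).2; have := (i 1).2; omega
    ext j
    by_cases hj : j < 2 * e + 1
    · have := congrFun hc (⟨P, hP⟩, ⟨j, hj⟩)
      simpa [Ψ] using this
    · rw [Polynomial.coeff_eq_zero_of_natDegree_lt (by omega)]; simp

open Classical in
theorem prop [Infinite K] (p : ℕ) (hp : ∀ i : ℕ, 0 < i → i < p → (i : K) ≠ 0) (PS QS : Finset (K × K × K))
    (hPS : Set.InjOn (fun P : K × K × K => P.2.1) PS) (hQS : Set.InjOn (fun q : K × K × K => q.1) QS)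
    (hn : 72 * PS.card < p ^ 2) (k : ℕ) (hk : ∀ w : Fin 4 → K, (PS.filter fun P => onP P w).card ≤ k) :
    ∃ Bad : Finset (K × K × K), Bad ⊆ QS ∧ Bad.card ≤ 684 * PS.card ∧ ∀ q ∈ QS, q ∉ Bad →
      (PS.filter fun P => inc P q).card ≤ 9 * Nat.sqrt (2 * PS.card) + k := by
  set e := Nat.sqrt (2 * PS.card) with he
  have he1 : e * e ≤ 2 * PS.card := Nat.sqrt_le _
  have he2 : 2 * PS.card < (e+1)^2 := by rw [pow_two]; exact Nat.lt_succ_sqrt _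
  obtain ⟨F, hF0, hFd, hFP⟩ := exists_F PS e he2
  have hep : 6 * e < p := by
    by_contra h
    push Not at h
    nlinarith
  obtain ⟨Bad, hb, B, hB, h⟩ := claim_all PS QS p hp hPS hQS F hF0 (by omega)
  set Bad2 := B.offDiag.biUnion fun x => QS.filter fun q => onPi q x.1 ∧ onPi q x.2 with hBad2
  have hb2 : Bad2.card ≤ (3 * e)^2 := by
    refine (Finset.card_biUnion_le_card_mul _ _ 1 ?_).trans ?_
    · rintro ⟨w, w'⟩ hw
      rw [Finset.mem_offDiag] at hw
      rw [Finset.card_le_one]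
      intro q hq r hr
      rw [Finset.mem_filter] at hq hr
      obtain ⟨hq, ⟨q1, q2⟩, q3, q4⟩ := hq
      obtain ⟨hr, ⟨r1, r2⟩, r3, r4⟩ := hr
      simp only at *
      apply hQS hq hr
      by_contra hne
      simp only at hne
      have hsub : q.1 - r.1 ≠ 0 := sub_ne_zero.2 hne
      have e3 : w 3 = w' 3 := by
        have : (w 3 - w' 3) * (q.1 - r.1) = 0 := by linear_combination q3 - q1 - r3 + r1
        exact sub_eq_zero.1 ((mul_eq_zero.1 this).resolve_right hsub)
      have e1 : w 1 = w' 1 := by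
        have : (w 1 - w' 1) * (q.1 - r.1) = 0 := by linear_combination q4 - q2 - r4 + r2
        exact sub_eq_zero.1 ((mul_eq_zero.1 this).resolve_right hsub)
      have e2 : w 2 = w' 2 := by rw [e3] at q1; linear_combination q3 - q1
      have e0 : w 0 = w' 0 := by rw [e1] at q2; linear_combination q4 - q2
      apply hw.2.2
      funext i
      fin_cases i <;> assumption
    · rw [mul_one, Finset.offDiag_card]
      have : B.card ≤ 3 * e := hB.trans hFd
      have := Nat.mul_le_mul this this
      rw [pow_two]; omega
  refine ⟨(Bad ∪ Bad2) ∩ QS, Finset.inter_subset_right, ?_, ?_⟩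
  · refine (Finset.card_le_card Finset.inter_subset_left).trans ((Finset.card_union_le _ _).trans ?_)
    have : F.totalDegree ^ 2 ≤ (3 * e)^2 := Nat.pow_le_pow_left hFd 2
    nlinarith
  · intro q hq hqb
    rw [Finset.mem_inter, Finset.mem_union] at hqb
    have hq1 : q ∉ Bad := fun h => hqb ⟨Or.inl h, hq⟩
    have hq2 : q ∉ Bad2 := fun h => hqb ⟨Or.inr h, hq⟩
    have hA := h q hq hq1
    have hB' : (PS.filter fun P => ∃ w ∈ B, onP P w ∧ onPi q w).card ≤ k := by
      by_cases hex : ∃ w ∈ B, onPi q w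
      · obtain ⟨w, hw, hqw⟩ := hex
        refine (Finset.card_le_card ?_).trans (hk w)
        intro P hP
        rw [Finset.mem_filter] at hP ⊢
        obtain ⟨hP, w', hw', hPw', hqw'⟩ := hP
        have : w' = w := by
          by_contra hne
          apply hq2
          rw [hBad2, Finset.mem_biUnion]
          exact ⟨(w', w), Finset.mem_offDiag.2 ⟨hw', hw, hne⟩, Finset.mem_filter.2 ⟨hq, hqw', hqw⟩⟩
        exact ⟨hP, this ▸ hPw'⟩
      · rw [Finset.card_eq_zero.2]
        · exact Nat.zero_le _
        · rw [Finset.filter_eq_empty_iff]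
          rintro P hP ⟨w, hw, _, h2⟩
          exact hex ⟨w, hw, h2⟩
    have : (PS.filter fun P => inc P q).card ≤ _ + _ := 
      (Finset.card_le_card (s := PS.filter fun P => inc P q) (t := (PS.filter fun P => rP P F = 0 ∧ inc P q ∧ ¬ ∃ w ∈ B, onP P w ∧ onPi q w)
        ∪ (PS.filter fun P => ∃ w ∈ B, onP P w ∧ onPi q w)) (by
        intro P hP
        rw [Finset.mem_filter] at hP
        rw [Finset.mem_union, Finset.mem_filter, Finset.mem_filter]
        by_cases hx : ∃ w ∈ B, onP P w ∧ onPi q w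
        · exact Or.inr ⟨hP.1, hx⟩
        · exact Or.inl ⟨hP.1, hFP P hP.1, hP.2, hx⟩)).trans (Finset.card_union_le _ _)
    omega

open Classical in
/-- number of incidences -/
noncomputable def I (PS QS : Finset (K × K × K)) : ℕ := ∑ q ∈ QS, (PS.filter fun P => inc P q).card

open Classical in
theorem recursion [Infinite K] (p : ℕ) (hp : ∀ i : ℕ, 0 < i → i < p → (i : K) ≠ 0) (k : ℕ) (j : ℕ) :
    ∀ (PS QS : Finset (K × K × K)),
    Set.InjOn (fun P : K × K × K => P.2.1) PS → Set.InjOn (fun q : K × K × K => q.1) QS →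
    72 * 2 ^ j < p ^ 2 → PS.card ≤ 2 ^ j → QS.card ≤ 684 * 2 ^ j →
    (∀ w : Fin 4 → K, (PS.filter fun P => onP P w).card ≤ k) →
    (I PS QS : ℝ) ≤ 43000 * (Real.sqrt 2 ^ j)^3 + 1368 * k * j * 2 ^ j := by
  induction j with
  | zero =>
    intro PS QS _ _ _ h1 h2 _
    have : I PS QS ≤ 684 := by
      unfold I
      calc _ ≤ ∑ q ∈ QS, 1 := Finset.sum_le_sum fun q _ => (Finset.card_filter_le _ _).trans (by simpa using h1)
        _ ≤ 684 := by simpa using h2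
    have : (I PS QS : ℝ) ≤ 684 := by exact_mod_cast this
    simp; linarith
  | succ j ih =>
    intro PS QS hPS hQS hp2 h1 h2 hk
    obtain ⟨P1, hP1, hc1⟩ : ∃ P1 ⊆ PS, P1.card = min PS.card (2^j) := Finset.exists_subset_card_eq (min_le_left _ _)
    have hc1' : P1.card ≤ 2 ^ j := by rw [hc1]; exact min_le_right _ _
    have hc2' : (PS \ P1).card ≤ 2 ^ j := by
      rw [Finset.card_sdiff_of_subset hP1, hc1]
      rw [pow_succ] at h1
      omega
    have hp2' : 72 * 2 ^ j < p ^ 2 := by rw [pow_succ] at hp2; omega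
    set r := Real.sqrt 2 with hr
    have hr2 : r ^ 2 = 2 := Real.sq_sqrt (by norm_num)
    have hr1 : 1.41 < r := Real.lt_sqrt_of_sq_lt (by norm_num)
    have hr3 : r < 1.42 := by rw [hr, Real.sqrt_lt' (by norm_num)]; norm_num
    have hrj : (r^j)^2 = 2^j := by rw [← pow_mul, mul_comm, pow_mul, hr2]
    have half : ∀ P' ⊆ PS, P'.card ≤ 2 ^ j → (I P' QS : ℝ) ≤ 684 * 2^(j+1) * (9 * r * r^j + k)
        + (43000 * (r ^ j)^3 + 1368 * k * j * 2 ^ j) := by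
      intro P' hsub hcard
      have hinj : Set.InjOn (fun P : K × K × K => P.2.1) P' := hPS.mono (Finset.coe_subset.2 hsub)
      have hk' : ∀ w : Fin 4 → K, (P'.filter fun P => onP P w).card ≤ k := fun w =>
        (Finset.card_le_card (Finset.filter_subset_filter _ hsub)).trans (hk w)
      obtain ⟨Bad, hBs, hBc, hB⟩ := prop p hp P' QS hinj hQS (lt_of_le_of_lt (Nat.mul_le_mul_left _ hcard) hp2') k hk'
      have hrec := ih P' Bad hinj (hQS.mono (Finset.coe_subset.2 hBs)) hp2' hcard (hBc.trans (Nat.mul_le_mul_left _ hcard)) hk'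
      have hsplit : I P' QS = (∑ q ∈ QS \ Bad, (P'.filter fun P => inc P q).card) + I P' Bad := by
        unfold I; rw [Finset.sum_sdiff hBs]
      have hs : ((Nat.sqrt (2 * P'.card) : ℕ) : ℝ) ≤ r * r^j := by
        apply (abs_le_of_sq_le_sq' (b := r * r^j) ?_ (by positivity)).2
        rw [mul_pow, hrj, hr2]
        have : Nat.sqrt (2 * P'.card) ^ 2 ≤ 2 * 2^j := (Nat.sqrt_le' _).trans (Nat.mul_le_mul_left _ hcard)
        exact_mod_cast this
      have hfirst : ((∑ q ∈ QS \ Bad, (P'.filter fun P => inc P q).card : ℕ) : ℝ) ≤ 684 * 2^(j+1) * (9 * r * r^j + k) := by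
        push_cast
        calc _ ≤ ∑ q ∈ QS \ Bad, (9 * r * r^j + k) := by
              refine Finset.sum_le_sum fun q hq => ?_
              rw [Finset.mem_sdiff] at hq
              have := hB q hq.1 hq.2
              have : ((P'.filter fun P => inc P q).card : ℝ) ≤ 9 * (Nat.sqrt (2 * P'.card) : ℕ) + k := by exact_mod_cast this
              linarith
          _ = ((QS \ Bad).card : ℝ) * (9 * r * r^j + k) := by rw [Finset.sum_const, nsmul_eq_mul]
          _ ≤ _ := by
              apply mul_le_mul_of_nonneg_right _ (by positivity)
              have : (QS \ Bad).card ≤ 684 * 2^(j+1) := (Finset.card_le_card Finset.sdiff_subset).trans h2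
              exact_mod_cast this
      rw [hsplit]; push_cast at hfirst ⊢; linarith
    have hI : I PS QS = I P1 QS + I (PS \ P1) QS := by
      unfold I
      rw [← Finset.sum_add_distrib]
      refine Finset.sum_congr rfl fun q _ => ?_
      conv_lhs => rw [← Finset.union_sdiff_of_subset hP1]
      rw [Finset.filter_union, Finset.card_union_of_disjoint]
      exact Finset.disjoint_filter_filter Finset.disjoint_sdiff
    have e1 := half P1 hP1 hc1'
    have e2 := half _ Finset.sdiff_subset hc2'
    rw [hI]
    push_cast
    set x := r^j with hx
    have hx0 : 0 < x := by positivity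
    have hr33 : r^3 = 2 * r := by rw [pow_succ, hr2]
    have e3 : (r^(j+1))^3 = x^3 * (2 * r) := by rw [pow_succ r j, mul_pow, ← hx, hr33]
    rw [e3, pow_succ (2:ℝ) j, ← hrj] 
    rw [pow_succ (2:ℝ) j, ← hrj] at e1 e2
    have hx3 : 0 < x^3 := by positivity
    have hkk : (0:ℝ) ≤ k := Nat.cast_nonneg k
    have h9 := mul_pos hx3 (sub_pos.2 hr1)
    linarith

end PP

namespace PP

theorem coef {F K : Type*} [Field F] [Field K] [Algebra F K] {T : K} (hT : Transcendental F T)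
    (a0 a1 a2 a3 a4 a5 a6 a7 : F)
    (h : algebraMap F K a0 + algebraMap F K a1 * T + algebraMap F K a2 * T^2 + algebraMap F K a3 * T^3
      + algebraMap F K a4 * T^4 + algebraMap F K a5 * T^5 + algebraMap F K a6 * T^6 + algebraMap F K a7 * T^7 = 0) :
    a0 = 0 ∧ a1 = 0 ∧ a2 = 0 ∧ a3 = 0 := by
  have hq : (Polynomial.C a0 + Polynomial.C a1 * Polynomial.X + Polynomial.C a2 * Polynomial.X^2 + Polynomial.C a3 * Polynomial.X^3
     + Polynomial.C a4 * Polynomial.X^4 + Polynomial.C a5 * Polynomial.X^5 + Polynomial.C a6 * Polynomial.X^6 + Polynomial.C a7 * Polynomial.X^7 : Polynomial F) = 0 := by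
    apply (transcendental_iff.1 hT)
    simpa using h
  refine ⟨?_, ?_, ?_, ?_⟩
  · simpa [Polynomial.coeff_X, Polynomial.coeff_C, Polynomial.coeff_X_pow] using congrArg (fun q => Polynomial.coeff q 0) hq
  · simpa [Polynomial.coeff_X, Polynomial.coeff_C, Polynomial.coeff_X_pow] using congrArg (fun q => Polynomial.coeff q 1) hq
  · simpa [Polynomial.coeff_X, Polynomial.coeff_C, Polynomial.coeff_X_pow] using congrArg (fun q => Polynomial.coeff q 2) hq
  · simpa [Polynomial.coeff_X, Polynomial.coeff_C, Polynomial.coeff_X_pow] using congrArg (fun q => Polynomial.coeff q 3) hq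

section gen
variable {F K : Type*} [Field F] [Field K] [Algebra F K] (T : K)

local notation "φ" => algebraMap F K

/-- denominators -/
noncomputable def Dp (v : F × F × F) : K := 1 + T^3 * φ v.2.1 + T^4 * φ v.2.2
/-- denominators -/
noncomputable def Dw (v : F × F × F) : K := 1 + T^2 * φ v.2.1 + T^4 * φ v.2.2
/-- generic point -/
noncomputable def gpt (v : F × F × F) : K × K × K :=
  (φ v.2.1 / Dp T v, (φ v.1 + T * φ v.2.1 + T^2 * φ v.2.2) / Dp T v, φ v.2.2 / Dp T v)
/-- generic plane -/
noncomputable def gpl (v : F × F × F) : K × K × K :=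
  ((φ v.1 + T * φ v.2.1 + T^3 * φ v.2.2) / Dw T v, φ v.2.1 / Dw T v, φ v.2.2 / Dw T v)

variable {T}

theorem Dp_ne (hT : Transcendental F T) (v : F × F × F) : Dp T v ≠ 0 := by
  intro h
  have := (coef hT 1 0 0 v.2.1 v.2.2 0 0 0 (by rw [← h, Dp]; simp; ring)).1
  exact one_ne_zero this

theorem Dw_ne (hT : Transcendental F T) (v : F × F × F) : Dw T v ≠ 0 := by
  intro h
  have := (coef hT 1 0 v.2.1 0 v.2.2 0 0 0 (by rw [← h, Dw]; simp; ring)).1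
  exact one_ne_zero this

theorem gpt_inj (hT : Transcendental F T) {v w : F × F × F} (h : (gpt T v).2.1 = (gpt T w).2.1) : v = w := by
  simp only [gpt] at h
  rw [div_eq_div_iff (Dp_ne hT v) (Dp_ne hT w)] at h
  unfold Dp at h
  obtain ⟨b, m, c⟩ := v
  obtain ⟨b', m', c'⟩ := w
  simp only at h
  have := coef hT (b - b') (m - m') (c - c') (b * m' - b' * m) (m * m' + b * c' - m' * m - b' * c) (m * c' + c * m' - m' * c - c' * m) (c*c'-c'*c) 0
    (by simp only [map_sub, map_mul, map_add, map_zero]; linear_combination h)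
  obtain ⟨h1, h2, h3, -⟩ := this
  rw [sub_eq_zero.1 h1, sub_eq_zero.1 h2, sub_eq_zero.1 h3]

theorem gpl_inj (hT : Transcendental F T) {v w : F × F × F} (h : (gpl T v).1 = (gpl T w).1) : v = w := by
  simp only [gpl] at h
  rw [div_eq_div_iff (Dw_ne hT v) (Dw_ne hT w)] at h
  unfold Dw at h
  obtain ⟨b, m, c⟩ := v
  obtain ⟨b', m', c'⟩ := w
  simp only at h
  have := coef hT (b - b') (m - m') (b * m' - b' * m) (c - c') (b * c' - b' * c) (c * m' - c' * m + m * c' - m' * c) 0 (c*c'-c'*c) 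
    (by simp only [map_sub, map_mul, map_add, map_zero]; linear_combination h)
  obtain ⟨h1, h2, -, h3⟩ := this
  rw [sub_eq_zero.1 h1, sub_eq_zero.1 h2, sub_eq_zero.1 h3]

theorem inc_iff (hT : Transcendental F T) (b b' m c m' c' : F) :
    inc (gpt T (b', m, c)) (gpl T (b, m', c')) ↔ m * b + c = m' * b' + c' := by
  have h1 := Dp_ne hT (b', m, c)
  have h2 := Dw_ne hT (b, m', c')
  have key : (gpt T (b', m, c)).1 * (gpl T (b, m', c')).1 + (gpt T (b', m, c)).2.2
     - ((gpl T (b, m', c')).2.1 * (gpt T (b', m, c)).2.1 + (gpl T (b, m', c')).2.2)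
      = φ (m * b + c - (m' * b' + c')) / (Dp T (b', m, c) * Dw T (b, m', c')) := by
    simp only [gpt, gpl]
    rw [eq_div_iff (mul_ne_zero h1 h2)]
    field_simp
    simp only [Dp, Dw, map_sub, map_mul, map_add]
    ring
  unfold inc
  rw [← sub_eq_zero, key, div_eq_zero_iff, or_iff_left (mul_ne_zero h1 h2), map_eq_zero, sub_eq_zero]

theorem onP_pair (hT : Transcendental F T) (w : Fin 4 → K) (b m1 c1 m2 c2 b3 m3 c3 : F)
    (hne : m1 ≠ m2 ∨ c1 ≠ c2)
    (H1 : onP (gpt T (b, m1, c1)) w) (H2 : onP (gpt T (b, m2, c2)) w) (H3 : onP (gpt T (b3, m3, c3)) w) :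
    b3 = b ∧ (c2 - c1) * m3 + (m1 - m2) * c3 = (c2 - c1) * m1 + (m1 - m2) * c1 := by
  have lin : ∀ b m c : F, onP (gpt T (b, m, c)) w → φ m = w 1 * (1 + T^3 * φ m + T^4 * φ c) + w 3 * (φ b + T * φ m + T^2 * φ c)
      ∧ φ c = w 0 * (1 + T^3 * φ m + T^4 * φ c) + w 2 * (φ b + T * φ m + T^2 * φ c) := by
    intro b m c ⟨h1, h2⟩
    have hD := Dp_ne hT (b, m, c)
    simp only [gpt] at h1 h2
    have e : Dp T (b, m, c) = (1 + T^3 * φ m + T^4 * φ c) := rfl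
    rw [← e]
    constructor
    · field_simp at h1; linear_combination h1
    · field_simp at h2; linear_combination h2
  obtain ⟨p1, q1⟩ := lin _ _ _ H1
  obtain ⟨p2, q2⟩ := lin _ _ _ H2
  obtain ⟨p3, q3⟩ := lin _ _ _ H3
  have hE : φ (m2 - m1) + T * φ (c2 - c1) ≠ 0 := by
    intro h
    have := coef hT (m2 - m1) (c2 - c1) 0 0 0 0 0 0 (by rw [← h]; simp; ring)
    rcases hne with h | h
    · exact h (sub_eq_zero.1 this.1).symm
    · exact h (sub_eq_zero.1 this.2.1).symm
  have hT0 : T ≠ 0 := by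
    rintro rfl
    exact hT isAlgebraic_zero
  have hab : (w 1 + T * w 0) * T^3 + (w 3 + T * w 2) * T = 1 := by
    apply mul_left_cancel₀ hE
    simp only [map_sub]
    linear_combination p1 - p2 + T * (q1 - q2)
  have hb : (w 3 + T * w 2) * (φ b3 - φ b) = 0 := by
    linear_combination p1 + T * q1 - p3 - T * q3 + (φ m3 + T * φ c3 - φ m1 - T * φ c1) * (-hab)
  rcases mul_eq_zero.1 hb with h0 | h0
  · exfalso
    rw [h0, zero_mul, add_zero] at hab
    have : (1:K) = 0 := by
      linear_combination  (-T^3) * (p1 + T * q1)  + T^3 * (φ b + T * φ m1 + T^2 * φ c1) * (-h0) - (1 + T^3 * φ m1 + T^4 * φ c1) * hab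
    exact one_ne_zero this
  · have hbb : φ b3 = φ b := sub_eq_zero.1 h0
    refine ⟨(algebraMap F K).injective hbb, ?_⟩
    apply (algebraMap F K).injective
    rw [hbb] at p3 q3
    have A : φ m2 - φ m1 = (φ m2 - φ m1 + T * (φ c2 - φ c1)) * (w 1 * T^3 + w 3 * T) := by linear_combination p2 - p1
    have B : φ c2 - φ c1 = (φ m2 - φ m1 + T * (φ c2 - φ c1)) * (w 0 * T^3 + w 2 * T) := by linear_combination q2 - q1
    have C : φ m3 - φ m1 = (φ m3 - φ m1 + T * (φ c3 - φ c1)) * (w 1 * T^3 + w 3 * T) := by linear_combination p3 - p1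
    have D : φ c3 - φ c1 = (φ m3 - φ m1 + T * (φ c3 - φ c1)) * (w 0 * T^3 + w 2 * T) := by linear_combination q3 - q1
    simp only [map_sub, map_mul, map_add]
    linear_combination (φ c2 - φ c1) * C - (φ m2 - φ m1) * D
      + (φ m3 - φ m1 + T * (φ c3 - φ c1)) * (w 1 * T^3 + w 3 * T) * B
      - (φ m3 - φ m1 + T * (φ c3 - φ c1)) * (w 0 * T^3 + w 2 * T) * A
end gen

open Classical in
/-- incidence energy -/
noncomputable def J {F : Type*} [Field F] (Y : Finset F) (L : Finset (F × F)) : ℕ :=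
  (((Y ×ˢ L) ×ˢ (Y ×ˢ L)).filter fun q : (F × F × F) × (F × F × F) =>
    q.1.2.1 * q.1.1 + q.1.2.2 = q.2.2.1 * q.2.1 + q.2.2.2).card

open Classical in
theorem J_bound (p : ℕ) [Fact p.Prime] (Y : Finset (ZMod p)) (L : Finset (ZMod p × ZMod p)) (k : ℕ)
    (hY : Y.card ≤ k) (hL : ∀ α β γ : ZMod p, (α ≠ 0 ∨ β ≠ 0) → (L.filter fun q => α * q.1 + β * q.2 = γ).card ≤ k)
    (hN : 144 * (Y.card * L.card) < p ^ 2) (hN0 : 0 < Y.card * L.card) :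
    (J Y L : ℝ) ≤ 129000 * (Y.card * L.card) * Real.sqrt (Y.card * L.card)
      + 2736 * k * Nat.clog 2 (Y.card * L.card) * (Y.card * L.card) := by
  let K := RatFunc (ZMod p)
  let T : K := RatFunc.X
  have hT : Transcendental (ZMod p) T := RatFunc.transcendental_X
  have hinfK : Infinite K := Infinite.of_injective _ (RatFunc.algebraMap_injective (ZMod p))
  have hp : ∀ i : ℕ, 0 < i → i < p → (i : K) ≠ 0 := by
    intro i h0 hi h
    have h1 : algebraMap (ZMod p) K (i : (ZMod p)) = 0 := by rw [map_natCast]; exact h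
    rw [map_eq_zero] at h1
    have := (ZMod.natCast_eq_zero_iff i p).1 h1
    exact absurd (Nat.le_of_dvd h0 this) (by omega)
  set V : Finset ((ZMod p) × (ZMod p) × (ZMod p)) := Y ×ˢ L with hV
  have hVc : V.card = Y.card * L.card := Finset.card_product _ _
  have i1 : Function.Injective (gpt T : (ZMod p) × (ZMod p) × (ZMod p) → K × K × K) := fun v w h => gpt_inj hT (by rw [h])
  have i2 : Function.Injective (gpl T : (ZMod p) × (ZMod p) × (ZMod p) → K × K × K) := fun v w h => gpl_inj hT (by rw [h])
  set PS := V.image (gpt T) with hPS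
  set QS := V.image (gpl T) with hQS
  have cP : PS.card = V.card := Finset.card_image_of_injective _ i1
  have cQ : QS.card = V.card := Finset.card_image_of_injective _ i2
  set j := Nat.clog 2 V.card with hj
  have hVj : V.card ≤ 2 ^ j := Nat.le_pow_clog (by norm_num) _
  have hj2 : 2 ^ j ≤ 2 * V.card := by
    rcases Nat.eq_zero_or_pos j with h | h
    · rw [h, pow_zero]; omega
    · have : 2 ^ (j-1) < V.card := Nat.pow_pred_clog_lt_self (by norm_num) (by
        by_contra h'
        have h1 : V.card ≤ 1 := by omega
        rw [hj, Nat.clog_of_right_le_one h1] at h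
        omega)
      have e : 2 ^ j = 2 * 2 ^ (j-1) := by rw [← pow_succ']; congr 1; omega
      omega
  have hIJ : I PS QS = J Y L := by
    unfold I J
    rw [hQS, Finset.sum_image (fun x _ y _ h => i2 h)]
    have : ∀ v ∈ V, (PS.filter fun P => inc P (gpl T v)).card = (V.filter fun u => u.2.1 * v.1 + u.2.2 = v.2.1 * u.1 + v.2.2).card := by
      intro v _
      rw [hPS, Finset.filter_image, Finset.card_image_of_injective _ i1]
      congr 1
      apply Finset.filter_congr
      rintro ⟨b', m, c⟩ _
      exact inc_iff hT _ _ _ _ _ _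
    rw [Finset.sum_congr rfl this, ← Finset.card_sigma]
    refine Finset.card_bij' (fun x _ => ((x.1.1, x.2.2), (x.2.1, x.1.2))) (fun x _ => ⟨(x.1.1, x.2.2), (x.2.1, x.1.2)⟩) ?_ ?_ ?_ ?_
    · rintro ⟨⟨a, l⟩, ⟨a', l'⟩⟩ h
      simp only [hV, Finset.mem_sigma, Finset.mem_filter, Finset.mem_product] at h ⊢
      exact ⟨⟨⟨h.1.1, h.2.1.2⟩, ⟨h.2.1.1, h.1.2⟩⟩, h.2.2⟩
    · rintro ⟨⟨a, l⟩, ⟨a', l'⟩⟩ h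
      simp only [hV, Finset.mem_sigma, Finset.mem_filter, Finset.mem_product] at h ⊢
      exact ⟨⟨h.1.1.1, h.1.2.2⟩, ⟨h.1.2.1, h.1.1.2⟩, h.2⟩
    · intro _ _; rfl
    · intro _ _; rfl
  have hk : ∀ w : Fin 4 → K, (PS.filter fun P => onP P w).card ≤ k := by
    intro w
    rw [hPS, Finset.filter_image, Finset.card_image_of_injective _ i1]
    set W := V.filter fun v => onP (gpt T v) w with hW
    by_cases hinj : Set.InjOn (fun v : (ZMod p) × (ZMod p) × (ZMod p) => v.1) W
    · refine le_trans ?_ hY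
      refine Finset.card_le_card_of_injOn _ ?_ hinj
      intro v hv
      rw [Finset.mem_coe, hW, Finset.mem_filter, hV, Finset.mem_product] at hv
      exact hv.1.1
    · unfold Set.InjOn at hinj
      push Not at hinj
      obtain ⟨⟨b, m1, c1⟩, h1, ⟨b', m2, c2⟩, h2, hbb, hne⟩ := hinj
      simp only at hbb
      subst hbb
      have hne' : m1 ≠ m2 ∨ c1 ≠ c2 := by
        by_contra h
        push Not at h
        exact hne (by rw [h.1, h.2])
      rw [Finset.mem_coe, hW, Finset.mem_filter] at h1 h2
      have key : ∀ v ∈ W, v.1 = b ∧ (c2 - c1) * v.2.1 + (m1 - m2) * v.2.2 = (c2 - c1) * m1 + (m1 - m2) * c1 := by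
        rintro ⟨b3, m3, c3⟩ hv
        rw [hW, Finset.mem_filter] at hv
        exact onP_pair hT w b m1 c1 m2 c2 b3 m3 c3 hne' h1.2 h2.2 hv.2
      refine le_trans ?_ (hL (c2 - c1) (m1 - m2) ((c2 - c1) * m1 + (m1 - m2) * c1) ?_)
      · refine Finset.card_le_card_of_injOn (fun v => v.2) ?_ ?_
        · intro v hv
          have := key v hv
          rw [Finset.mem_coe, hW, Finset.mem_filter, hV, Finset.mem_product] at hv
          exact Finset.mem_filter.2 ⟨hv.1.2, this.2⟩
        · intro v hv u hu h
          exact Prod.ext ((key v hv).1.trans (key u hu).1.symm) h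
      · rcases hne' with h | h
        · exact Or.inr (sub_ne_zero.2 h)
        · exact Or.inl (sub_ne_zero.2 h.symm)
  have hrec := recursion p hp k j PS QS
    (by
      intro P hP P' hP' h
      rw [Finset.mem_coe, hPS, Finset.mem_image] at hP hP'
      obtain ⟨v, _, rfl⟩ := hP
      obtain ⟨v', _, rfl⟩ := hP'
      rw [gpt_inj hT h])
    (by
      intro P hP P' hP' h
      rw [Finset.mem_coe, hQS, Finset.mem_image] at hP hP'
      obtain ⟨v, _, rfl⟩ := hP
      obtain ⟨v', _, rfl⟩ := hP'
      rw [gpl_inj hT h])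
    (by omega) (by omega) (by omega) hk
  rw [hIJ] at hrec
  set N : ℝ := (Y.card : ℝ) * L.card with hNN
  have hNV : (V.card : ℝ) = N := by rw [hVc, hNN]; push_cast; rfl
  rw [← hVc, ← hj]
  have h2j : (2:ℝ)^j ≤ 2 * N := by rw [← hNV]; exact_mod_cast hj2
  have hN1 : 0 ≤ N := by positivity
  have hs2 : Real.sqrt 2 ^ j = Real.sqrt (2 ^ j) := by
    rw [Real.sqrt_eq_rpow, Real.sqrt_eq_rpow, ← Real.rpow_natCast, ← Real.rpow_mul (by norm_num), mul_comm, Real.rpow_mul (by norm_num), Real.rpow_natCast]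
  have h3 : (Real.sqrt 2 ^ j)^3 ≤ 3 * N * Real.sqrt N := by
    rw [hs2, pow_succ, Real.sq_sqrt (by positivity)]
    have : Real.sqrt (2^j) ≤ 1.5 * Real.sqrt N := by
      rw [Real.sqrt_le_left (by positivity), mul_pow, Real.sq_sqrt hN1]
      linarith
    have h5 := mul_le_mul h2j this (Real.sqrt_nonneg _) (by positivity)
    linarith
  have hkj : (0:ℝ) ≤ 1368 * k * j := by positivity
  have h4 := mul_le_mul_of_nonneg_left h2j hkj
  nlinarith
end PP

namespace PP

section grp
variable {G : Type*} [CommGroup G] [DecidableEq G] [Fintype G]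

/-- number of representations as product -/
def rep (S T : Finset G) (x : G) : ℕ := ((S ×ˢ T).filter fun q => q.1 * q.2 = x).card
/-- number of representations as quotient -/
def R (S : Finset G) (u : G) : ℕ := ((S ×ˢ S).filter fun q => q.1 = u * q.2).card
/-- multiplicative energy -/
def EU (A U : Finset G) : ℕ := ∑ x, rep A U x ^ 2
/-- fourth order energy -/
def E4 (A : Finset G) : ℕ := ∑ x, R A x ^ 4

theorem R_mono {S T : Finset G} (h : S ⊆ T) (u : G) : R S u ≤ R T u :=
  Finset.card_le_card (Finset.filter_subset_filter _ (Finset.product_subset_product h h))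

theorem R_le (S : Finset G) (u : G) : R S u ≤ S.card := by
  unfold R
  refine Finset.card_le_card_of_injOn (fun q => q.2) ?_ ?_
  · intro q hq; simp at hq ⊢; exact hq.1.2
  · intro q hq q' hq' h
    simp at hq hq' h
    exact Prod.ext (by rw [hq.2, hq'.2, h]) h

theorem rep_erase (B A : Finset G) (a : G) (ha : a ∈ B) (x : G) :
    rep B A x = rep (B.erase a) A x + if x / a ∈ A then 1 else 0 := by
  unfold rep
  have : ((B ×ˢ A).filter fun q => q.1 * q.2 = x) = (((B.erase a) ×ˢ A).filter fun q => q.1 * q.2 = x)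
      ∪ ((({a} : Finset G) ×ˢ A).filter fun q => q.1 * q.2 = x) := by
    rw [← Finset.filter_union, ← Finset.union_product]
    congr 2
    ext y
    rw [Finset.mem_union, Finset.mem_erase, Finset.mem_singleton]
    by_cases hy : y = a
    · simp [hy, ha]
    · simp [hy]
  rw [this, Finset.card_union_of_disjoint]
  · congr 1
    split_ifs with h
    · rw [Finset.card_eq_one]
      refine ⟨(a, x/a), ?_⟩
      ext ⟨y, z⟩
      simp only [mem_filter, mem_product, mem_singleton, Prod.mk.injEq]
      constructor
      · rintro ⟨⟨rfl, _⟩, rfl⟩; simp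
      · rintro ⟨rfl, rfl⟩; simp [h]
    · rw [Finset.card_eq_zero, Finset.filter_eq_empty_iff]
      rintro ⟨y, z⟩ hy hx
      simp only [mem_product, mem_singleton] at hy hx
      apply h
      rw [← hx, ← hy.1]; simpa using hy.2
  · rw [Finset.disjoint_left]
    rintro ⟨y, z⟩ h1 h2
    rw [Finset.mem_filter, Finset.mem_product] at h1 h2
    exact (Finset.mem_erase.1 h1.1.1).1 (Finset.mem_singleton.1 h2.1.1)

theorem step1 (A : Finset G) (hA : A.Nonempty) (δ : ℝ) (hδ0 : 0 ≤ δ) (hδ : (A * A).card * δ ≤ (A.card:ℝ)^2 / 8) :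
    ∃ B ⊆ A, B.Nonempty ∧ ∀ a ∈ B, ((A.filter fun c => (rep B A (a * c) : ℝ) ≤ δ).card : ℝ) ≤ A.card / 4 := by
  let Ψ : Finset G → ℝ := fun B => ∑ x ∈ A * A, min (rep B A x : ℝ) δ - A.card / 4 * B.card
  obtain ⟨B, hB, hmin⟩ := Finset.exists_min_image A.powerset Ψ ⟨A, by simp⟩
  rw [Finset.mem_powerset] at hB
  have hn : (0:ℝ) < A.card := by exact_mod_cast hA.card_pos
  refine ⟨B, hB, ?_, ?_⟩
  · by_contra hne
    rw [Finset.not_nonempty_iff_eq_empty] at hne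
    have h1 := hmin A (by simp)
    have h2 : 0 ≤ Ψ B := by
      simp only [Ψ, hne, card_empty]
      simp
      exact Finset.sum_nonneg fun x _ => le_min (Nat.cast_nonneg _) hδ0
    have h3 : Ψ A ≤ (A * A).card * δ - A.card / 4 * A.card := by
      simp only [Ψ]
      have : ∑ x ∈ A * A, min (rep A A x : ℝ) δ ≤ ∑ x ∈ A * A, δ := Finset.sum_le_sum fun x _ => min_le_right _ _
      rw [Finset.sum_const, nsmul_eq_mul] at this
      linarith
    nlinarith
  · intro a ha
    have h1 := hmin (B.erase a) (by rw [Finset.mem_powerset]; exact (Finset.erase_subset _ _).trans hB)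
    simp only [Ψ] at h1
    have hc : ((B.erase a).card : ℝ) = B.card - 1 := by
      rw [Finset.card_erase_of_mem ha, Nat.cast_sub (Finset.card_pos.2 ⟨a, ha⟩)]; simp
    rw [hc] at h1
    have h2 : ((A.filter fun c => (rep B A (a * c) : ℝ) ≤ δ).card : ℝ) ≤
        ∑ x ∈ A * A, (min (rep B A x : ℝ) δ - min (rep (B.erase a) A x : ℝ) δ) := by
      have e : ((A.filter fun c => (rep B A (a * c) : ℝ) ≤ δ).card : ℝ) =
         ∑ x ∈ (A.filter fun c => (rep B A (a * c) : ℝ) ≤ δ).image (fun c => a * c), 1 := by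
        rw [Finset.sum_const, Finset.card_image_of_injective _ (mul_right_injective a)]; simp
      rw [e]
      calc _ ≤ ∑ x ∈ (A.filter fun c => (rep B A (a * c) : ℝ) ≤ δ).image (fun c => a * c), 
              (min (rep B A x : ℝ) δ - min (rep (B.erase a) A x : ℝ) δ) := by
            refine Finset.sum_le_sum fun x hx => ?_
            rw [Finset.mem_image] at hx
            obtain ⟨c, hc, rfl⟩ := hx
            rw [Finset.mem_filter] at hc
            have := rep_erase B A a ha (a * c)
            rw [if_pos (by simpa using hc.1)] at this
            have h3 : (rep B A (a*c) : ℝ) = rep (B.erase a) A (a*c) + 1 := by exact_mod_cast this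
            rw [min_eq_left hc.2, h3]
            have := min_le_left (rep (B.erase a) A (a*c) : ℝ) δ
            linarith
        _ ≤ _ := by
            refine Finset.sum_le_sum_of_subset_of_nonneg ?_ ?_
            · intro x hx
              rw [Finset.mem_image] at hx
              obtain ⟨c, hc, rfl⟩ := hx
              exact Finset.mul_mem_mul (hB ha) (Finset.mem_filter.1 hc).1
            · intro x _ _
              rw [sub_nonneg]
              apply min_le_min_right
              have := rep_erase B A a ha x
              exact_mod_cast this ▸ Nat.le_add_right _ _
    rw [Finset.sum_sub_distrib] at h2
    linarith

theorem cs_fiber {α β : Type*} [DecidableEq α] [DecidableEq β] (s : Finset α) (t : Finset β) (f : α → β) (h : ∀ a ∈ s, f a ∈ t) :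
    s.card ^ 2 ≤ t.card * ((s ×ˢ s).filter fun q => f q.1 = f q.2).card := by
  have h1 : s.card = ∑ y ∈ t, (s.filter fun a => f a = y).card := Finset.card_eq_sum_card_fiberwise h
  have h2 : ((s ×ˢ s).filter fun q => f q.1 = f q.2).card = ∑ y ∈ t, (s.filter fun a => f a = y).card ^ 2 := by
    rw [Finset.card_eq_sum_card_fiberwise (f := fun q => f q.1) (t := t)]
    · refine Finset.sum_congr rfl fun y _ => ?_
      rw [pow_two, ← Finset.card_product]
      congr 1
      ext ⟨a, b⟩
      simp only [mem_filter, mem_product]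
      constructor
      · rintro ⟨⟨⟨h1, h2⟩, h3⟩, h4⟩; exact ⟨⟨h1, h4⟩, h2, h3 ▸ h4⟩
      · rintro ⟨⟨h1, h2⟩, h3, h4⟩; exact ⟨⟨⟨h1, h3⟩, by rw [h2, h4]⟩, h2⟩
    · intro q hq
      rw [Finset.mem_coe, Finset.mem_filter, Finset.mem_product] at hq
      exact h _ hq.1.1
  rw [h2, h1]
  exact sq_sum_le_card_mul_sum_sq

/-- cross energies -/
theorem cross (A V D : Finset G) :
    (∑ v ∈ V, ((A ×ˢ A).filter fun q => v * q.1 / q.2 ∈ D).card) ^ 2 ≤ EU A V * EU A D := by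
  refine le_trans (Nat.pow_le_pow_left (m := ∑ x, rep A V x * rep A D x) ?_ 2) (Finset.sum_mul_sq_le_sq_mul_sq _ _ _)
  rw [← Finset.card_sigma]
  simp only [rep, ← Finset.card_product]
  rw [← Finset.card_sigma]
  refine Finset.card_le_card_of_injOn (fun z => ⟨z.1 * z.2.1, ((z.2.1, z.1), (z.2.2, z.1 * z.2.1 / z.2.2))⟩) ?_ ?_
  · rintro ⟨v, c, e⟩ h
    simp only [coe_sigma, Set.mem_sigma_iff, mem_coe, mem_filter, mem_product, mem_univ, true_and] at h ⊢
    refine ⟨⟨⟨h.2.1.1, h.1⟩, mul_comm _ _⟩, ⟨h.2.1.2, h.2.2⟩, by simp⟩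
  · rintro ⟨v, c, e⟩ _ ⟨v', c', e'⟩ _ h
    simp only [Sigma.mk.injEq, heq_eq_eq, Prod.mk.injEq] at h
    obtain ⟨_, ⟨rfl, rfl⟩, rfl, _⟩ := h
    rfl
end grp
end PP

namespace PP

theorem num1 (b t x X e1 e2 l d H : ℝ) (hb : 0 ≤ b) (hx : 0 ≤ x) (ht : 0 ≤ t) (hX : 0 ≤ X) (h1 : 0 ≤ e1) (h2 : 0 ≤ e2) (hl : 0 ≤ l) (hd : 0 ≤ d)
    (c1 : X^2 ≤ e1 * e2) (c2 : e1^2 ≤ b * l^3) (c3 : e2^2 ≤ b * d^3) (c4 : x^4 * l^3 ≤ H) (hH : H = t^4 * d^3) :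
    x * t * X ≤ Real.sqrt (b * H) := by
  have hH0 : 0 ≤ H := by rw [hH]; positivity
  apply Real.le_sqrt_of_sq_le
  apply (abs_le_of_sq_le_sq' (b := b * H) ?_ (by positivity)).2
  calc ((x * t * X)^2)^2 = x^4 * t^4 * (X^2)^2 := by ring
    _ ≤ x^4 * t^4 * (e1 * e2)^2 := by gcongr
    _ = x^4 * t^4 * (e1^2 * e2^2) := by ring
    _ ≤ x^4 * t^4 * ((b * l^3) * (b * d^3)) := by gcongr
    _ = b^2 * H * (x^4 * l^3) := by rw [hH]; ring
    _ ≤ b^2 * H * H := by gcongr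
    _ = _ := by ring

theorem num2 (n Q δ M τ d b H K E X Tri co W : ℝ) (hn0 : 0 < n) (hQ0 : 0 < Q) (hM0 : 0 < M) (hτ0 : 0 < τ) (hb : 0 ≤ b) 
    (hd : 0 ≤ d) (hK : 0 ≤ K) (hE : 0 ≤ E) (hX : 0 ≤ X) (hTri : 0 ≤ Tri) (hco : 0 ≤ co) (hW : 0 ≤ W) (hδ : δ = n^2 / (8 * Q)) (hH : H = τ^4 * d^3) 
    (hTric : M * n / 2 ≤ Tri) (hcs' : Tri^2 ≤ X * co) (hcol' : co^2 ≤ E * (2 * τ * M)) (hXW : X * δ^2 ≤ W)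
    (hWτ : W * τ ≤ 2 * (K+1) * Real.sqrt (b * H)) (hM1 : τ * d ≤ M) :
    n^12 ≤ 524288 * (K + 1)^2 * b * Q^4 * E := by
  have hδ0 : 0 < δ := by rw [hδ]; positivity
  have hH0 : 0 ≤ H := by rw [hH]; positivity
  have hfin : M^3 * (n^4 * δ^4) * (M * τ^2) ≤ (128 * (K+1)^2 * b * E * M^3) * (M * τ^2) := by
    have s1 : (M * n / 2)^4 ≤ X^2 * (E * (2 * τ * M)) := by
      calc (M * n / 2)^4 = ((M * n / 2)^2)^2 := by ring
        _ ≤ (Tri^2)^2 := by gcongr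
        _ ≤ (X * co : ℝ)^2 := by gcongr
        _ = X^2 * co^2 := by ring
        _ ≤ _ := by gcongr
    have s2 : (W * τ)^2 ≤ 4 * (K+1)^2 * (b * H) := by
      calc (W * τ)^2 ≤ (2 * (K+1) * Real.sqrt (b * H))^2 := by gcongr
        _ = 4 * (K+1)^2 * (Real.sqrt (b * H))^2 := by ring
        _ = _ := by rw [Real.sq_sqrt (by positivity)]
    calc M^3 * (n^4 * δ^4) * (M * τ^2) = 16 * ((M * n / 2)^4 * δ^4 * τ^2) := by ring
      _ ≤ 16 * ((X^2 * (E * (2 * τ * M))) * δ^4 * τ^2) := by gcongr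
      _ = 16 * (E * (2 * τ * M)) * ((X * δ^2)^2 * τ^2) := by ring
      _ ≤ 16 * (E * (2 * τ * M)) * (W^2 * τ^2) := by gcongr
      _ = 16 * (E * (2 * τ * M)) * ((W * τ)^2) := by ring
      _ ≤ 16 * (E * (2 * τ * M)) * (4 * (K+1)^2 * (b * H)) := by gcongr
      _ = 128 * (K+1)^2 * b * E * (τ * d)^3 * (M * τ^2) := by rw [hH]; ring
      _ ≤ 128 * (K+1)^2 * b * E * M^3 * (M * τ^2) := by gcongr
  have f1 := le_of_mul_le_mul_right hfin (by positivity)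
  have f2 : n^4 * δ^4 ≤ 128 * (K+1)^2 * b * E := by
    have : M^3 * (n^4 * δ^4) ≤ M^3 * (128 * (K+1)^2 * b * E) := by linarith
    exact le_of_mul_le_mul_left this (by positivity)
  have f3 : n^12 = 4096 * Q^4 * (n^4 * δ^4) := by rw [hδ]; field_simp; ring
  rw [f3]
  calc 4096 * Q^4 * (n^4 * δ^4) ≤ 4096 * Q^4 * (128 * (K+1)^2 * b * E) := by gcongr
    _ = _ := by ring

section grp
variable {G : Type*} [CommGroup G] [DecidableEq G] [Fintype G]

theorem collisions (A B D : Finset G) (hBA : B ⊆ A) (τ : ℕ) (hτ : ∀ d ∈ D, R B d ≤ 2 * τ) (Tri : Finset (G × G × G))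
    (hTri : ∀ t ∈ Tri, t.1 ∈ B ∧ t.2.1 ∈ B ∧ t.2.2 ∈ A ∧ t.1 / t.2.1 ∈ D) :
    (((Tri ×ˢ Tri).filter fun q => (q.1.1 * q.1.2.2, q.1.2.1 * q.1.2.2) = (q.2.1 * q.2.2.2, q.2.2.1 * q.2.2.2)).card)^2 
      ≤ E4 A * (2 * τ * ∑ d ∈ D, R B d) := by
  set qs : G → Finset (G × G) := fun u => (B ×ˢ B).filter fun z => u * z.1 ∈ B ∧ u * z.2 ∈ B ∧ z.1 / z.2 ∈ D with hqs
  have h1 : ((Tri ×ˢ Tri).filter fun q => (q.1.1 * q.1.2.2, q.1.2.1 * q.1.2.2) = (q.2.1 * q.2.2.2, q.2.2.1 * q.2.2.2)).card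
      ≤ ∑ u, R A u * (qs u).card := by
    simp only [R, ← Finset.card_product]
    rw [← Finset.card_sigma]
    refine Finset.card_le_card_of_injOn (fun z => ⟨z.2.1 / z.1.1, ((z.1.2.2, z.2.2.2), (z.1.1, z.1.2.1))⟩) ?_ ?_
    · rintro ⟨⟨a, b, c⟩, ⟨a', b', c'⟩⟩ h
      simp only [coe_sigma, Set.mem_sigma_iff, mem_coe, mem_filter, mem_product, mem_univ, true_and, Prod.mk.injEq, hqs] at h ⊢
      obtain ⟨⟨h1, h2⟩, h3, h4⟩ := h
      obtain ⟨a1, a2, a3, a4⟩ := hTri _ h1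
      obtain ⟨b1, b2, b3, b4⟩ := hTri _ h2
      have e1 : c = a' / a * c' := by
        rw [div_mul_eq_mul_div, ← h3, mul_div_cancel_left]
      have e2 : a' / a * b = b' := by
        rw [e1] at h4
        apply mul_right_cancel (b := c')
        rw [← h4, mul_left_comm, mul_assoc]
      refine ⟨⟨⟨a3, b3⟩, e1⟩, ⟨a1, a2⟩, by simpa using b1, by rw [e2]; exact b2, a4⟩
    · rintro ⟨⟨a, b, c⟩, ⟨a', b', c'⟩⟩ h ⟨⟨x, y, z⟩, ⟨x', y', z'⟩⟩ hh H
      simp only [mem_coe, mem_filter, mem_product, Prod.mk.injEq] at h hh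
      simp only [Sigma.mk.injEq, heq_eq_eq, Prod.mk.injEq] at H
      obtain ⟨H1, ⟨rfl, rfl⟩, rfl, rfl⟩ := H
      have : a' = x' := by simpa using H1
      subst this
      have : b' = y' := mul_right_cancel (h.2.2.symm.trans hh.2.2)
      subst this
      rfl
  have h2 : ∀ u, (qs u).card ≤ R A u ^ 2 := by
    intro u
    refine le_trans ?_ (Nat.pow_le_pow_left (R_mono hBA u) 2)
    rw [pow_two]
    simp only [R]
    rw [← Finset.card_product]
    refine Finset.card_le_card_of_injOn (fun z => ((u * z.1, z.1), (u * z.2, z.2))) ?_ ?_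
    · rintro ⟨a, b⟩ h
      simp only [mem_coe, mem_filter, mem_product, hqs] at h ⊢
      exact ⟨⟨⟨h.2.1, h.1.1⟩, trivial⟩, ⟨h.2.2.1, h.1.2⟩, trivial⟩
    · rintro ⟨a, b⟩ _ ⟨a', b'⟩ _ h
      simp only [Prod.mk.injEq] at h
      exact Prod.ext h.1.2 h.2.2
  have h3 : ∑ u, (qs u).card ≤ 2 * τ * ∑ d ∈ D, R B d := by
    have : ∑ u, (qs u).card ≤ ∑ d ∈ D, R B d * R B d := by
      simp only [R, ← Finset.card_product]
      rw [← Finset.card_sigma, ← Finset.card_sigma]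
      refine Finset.card_le_card_of_injOn (fun z => ⟨z.2.1 / z.2.2, ((z.2.1, z.2.2), (z.1 * z.2.1, z.1 * z.2.2))⟩) ?_ ?_
      · rintro ⟨u, a, b⟩ h
        simp only [coe_sigma, Set.mem_sigma_iff, mem_coe, mem_filter, mem_product, mem_univ, true_and, hqs] at h ⊢
        exact ⟨h.2.2.2, ⟨h.1, by simp⟩, ⟨h.2.1, h.2.2.1⟩, by rw [mul_left_comm]; simp⟩
      · rintro ⟨u, a, b⟩ _ ⟨u', a', b'⟩ _ h
        simp only [Sigma.mk.injEq, heq_eq_eq, Prod.mk.injEq] at h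
        obtain ⟨_, ⟨rfl, rfl⟩, h, _⟩ := h
        rw [mul_right_cancel h]
    refine this.trans ?_
    rw [Finset.mul_sum]
    exact Finset.sum_le_sum fun d hd => Nat.mul_le_mul_right _ (hτ d hd)
  have hR : ∀ x y z : ℕ, z ≤ x ^ 2 → (x^2 * z ≤ x^4) := by
    intro x y z h
    calc x^2 * z ≤ x^2 * x^2 := Nat.mul_le_mul_left _ h
      _ = _ := by ring
  -- Cauchy-Schwarz
  have cs : ((∑ u, R A u * (qs u).card : ℕ) : ℝ)^2 ≤ (∑ u, (R A u : ℝ)^2 * (qs u).card) * ∑ u, ((qs u).card : ℝ) := by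
    have := Finset.sum_mul_sq_le_sq_mul_sq (Finset.univ : Finset G) (fun u => (R A u : ℝ) * Real.sqrt (qs u).card) (fun u => Real.sqrt (qs u).card)
    simp only [mul_pow, Real.sq_sqrt (Nat.cast_nonneg _), mul_assoc, Real.mul_self_sqrt (Nat.cast_nonneg _)] at this
    push_cast
    exact this
  have cs' : (∑ u, R A u * (qs u).card)^2 ≤ (∑ u, R A u ^2 * (qs u).card) * ∑ u, (qs u).card := by exact_mod_cast cs
  calc _ ≤ (∑ u, R A u * (qs u).card)^2 := Nat.pow_le_pow_left h1 2
    _ ≤ _ := cs'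
    _ ≤ _ := by
      refine Nat.mul_le_mul ?_ h3
      exact Finset.sum_le_sum fun u _ => hR _ 0 _ (h2 u)

set_option maxHeartbeats 1000000 in
theorem group_lemma (A : Finset G) (hA : A.Nonempty) (b : ℝ) (hb0 : 0 ≤ b)
    (hb : ∀ U ⊆ A / A, (EU A U : ℝ)^2 ≤ b * (U.card : ℝ)^3) :
    (A.card : ℝ)^12 ≤ 524288 * (Nat.log 2 A.card + 1 : ℝ)^2 * b * ((A * A).card : ℝ)^4 * E4 A := by
  set n : ℝ := (A.card : ℝ) with hn
  set Q : ℝ := ((A * A).card : ℝ) with hQ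
  have hn0 : 0 < n := by rw [hn]; exact_mod_cast hA.card_pos
  have hQ0 : 0 < Q := by rw [hQ]; exact_mod_cast (hA.mul hA).card_pos
  set δ := n^2 / (8 * Q) with hδ
  have hδ0 : 0 < δ := by positivity
  obtain ⟨B, hBA, hBne, hB⟩ := step1 A hA δ hδ0.le (by rw [hδ]; field_simp; exact le_refl _)
  set P := (A * A).filter fun x => δ < (rep B A x : ℝ) with hP
  set K := Nat.log 2 A.card with hK
  set lev : ℕ → Finset G := fun i => univ.filter fun d => R B d ≠ 0 ∧ Nat.log 2 (R B d) = i with hlev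
  have hlevA : ∀ i, lev i ⊆ A / A := by
    intro i d hd
    simp only [hlev, mem_filter, mem_univ, true_and] at hd
    obtain ⟨q, hq⟩ := Finset.card_pos.1 (Nat.pos_of_ne_zero hd.1)
    rw [Finset.mem_filter, Finset.mem_product] at hq
    rw [Finset.mem_div]
    exact ⟨q.1, hBA hq.1.1, q.2, hBA hq.1.2, by rw [hq.2]; simp⟩
  have hlev1 : ∀ i, ∀ d ∈ lev i, 2^i ≤ R B d ∧ R B d ≤ 2 * 2^i := by
    intro i d hd
    simp only [hlev, mem_filter, mem_univ, true_and] at hd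
    rw [← hd.2]
    refine ⟨Nat.pow_log_le_self 2 hd.1, ?_⟩
    rw [← pow_succ']
    exact (Nat.lt_pow_succ_log_self (by norm_num) _).le
  obtain ⟨i, hi, hmax⟩ := Finset.exists_max_image (range (K+1)) (fun i => (2^i)^4 * (lev i).card ^ 3) ⟨0, by simp⟩
  set D := lev i with hD
  set τ := 2^i with hτ
  set M := ∑ d ∈ D, R B d with hM
  have hDpos : 0 < D.card := by
    by_contra h
    have hD0 : D.card = 0 := by omega
    obtain ⟨a, ha⟩ := hBne
    have h1 : R B 1 ≠ 0 := by
      apply Nat.ne_of_gt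
      apply Finset.card_pos.2
      exact ⟨(a, a), by simp [ha]⟩
    have h2 := hmax (Nat.log 2 (R B 1)) (by
      rw [Finset.mem_range, Nat.lt_succ_iff]
      exact Nat.log_mono_right ((R_le _ _).trans (Finset.card_le_card hBA)))
    rw [hD0] at h2
    simp only [ne_eq, OfNat.ofNat_ne_zero, not_false_eq_true, zero_pow, mul_zero, nonpos_iff_eq_zero, mul_eq_zero, pow_eq_zero_iff, false_or, Finset.card_eq_zero] at h2
    rcases h2 with h2 | h2
    · exact absurd h2 (by simp)
    · have : (1:G) ∈ lev (Nat.log 2 (R B 1)) := by simp [hlev, h1]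
      rw [h2] at this; simp at this
  have hMτ : τ * D.card ≤ M := by
    rw [hM, mul_comm, ← smul_eq_mul]
    exact Finset.card_nsmul_le_sum _ _ _ fun d hd => (hlev1 i d hd).1
  set Tri : Finset (G × G × G) := (B ×ˢ B ×ˢ A).filter fun t => t.1 / t.2.1 ∈ D ∧ t.1 * t.2.2 ∈ P ∧ t.2.1 * t.2.2 ∈ P with hTri
  have hTric : (M:ℝ) * n / 2 ≤ Tri.card := by
    have h1 : ∑ q ∈ (B ×ˢ B).filter (fun q => q.1 / q.2 ∈ D), (A.filter fun c => q.1 * c ∈ P ∧ q.2 * c ∈ P).card ≤ Tri.card := by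
      rw [← Finset.card_sigma]
      refine Finset.card_le_card_of_injOn (fun z => (z.1.1, z.1.2, z.2)) ?_ ?_
      · rintro ⟨⟨a, b⟩, c⟩ h
        simp only [coe_sigma, Set.mem_sigma_iff, mem_coe, mem_filter, mem_product, hTri] at h ⊢
        tauto
      · rintro ⟨⟨a, b⟩, c⟩ _ ⟨⟨a', b'⟩, c'⟩ _ h
        simp only [Prod.mk.injEq] at h
        obtain ⟨rfl, rfl, rfl⟩ := h
        rfl
    have h2 : ∀ q ∈ (B ×ˢ B).filter (fun q => q.1 / q.2 ∈ D), n / 2 ≤ ((A.filter fun c => q.1 * c ∈ P ∧ q.2 * c ∈ P).card : ℝ) := by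
      rintro ⟨a, b⟩ hq
      simp only [mem_filter, mem_product] at hq
      have e1 := hB a hq.1.1
      have e2 := hB b hq.1.2
      have : A ⊆ (A.filter fun c => a * c ∈ P ∧ b * c ∈ P) ∪ ((A.filter fun c => (rep B A (a * c) : ℝ) ≤ δ) ∪ (A.filter fun c => (rep B A (b * c) : ℝ) ≤ δ)) := by
        intro c hc
        simp only [mem_union, mem_filter, hc, true_and, hP, Finset.mul_mem_mul (hBA hq.1.1) hc, Finset.mul_mem_mul (hBA hq.1.2) hc]
        by_cases x1 : (rep B A (a * c) : ℝ) ≤ δ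
        · exact Or.inr (Or.inl x1)
        · by_cases x2 : (rep B A (b * c) : ℝ) ≤ δ
          · exact Or.inr (Or.inr x2)
          · exact Or.inl ⟨not_le.1 x1, not_le.1 x2⟩
      have h3 := (Finset.card_le_card this).trans ((Finset.card_union_le _ _).trans (Nat.add_le_add_left (Finset.card_union_le _ _) _))
      have h4 : n ≤ ((A.filter fun c => a * c ∈ P ∧ b * c ∈ P).card : ℝ) + (((A.filter fun c => (rep B A (a * c) : ℝ) ≤ δ).card : ℝ) + (A.filter fun c => (rep B A (b * c) : ℝ) ≤ δ).card) := by
        rw [hn]; exact_mod_cast h3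
      simp only
      linarith
    have h3 : M = ((B ×ˢ B).filter (fun q => q.1 / q.2 ∈ D)).card := by
      rw [hM, Finset.card_eq_sum_card_fiberwise (f := fun q => q.1 / q.2) (t := D)]
      · refine Finset.sum_congr rfl fun d hd => ?_
        rw [R, Finset.filter_filter]
        congr 1
        ext ⟨x, y⟩
        simp only [mem_filter, mem_product, div_eq_iff_eq_mul]
        constructor
        · rintro ⟨h, rfl⟩; exact ⟨h, by simpa using hd, rfl⟩
        · rintro ⟨h, _, h2⟩; exact ⟨h, h2⟩
      · intro q hq; simp only [mem_coe, mem_filter] at hq; exact hq.2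
    have h4 := Finset.card_nsmul_le_sum _ _ _ h2
    rw [← h3, nsmul_eq_mul] at h4
    have h5 : ((∑ q ∈ (B ×ˢ B).filter (fun q => q.1 / q.2 ∈ D), (A.filter fun c => q.1 * c ∈ P ∧ q.2 * c ∈ P).card : ℕ) : ℝ) ≤ Tri.card := by exact_mod_cast h1
    push_cast at h5
    linarith
  set X := (P ×ˢ P).filter fun z => z.1 / z.2 ∈ D with hX
  have hcs := cs_fiber Tri X (fun t => (t.1 * t.2.2, t.2.1 * t.2.2)) (by
    intro t ht
    simp only [hTri, mem_filter] at ht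
    simp only [hX, mem_filter, mem_product]
    exact ⟨ht.2.2, by simpa using ht.2.1⟩)
  have hcol := collisions A B D hBA τ (fun d hd => (hlev1 i d hd).2) Tri (by
    intro t ht
    simp only [hTri, mem_filter, mem_product] at ht
    tauto)
  rw [← hM] at hcol
  set Wset := ((B ×ˢ A) ×ˢ (B ×ˢ A)).filter fun q => q.1.1 * q.1.2 / (q.2.1 * q.2.2) ∈ D with hWset
  have hXW : (X.card : ℝ) * δ^2 ≤ Wset.card := by
    have h1 : ∑ z ∈ X, rep B A z.1 * rep B A z.2 ≤ Wset.card := by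
      simp only [rep, ← Finset.card_product]
      rw [← Finset.card_sigma]
      refine Finset.card_le_card_of_injOn (fun z => z.2) ?_ ?_
      · rintro ⟨⟨x, y⟩, ⟨⟨a, c⟩, ⟨b, e⟩⟩⟩ h
        simp only [coe_sigma, Set.mem_sigma_iff, mem_coe, mem_filter, mem_product, hX, hWset] at h ⊢
        refine ⟨⟨h.2.1.1, h.2.2.1⟩, ?_⟩
        rw [h.2.1.2, h.2.2.2]; exact h.1.2
      · rintro ⟨⟨x, y⟩, ⟨⟨a, c⟩, ⟨b, e⟩⟩⟩ h ⟨⟨x', y'⟩, ⟨⟨a', c'⟩, ⟨b', e'⟩⟩⟩ h' H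
        simp only [coe_sigma, Set.mem_sigma_iff, mem_coe, mem_filter, mem_product] at h h'
        simp only [Prod.mk.injEq] at H
        obtain ⟨⟨rfl, rfl⟩, rfl, rfl⟩ := H
        have e1 : x = x' := h.2.1.2.symm.trans h'.2.1.2
        have e2 : y = y' := h.2.2.2.symm.trans h'.2.2.2
        subst e1; subst e2; rfl
    have h2 : ∀ z ∈ X, δ^2 ≤ (rep B A z.1 : ℝ) * rep B A z.2 := by
      intro z hz
      simp only [hX, hP, mem_filter, mem_product] at hz
      rw [pow_two]
      exact mul_le_mul hz.1.1.2.le hz.1.2.2.le hδ0.le (Nat.cast_nonneg _)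
    have h3 := Finset.card_nsmul_le_sum _ _ _ h2
    rw [nsmul_eq_mul] at h3
    have h4 : ((∑ z ∈ X, rep B A z.1 * rep B A z.2 : ℕ):ℝ) ≤ Wset.card := by exact_mod_cast h1
    push_cast at h4
    linarith
  have hW1 : Wset.card ≤ ∑ j ∈ range (K+1), 2 * 2^j * ∑ v ∈ lev j, ((A ×ˢ A).filter fun q => v * q.1 / q.2 ∈ D).card := by
    have h1 : Wset.card ≤ ∑ v ∈ univ.filter (fun v => R B v ≠ 0), R B v * ((A ×ˢ A).filter fun q => v * q.1 / q.2 ∈ D).card := by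
      rw [Finset.sum_filter_of_ne (by intro v _ h h0; rw [h0, zero_mul] at h; exact h rfl)]
      simp only [R, ← Finset.card_product]
      rw [← Finset.card_sigma]
      refine Finset.card_le_card_of_injOn (fun z => ⟨z.1.1 / z.2.1, ((z.1.1, z.2.1), (z.1.2, z.2.2))⟩) ?_ ?_
      · rintro ⟨⟨a, c⟩, ⟨b, e⟩⟩ h
        simp only [coe_sigma, Set.mem_sigma_iff, mem_coe, mem_filter, mem_product, hWset, mem_univ, true_and] at h ⊢
        refine ⟨⟨⟨h.1.1.1, h.1.2.1⟩, by simp⟩, ⟨h.1.1.2, h.1.2.2⟩, ?_⟩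
        convert h.2 using 1
        rw [div_mul_eq_mul_div, div_div]
      · rintro ⟨⟨a, c⟩, ⟨b, e⟩⟩ _ ⟨⟨a', c'⟩, ⟨b', e'⟩⟩ _ h
        simp only [Sigma.mk.injEq, heq_eq_eq, Prod.mk.injEq] at h
        obtain ⟨_, ⟨rfl, rfl⟩, rfl, rfl⟩ := h
        rfl
    refine h1.trans ?_
    rw [← Finset.sum_fiberwise_of_maps_to (s := univ.filter (fun v => R B v ≠ 0)) (t := range (K+1)) (g := fun v => Nat.log 2 (R B v))]
    · refine Finset.sum_le_sum fun j _ => ?_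
      rw [Finset.filter_filter, Finset.mul_sum]
      exact Finset.sum_le_sum fun v hv => Nat.mul_le_mul_right _ (hlev1 j v hv).2
    · intro v _
      rw [Finset.mem_range, Nat.lt_succ_iff]
      exact Nat.log_mono_right ((R_le _ _).trans (Finset.card_le_card hBA))
  set H : ℝ := (τ:ℝ)^4 * (D.card:ℝ)^3 with hH
  have hH0 : 0 ≤ H := by positivity
  have hterm : ∀ j ∈ range (K+1), (2^j : ℝ) * τ * (∑ v ∈ lev j, ((A ×ˢ A).filter fun q => v * q.1 / q.2 ∈ D).card : ℕ) ≤ Real.sqrt (b * H) := by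
    intro j hj
    set Xj := ∑ v ∈ lev j, ((A ×ˢ A).filter fun q => v * q.1 / q.2 ∈ D).card with hXj
    have c1 : (Xj:ℝ)^2 ≤ EU A (lev j) * EU A D := by exact_mod_cast cross A (lev j) D
    have c2 := hb _ (hlevA j)
    have c3 := hb _ (hlevA i)
    have c4 : (2^j:ℝ)^4 * ((lev j).card:ℝ)^3 ≤ H := by rw [hH]; exact_mod_cast hmax j hj
    exact num1 b _ _ _ _ _ _ _ H hb0 (by positivity) (Nat.cast_nonneg _) (Nat.cast_nonneg _) (Nat.cast_nonneg _) (Nat.cast_nonneg _) (Nat.cast_nonneg _) (Nat.cast_nonneg _) c1 c2 c3 c4 hH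

  have hWτ : (Wset.card : ℝ) * τ ≤ 2 * (K+1) * Real.sqrt (b * H) := by
    have h1 : (Wset.card : ℝ) ≤ ∑ j ∈ range (K+1), 2 * 2^j * ((∑ v ∈ lev j, ((A ×ˢ A).filter fun q => v * q.1 / q.2 ∈ D).card : ℕ) : ℝ) := by
      exact_mod_cast hW1
    calc (Wset.card : ℝ) * τ ≤ (∑ j ∈ range (K+1), 2 * 2^j * ((∑ v ∈ lev j, ((A ×ˢ A).filter fun q => v * q.1 / q.2 ∈ D).card : ℕ) : ℝ)) * τ := by gcongr
      _ = ∑ j ∈ range (K+1), 2 * ((2^j : ℝ) * τ * (∑ v ∈ lev j, ((A ×ˢ A).filter fun q => v * q.1 / q.2 ∈ D).card : ℕ)) := by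
          rw [Finset.sum_mul]; exact Finset.sum_congr rfl fun j _ => by ring
      _ ≤ ∑ j ∈ range (K+1), 2 * Real.sqrt (b * H) := Finset.sum_le_sum fun j hj => by have := hterm j hj; linarith
      _ = _ := by rw [Finset.sum_const, nsmul_eq_mul, Finset.card_range]; push_cast; ring
  have hτ0 : (0:ℝ) < τ := by rw [hτ]; positivity
  have hM1 : (τ:ℝ) * D.card ≤ M := by exact_mod_cast hMτ
  have hM0 : (0:ℝ) < M := lt_of_lt_of_le (by have : (0:ℝ) < D.card := by exact_mod_cast hDpos
                                             positivity) hM1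
  set co := ((Tri ×ˢ Tri).filter fun q => (q.1.1 * q.1.2.2, q.1.2.1 * q.1.2.2) = (q.2.1 * q.2.2.2, q.2.2.1 * q.2.2.2)).card with hco
  have hcs' : (Tri.card:ℝ)^2 ≤ X.card * co := by exact_mod_cast hcs
  have hcol' : (co:ℝ)^2 ≤ E4 A * (2 * τ * M) := by exact_mod_cast hcol
  exact num2 n Q δ M τ D.card b H K (E4 A) X.card Tri.card co Wset.card hn0 hQ0 hM0 hτ0 hb0 (Nat.cast_nonneg _) (Nat.cast_nonneg _)
    (Nat.cast_nonneg _) (Nat.cast_nonneg _) (Nat.cast_nonneg _) (Nat.cast_nonneg _) (Nat.cast_nonneg _) hδ hH hTric hcs' hcol' hXW hWτ hM1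
end grp
end PP

namespace PP

/-- number of pairs (point, line) with given value -/
def jc {F : Type*} [Field F] [DecidableEq F] (Y : Finset F) (L : Finset (F × F)) (z : F) : ℕ :=
  ((Y ×ˢ L).filter fun q => q.2.1 * q.1 + q.2.2 = z).card

theorem J_eq {F : Type*} [Field F] [DecidableEq F] [Fintype F] (Y : Finset F) (L : Finset (F × F)) :
    J Y L = ∑ z, jc Y L z ^ 2 := by
  unfold J jc
  rw [Finset.card_eq_sum_card_fiberwise (f := fun q : (F × F × F) × (F × F × F) => q.1.2.1 * q.1.1 + q.1.2.2) (t := univ) (by intro _ _; simp)]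
  refine Finset.sum_congr rfl fun z _ => ?_
  rw [pow_two, ← Finset.card_product]
  congr 1
  ext ⟨⟨a, l⟩, ⟨a', l'⟩⟩
  simp only [mem_filter, mem_product]
  constructor
  · rintro ⟨⟨⟨h1, h2⟩, h3⟩, h4⟩; exact ⟨⟨h1, h4⟩, h2, h3 ▸ h4⟩
  · rintro ⟨⟨h1, h2⟩, h3, h4⟩; exact ⟨⟨⟨h1, h3⟩, by rw [h2, h4]⟩, h2⟩

theorem jc_cs {F : Type*} [Field F] [DecidableEq F] [Fintype F] (Y : Finset F) (L : Finset (F × F)) (Z : Finset F) :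
    (∑ z ∈ Z, jc Y L z)^2 ≤ Z.card * J Y L := by
  rw [J_eq]
  refine sq_sum_le_card_mul_sum_sq.trans (Nat.mul_le_mul_left _ ?_)
  exact Finset.sum_le_sum_of_subset (subset_univ _)

section setting
variable {p : ℕ} [Fact p.Prime]

/-- values of f -/
def Sset (A : Finset (ZMod p)ˣ) (g h : (ZMod p)ˣ → (ZMod p)ˣ) : Finset (ZMod p) :=
  Finset.image₂ (fun x y : (ZMod p)ˣ => (g x : ZMod p) * (h x + y)) A A
/-- lines for fourth energy -/
def L1 (A D : Finset (ZMod p)ˣ) (g h : (ZMod p)ˣ → (ZMod p)ˣ) : Finset (ZMod p × ZMod p) :=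
  (A ×ˢ D).image fun z => ((g z.1 : ZMod p) * z.2, (g z.1 : ZMod p) * h z.1)
/-- lines for second energy -/
def L2 (A U : Finset (ZMod p)ˣ) (g h : (ZMod p)ˣ → (ZMod p)ˣ) : Finset (ZMod p × ZMod p) :=
  (A ×ˢ U).image fun z => (((z.2 / g z.1 : (ZMod p)ˣ) : ZMod p), -((h z.1 : ZMod p) * z.2))
/-- underlying elements -/
def val (A : Finset (ZMod p)ˣ) : Finset (ZMod p) := A.image fun a : (ZMod p)ˣ => (a : ZMod p)

variable (A : Finset (ZMod p)ˣ) (g h : (ZMod p)ˣ → (ZMod p)ˣ)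

theorem card_val : (val A).card = A.card := Finset.card_image_of_injective _ Units.val_injective

theorem n_le_S (hA : A.Nonempty) : A.card ≤ (Sset A g h).card := by
  obtain ⟨x, hx⟩ := hA
  refine Finset.card_le_card_of_injOn (fun y => (g x : ZMod p) * (h x + y)) ?_ ?_
  · intro y hy; exact Finset.mem_image₂_of_mem hx hy
  · intro y _ y' _ hh
    have := mul_left_cancel₀ (Units.ne_zero (g x)) hh
    exact Units.ext (add_left_cancel this)

theorem L1_card (D : Finset (ZMod p)ˣ) : (L1 A D g h).card ≤ A.card * D.card := by
  refine Finset.card_image_le.trans ?_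
  rw [Finset.card_product]

theorem L2_card (D : Finset (ZMod p)ˣ) : (L2 A D g h).card ≤ A.card * D.card := by
  refine Finset.card_image_le.trans ?_
  rw [Finset.card_product]

theorem fib_bound (m : ℕ) (hm : ∀ t, (univ.filter fun x => g x * h x = t).card ≤ m) {α : Type*} [DecidableEq α] (s : Finset α) (e : α → (ZMod p)ˣ) (he : Set.InjOn e s) (t : (ZMod p)ˣ)
    (hs : ∀ a ∈ s, g (e a) * h (e a) = t) : s.card ≤ m := by
  refine le_trans ?_ (hm t)
  refine Finset.card_le_card_of_injOn e ?_ he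
  intro a ha
  simpa using hs a ha

theorem L1_lines (m : ℕ) (hm : ∀ t, (univ.filter fun x => g x * h x = t).card ≤ m) (D : Finset (ZMod p)ˣ) (α β γ : ZMod p) (hab : α ≠ 0 ∨ β ≠ 0) :
    ((L1 A D g h).filter fun q => α * q.1 + β * q.2 = γ).card ≤ A.card + m * D.card := by
  by_cases hα : α = 0
  · have hβ : β ≠ 0 := by tauto
    refine le_trans ?_ (Nat.le_add_left _ _)
    -- q.2 fixed
    have h1 : ((L1 A D g h).filter fun q => α * q.1 + β * q.2 = γ).card ≤
        ((A ×ˢ D).filter fun z => β * ((g z.1 : ZMod p) * h z.1) = γ).card := by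
      refine le_trans (Finset.card_le_card ?_) (Finset.card_image_le (s := (A ×ˢ D).filter fun z => β * ((g z.1 : ZMod p) * h z.1) = γ)
        (f := fun z => ((g z.1 : ZMod p) * (z.2 : ZMod p), (g z.1 : ZMod p) * (h z.1 : ZMod p))))
      intro q hq
      rw [Finset.mem_filter, L1, Finset.mem_image] at hq
      obtain ⟨⟨z, hz, rfl⟩, hq⟩ := hq
      rw [hα] at hq
      exact Finset.mem_image_of_mem _ (Finset.mem_filter.2 ⟨hz, by simpa using hq⟩)
    refine h1.trans ?_
    have := Finset.card_le_mul_card_image_of_maps_to (f := fun z : (ZMod p)ˣ × (ZMod p)ˣ => z.2) 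
      (s := (A ×ˢ D).filter fun z => β * ((g z.1 : ZMod p) * h z.1) = γ) (t := D) (by
        intro z hz; simp only [mem_filter, mem_product] at hz; exact hz.1.2) m (by
        intro d _
        by_cases hne : (((A ×ˢ D).filter fun z => β * ((g z.1 : ZMod p) * h z.1) = γ).filter fun z => z.2 = d).Nonempty
        · obtain ⟨z0, hz0⟩ := hne
          refine fib_bound g h m hm _ (fun z => z.1) ?_ (g z0.1 * h z0.1) ?_
          · intro z hz z' hz' e
            simp only [mem_coe, mem_filter] at hz hz'
            exact Prod.ext e (hz.2.trans hz'.2.symm)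
          · intro z hz
            simp only [mem_filter] at hz hz0
            apply Units.ext
            push_cast
            exact mul_left_cancel₀ hβ (hz.1.2.trans hz0.1.2.symm)
        · rw [Finset.not_nonempty_iff_eq_empty] at hne
          rw [hne]; simp)
    exact this
  · refine le_trans ?_ (Nat.le_add_right _ _)
    refine le_trans ?_ (Finset.card_image_le (s := A) (f := fun x => (g x : ZMod p) * h x))
    refine Finset.card_le_card_of_injOn (fun q => q.2) ?_ ?_
    · intro q hq
      rw [Finset.mem_coe, Finset.mem_filter, L1, Finset.mem_image] at hq
      obtain ⟨⟨z, hz, rfl⟩, hq⟩ := hq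
      rw [Finset.mem_product] at hz
      exact Finset.mem_image_of_mem _ hz.1
    · intro q hq q' hq' e
      rw [Finset.mem_coe, Finset.mem_filter] at hq hq'
      simp only at e
      refine Prod.ext ?_ e
      have := hq.2.trans hq'.2.symm
      rw [e] at this
      exact mul_left_cancel₀ hα (add_right_cancel this)

theorem L2_lines (m : ℕ) (hm : ∀ t, (univ.filter fun x => g x * h x = t).card ≤ m) (U : Finset (ZMod p)ˣ) (α β γ : ZMod p) (hab : α ≠ 0 ∨ β ≠ 0) :
    ((L2 A U g h).filter fun q => α * q.1 + β * q.2 = γ).card ≤ A.card + m * U.card := by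
  have hform : ∀ q ∈ L2 A U g h, ∃ x ∈ A, ∃ u ∈ U, q.1 = (u : ZMod p) / g x ∧ q.2 = -(((g x : ZMod p) * h x) * q.1) ∧ q.1 ≠ 0 := by
    intro q hq
    rw [L2, Finset.mem_image] at hq
    obtain ⟨⟨x, u⟩, hz, rfl⟩ := hq
    rw [Finset.mem_product] at hz
    refine ⟨x, hz.1, u, hz.2, by simp [Units.val_div_eq_div_val], ?_, Units.ne_zero (u / g x)⟩
    have := Units.ne_zero (g x)
    simp only [Units.val_div_eq_div_val]
    field_simp
  by_cases hγ : γ = 0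
  · refine le_trans ?_ (Nat.le_add_left _ _)
    have h1 : ((L2 A U g h).filter fun q => α * q.1 + β * q.2 = γ).card ≤
        ((A ×ˢ U).filter fun z => α = β * ((g z.1 : ZMod p) * h z.1)).card := by
      refine le_trans (Finset.card_le_card ?_) (Finset.card_image_le (s := (A ×ˢ U).filter fun z => α = β * ((g z.1 : ZMod p) * h z.1))
        (f := fun z => (((z.2 / g z.1 : (ZMod p)ˣ) : ZMod p), -((h z.1 : ZMod p) * z.2))))
      intro q hq
      rw [Finset.mem_filter, L2, Finset.mem_image] at hq
      obtain ⟨⟨z, hz, rfl⟩, hq⟩ := hq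
      rw [hγ] at hq
      refine Finset.mem_image_of_mem _ (Finset.mem_filter.2 ⟨hz, ?_⟩)
      have h1 := Units.ne_zero (g z.1)
      have h2 := Units.ne_zero z.2
      simp only [Units.val_div_eq_div_val] at hq
      field_simp at hq
      have : (z.2 : ZMod p) * (α - β * ((g z.1 : ZMod p) * h z.1)) = 0 := by linear_combination hq
      exact sub_eq_zero.1 ((mul_eq_zero.1 this).resolve_left h2)
    refine h1.trans ?_
    have hβ : β ≠ 0 ∨ ((A ×ˢ U).filter fun z => α = β * ((g z.1 : ZMod p) * h z.1)) = ∅ := by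
      by_cases hβ : β = 0
      · right
        rw [Finset.filter_eq_empty_iff]
        intro z _ e
        rw [hβ, zero_mul] at e
        tauto
      · exact Or.inl hβ
    rcases hβ with hβ | hβ
    swap
    · rw [hβ]; simp
    have := Finset.card_le_mul_card_image_of_maps_to (f := fun z : (ZMod p)ˣ × (ZMod p)ˣ => z.2) 
      (s := (A ×ˢ U).filter fun z => α = β * ((g z.1 : ZMod p) * h z.1)) (t := U) (by
        intro z hz; simp only [mem_filter, mem_product] at hz; exact hz.1.2) m (by
        intro d _
        by_cases hne : (((A ×ˢ U).filter fun z => α = β * ((g z.1 : ZMod p) * h z.1)).filter fun z => z.2 = d).Nonempty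
        · obtain ⟨z0, hz0⟩ := hne
          refine fib_bound g h m hm _ (fun z => z.1) ?_ (g z0.1 * h z0.1) ?_
          · intro z hz z' hz' e
            simp only [mem_coe, mem_filter] at hz hz'
            exact Prod.ext e (hz.2.trans hz'.2.symm)
          · intro z hz
            simp only [mem_filter] at hz hz0
            apply Units.ext
            push_cast
            exact mul_left_cancel₀ hβ (hz.1.2.symm.trans hz0.1.2)
        · rw [Finset.not_nonempty_iff_eq_empty] at hne
          rw [hne]; simp)
    exact this
  · refine le_trans ?_ (Nat.le_add_right _ _)
    refine le_trans ?_ (Finset.card_image_le (s := A) (f := fun x => (g x : ZMod p) * h x))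
    refine Finset.card_le_card_of_injOn (fun q => -(q.2 / q.1)) ?_ ?_
    · intro q hq
      rw [Finset.mem_coe, Finset.mem_filter] at hq
      obtain ⟨x, hx, u, hu, e1, e2, e3⟩ := hform q hq.1
      rw [Finset.mem_coe, Finset.mem_image]
      refine ⟨x, hx, ?_⟩
      simp only
      rw [e2]; field_simp
    · intro q hq q' hq' e
      rw [Finset.mem_coe, Finset.mem_filter] at hq hq'
      obtain ⟨x, hx, u, hu, e1, e2, e3⟩ := hform q hq.1
      obtain ⟨x', hx', u', hu', e1', e2', e3'⟩ := hform q' hq'.1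
      simp only [neg_inj] at e
      have c1 : q.2 = q.2 / q.1 * q.1 := by field_simp
      have c2 : q'.2 = q.2 / q.1 * q'.1 := by rw [e]; field_simp
      have d1 := hq.2
      have d2 := hq'.2
      set r := q.2 / q.1
      rw [c1] at d1; rw [c2] at d2
      have d3 : (α + β * r) * q.1 = γ := by linear_combination d1
      have d4 : (α + β * r) * q'.1 = γ := by linear_combination d2
      have hne : α + β * r ≠ 0 := by intro h0; rw [h0, zero_mul] at d3; exact hγ d3.symm
      have e5 : q.1 = q'.1 := mul_left_cancel₀ hne (d3.trans d4.symm)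
      exact Prod.ext e5 (by rw [c1, c2, e5])

theorem level4 (m : ℕ) (hm : ∀ t, (univ.filter fun x => g x * h x = t).card ≤ m) (D : Finset (ZMod p)ˣ) (ρ : ℕ) (hD : ∀ d ∈ D, ρ ≤ R A d) :
    A.card * ρ * D.card ≤ m * ∑ z ∈ Sset A g h, jc (val A) (L1 A D g h) z := by
  set T := (A ×ˢ A ×ˢ D).filter fun t => t.2.2 * t.1 ∈ A with hT
  have h1 : A.card * ρ * D.card ≤ T.card := by
    have : ∑ z ∈ A ×ˢ D, R A z.2 ≤ T.card := by
      simp only [R]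
      rw [← Finset.card_sigma]
      refine Finset.card_le_card_of_injOn (fun z => (z.2.2, z.1.1, z.1.2)) ?_ ?_
      · rintro ⟨⟨x, d⟩, ⟨a, b⟩⟩ hz
        simp only [coe_sigma, Set.mem_sigma_iff, mem_coe, mem_filter, mem_product, hT] at hz ⊢
        exact ⟨⟨hz.2.1.2, hz.1⟩, hz.2.2 ▸ hz.2.1.1⟩
      · rintro ⟨⟨x, d⟩, ⟨a, b⟩⟩ hz ⟨⟨x', d'⟩, ⟨a', b'⟩⟩ hz' e
        simp only [coe_sigma, Set.mem_sigma_iff, mem_coe, mem_filter, mem_product] at hz hz'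
        simp only [Prod.mk.injEq] at e
        obtain ⟨rfl, rfl, rfl⟩ := e
        have := hz.2.2.trans hz'.2.2.symm
        subst this
        rfl
    refine le_trans ?_ this
    have h2 := Finset.card_nsmul_le_sum (A ×ˢ D) (fun z => R A z.2) ρ (by
      intro z hz; exact hD _ (Finset.mem_product.1 hz).2)
    rw [Finset.card_product, smul_eq_mul] at h2
    calc _ = A.card * D.card * ρ := by ring
      _ ≤ _ := h2
  refine h1.trans ?_
  rw [show ∑ z ∈ Sset A g h, jc (val A) (L1 A D g h) z = (((val A) ×ˢ (L1 A D g h)).filter fun q => q.2.1 * q.1 + q.2.2 ∈ Sset A g h).card from ?_]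
  · refine Finset.card_le_mul_card_image_of_maps_to (f := fun t : (ZMod p)ˣ × (ZMod p)ˣ × (ZMod p)ˣ => 
      ((t.1 : ZMod p), ((g t.2.1 : ZMod p) * t.2.2, (g t.2.1 : ZMod p) * h t.2.1))) ?_ m ?_
    · rintro ⟨b, x, d⟩ ht
      simp only [hT, mem_filter, mem_product] at ht
      simp only [mem_filter, mem_product]
      refine ⟨⟨Finset.mem_image_of_mem _ ht.1.1, Finset.mem_image.2 ⟨(x, d), Finset.mem_product.2 ht.1.2, rfl⟩⟩, ?_⟩
      rw [Sset, Finset.mem_image₂]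
      exact ⟨x, ht.1.2.1, d * b, ht.2, by push_cast; ring⟩
    · rintro ⟨b0, l0⟩ _
      by_cases hne : (T.filter fun t => ((t.1 : ZMod p), ((g t.2.1 : ZMod p) * t.2.2, (g t.2.1 : ZMod p) * h t.2.1)) = (b0, l0)).Nonempty
      · obtain ⟨z0, hz0⟩ := hne
        refine fib_bound g h m hm _ (fun z => z.2.1) ?_ (g z0.2.1 * h z0.2.1) ?_
        · rintro ⟨b, x, d⟩ hz ⟨b', x', d'⟩ hz' e
          simp only [mem_coe, mem_filter] at hz hz' e
          have := hz.2.trans hz'.2.symm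
          simp only [Prod.mk.injEq] at this
          subst e
          have e1 : b = b' := Units.ext this.1
          have e2 : d = d' := Units.ext (mul_left_cancel₀ (Units.ne_zero _) this.2.1)
          rw [e1, e2]
        · intro z hz
          simp only [mem_filter] at hz hz0
          have := hz.2.trans hz0.2.symm
          simp only [Prod.mk.injEq] at this
          exact Units.ext (by push_cast; exact this.2.2)
      · rw [Finset.not_nonempty_iff_eq_empty] at hne
        rw [hne]; simp
  · rw [Finset.card_eq_sum_card_fiberwise (f := fun q => q.2.1 * q.1 + q.2.2) (t := Sset A g h)]
    · refine Finset.sum_congr rfl fun z hz => ?_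
      rw [jc, Finset.filter_filter]
      congr 1
      ext q
      simp only [mem_filter]
      constructor
      · rintro ⟨h1, h2⟩; exact ⟨h1, h2 ▸ hz, h2⟩
      · rintro ⟨h1, _, h2⟩; exact ⟨h1, h2⟩
    · intro q hq; simp only [mem_coe, mem_filter] at hq; exact hq.2

theorem rep_bound (m : ℕ) (hm : ∀ t, (univ.filter fun x => g x * h x = t).card ≤ m) (U : Finset (ZMod p)ˣ) (z : (ZMod p)ˣ) :
    A.card * rep A U z ≤ m * jc (Sset A g h) (L2 A U g h) z := by
  rw [rep, ← Finset.card_product]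
  unfold jc
  refine Finset.card_le_mul_card_image_of_maps_to (f := fun t : (ZMod p)ˣ × ((ZMod p)ˣ × (ZMod p)ˣ) => 
      ((g t.1 : ZMod p) * (h t.1 + t.2.1), (((t.2.2 / g t.1 : (ZMod p)ˣ) : ZMod p), -((h t.1 : ZMod p) * t.2.2)))) ?_ m ?_
  · rintro ⟨x, a, u⟩ ht
    simp only [mem_filter, mem_product] at ht
    simp only [mem_filter, mem_product]
    refine ⟨⟨Finset.mem_image₂_of_mem ht.1 ht.2.1.1, Finset.mem_image.2 ⟨(x, u), Finset.mem_product.2 ⟨ht.1, ht.2.1.2⟩, rfl⟩⟩, ?_⟩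
    rw [← ht.2.2]
    have := Units.ne_zero (g x)
    simp only [Units.val_div_eq_div_val, Units.val_mul]
    field_simp
    ring
  · rintro ⟨b0, l0⟩ _
    by_cases hne : ((A ×ˢ ((A ×ˢ U).filter fun q => q.1 * q.2 = z)).filter fun t => 
      ((g t.1 : ZMod p) * (h t.1 + t.2.1), (((t.2.2 / g t.1 : (ZMod p)ˣ) : ZMod p), -((h t.1 : ZMod p) * t.2.2))) = (b0, l0)).Nonempty
    · obtain ⟨z0, hz0⟩ := hne
      refine fib_bound g h m hm _ (fun z => z.1) ?_ (g z0.1 * h z0.1) ?_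
      · rintro ⟨x, a, u⟩ hz ⟨x', a', u'⟩ hz' e
        simp only [mem_coe, mem_filter] at hz hz' e
        have := hz.2.trans hz'.2.symm
        simp only [Prod.mk.injEq] at this
        subst e
        have e1 : a = a' := Units.ext (add_left_cancel (mul_left_cancel₀ (Units.ne_zero _) this.1))
        have e2 : u = u' := by simpa using Units.ext this.2.1
        rw [e1, e2]
      · intro t ht
        simp only [mem_filter] at ht hz0
        have := ht.2.trans hz0.2.symm
        simp only [Prod.mk.injEq] at this
        obtain ⟨_, h1, h2⟩ := this
        have h1' : t.2.2 / g t.1 = z0.2.2 / g z0.1 := Units.ext h1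
        have h2' : h t.1 * t.2.2 = h z0.1 * z0.2.2 := Units.ext (by push_cast; exact neg_injective h2)
        have e1 : g t.1 * h t.1 = (h t.1 * t.2.2) / (t.2.2 / g t.1) := by rw [div_div_eq_mul_div, mul_right_comm, mul_div_cancel_right, mul_comm]
        have e2 : g z0.1 * h z0.1 = (h z0.1 * z0.2.2) / (z0.2.2 / g z0.1) := by rw [div_div_eq_mul_div, mul_right_comm, mul_div_cancel_right, mul_comm]
        rw [e1, e2, h1', h2']
    · rw [Finset.not_nonempty_iff_eq_empty] at hne
      rw [hne]; simp
end setting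
end PP

namespace PP

theorem dyadic {G : Type*} [Fintype G] [DecidableEq G] (f : G → ℕ) (n e : ℕ) (he : e ≠ 0) (hf : ∀ x, f x ≤ n) (B : ℝ)
    (hB : ∀ ρ : ℕ, 1 ≤ ρ → (ρ:ℝ)^e * ((univ.filter fun x => ρ ≤ f x).card : ℝ) ≤ B) :
    ((∑ x, f x ^ e : ℕ) : ℝ) ≤ 2^e * (Nat.log 2 n + 1 : ℕ) * B := by
  have h1 : ∑ x, f x ^ e = ∑ x ∈ univ.filter (fun x => f x ≠ 0), f x ^ e := by
    rw [Finset.sum_filter_of_ne]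
    intro x _ h h0
    rw [h0, zero_pow he] at h; exact h rfl
  rw [h1, ← Finset.sum_fiberwise_of_maps_to (t := range (Nat.log 2 n + 1)) (g := fun v => Nat.log 2 (f v))]
  · push_cast
    calc _ ≤ ∑ j ∈ range (Nat.log 2 n + 1), 2^e * B := by
          refine Finset.sum_le_sum fun j _ => ?_
          have h2 := hB (2^j) Nat.one_le_two_pow
          calc _ ≤ ∑ x ∈ (univ.filter (fun x => f x ≠ 0)).filter (fun v => Nat.log 2 (f v) = j), (2^e * ((2^j : ℕ):ℝ)^e) := by
                refine Finset.sum_le_sum fun x hx => ?_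
                rw [← mul_pow]
                refine pow_le_pow_left₀ (Nat.cast_nonneg _) ?_ _
                simp only [mem_filter, mem_univ, true_and] at hx
                have := (Nat.lt_pow_succ_log_self (b := 2) (by norm_num) (f x)).le
                rw [hx.2, pow_succ'] at this
                exact_mod_cast this
            _ = ((univ.filter (fun x => f x ≠ 0)).filter (fun v => Nat.log 2 (f v) = j)).card * (2^e * ((2^j : ℕ):ℝ)^e) := by
                rw [Finset.sum_const, nsmul_eq_mul]
            _ ≤ (univ.filter fun x => 2^j ≤ f x).card * (2^e * ((2^j : ℕ):ℝ)^e) := by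
                refine mul_le_mul_of_nonneg_right ?_ (by positivity)
                have : ((univ.filter (fun x => f x ≠ 0)).filter (fun v => Nat.log 2 (f v) = j)).card ≤ (univ.filter fun x => 2^j ≤ f x).card := by
                  apply Finset.card_le_card
                  intro x hx
                  simp only [mem_filter, mem_univ, true_and] at hx ⊢
                  rw [← hx.2]; exact Nat.pow_log_le_self 2 hx.1
                exact_mod_cast this
            _ = 2^e * (((2^j : ℕ):ℝ)^e * (univ.filter fun x => 2^j ≤ f x).card) := by ring
            _ ≤ 2^e * B := by refine mul_le_mul_of_nonneg_left h2 (by positivity)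
      _ = _ := by rw [Finset.sum_const, nsmul_eq_mul, Finset.card_range]; push_cast; ring
  · intro x _
    rw [Finset.mem_range, Nat.lt_succ_iff]
    exact Nat.log_mono_right (hf x)

theorem J_bound2 (p : ℕ) [Fact p.Prime] (Y : Finset (ZMod p)) (L : Finset (ZMod p × ZMod p)) (k : ℕ)
    (hY : Y.card ≤ k) (hL : ∀ α β γ : ZMod p, (α ≠ 0 ∨ β ≠ 0) → (L.filter fun q => α * q.1 + β * q.2 = γ).card ≤ k)
    (hN : 144 * (Y.card * L.card) < p ^ 2) (M : ℝ) (hM : 0 ≤ M) (hNM : (Y.card * L.card : ℝ) ≤ M^2) (c : ℕ) (hc : Y.card * L.card ≤ 2^c) :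
    (J Y L : ℝ) ≤ 129000 * M^3 + 2736 * k * c * M^2 := by
  rcases Nat.eq_zero_or_pos (Y.card * L.card) with h0 | h0
  · have : J Y L = 0 := by
      rw [J_eq]
      refine Finset.sum_eq_zero fun z _ => ?_
      have : jc Y L z = 0 := by
        unfold jc
        refine Nat.eq_zero_of_le_zero ((Finset.card_filter_le _ _).trans ?_)
        rw [Finset.card_product, h0]
      rw [this]; rfl
    rw [this]; push_cast; positivity
  · have h1 := J_bound p Y L k hY (fun α β γ hab => by convert hL α β γ hab) hN h0
    refine h1.trans ?_
    have h2 : Real.sqrt (Y.card * L.card : ℝ) ≤ M := by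
      rw [Real.sqrt_le_left hM]; exact hNM
    have h3 : (Nat.clog 2 (Y.card * L.card) : ℝ) ≤ c := by
      exact_mod_cast Nat.clog_le_of_le_pow hc
    set N : ℝ := (Y.card * L.card : ℝ)
    have hN0 : 0 ≤ N := by positivity
    calc _ ≤ 129000 * M^2 * M + 2736 * k * c * M^2 := by gcongr
      _ = _ := by ring

theorem second_moment (p : ℕ) [Fact p.Prime] (P : Finset (ZMod p × ZMod p)) (L : Finset (ZMod p × ZMod p)) :
    ((∑ l ∈ L, (P.filter fun q => l.1 * q.1 + l.2 = q.2).card : ℕ) - (L.card * P.card / p : ℝ))^2 ≤ L.card * (p * P.card) := by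
  set i : ZMod p × ZMod p → ℕ := fun l => (P.filter fun q => l.1 * q.1 + l.2 = q.2).card with hi
  have hp0 : (0:ℝ) < p := by exact_mod_cast (Fact.out : p.Prime).pos
  have s1 : ∑ l, i l = p * P.card := by
    simp only [hi]
    simp only [Finset.card_filter]
    rw [Finset.sum_comm]
    have : ∀ q ∈ P, ∑ l : ZMod p × ZMod p, (if l.1 * q.1 + l.2 = q.2 then 1 else 0) = p := by
      intro q _
      rw [Fintype.sum_prod_type]
      have : ∀ x : ZMod p, ∑ y : ZMod p, (if x * q.1 + y = q.2 then 1 else 0) = 1 := by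
        intro x
        rw [Finset.sum_eq_single (q.2 - x * q.1)]
        · simp
        · intro y _ hy; rw [if_neg]; intro h; apply hy; rw [← h]; ring
        · simp
      simp [this, ZMod.card]
    rw [Finset.sum_congr rfl this, Finset.sum_const, smul_eq_mul, mul_comm]
  have s2 : ∑ l, i l ^ 2 ≤ p * P.card + P.card ^ 2 := by
    have e : ∀ l, i l ^ 2 = ∑ q ∈ P, ∑ r ∈ P, (if l.1 * q.1 + l.2 = q.2 ∧ l.1 * r.1 + l.2 = r.2 then 1 else 0) := by
      intro l
      simp only [hi]
      rw [pow_two, Finset.card_filter, Finset.sum_mul_sum]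
      refine Finset.sum_congr rfl fun q _ => Finset.sum_congr rfl fun r _ => ?_
      by_cases h1 : l.1 * q.1 + l.2 = q.2 <;> by_cases h2 : l.1 * r.1 + l.2 = r.2 <;> simp [h1, h2]
    rw [Finset.sum_congr rfl fun l _ => e l, Finset.sum_comm]
    have e2 : ∀ q ∈ P, ∑ l : ZMod p × ZMod p, ∑ r ∈ P, (if l.1 * q.1 + l.2 = q.2 ∧ l.1 * r.1 + l.2 = r.2 then 1 else 0) ≤ p + P.card := by
      intro q hq
      rw [Finset.sum_comm]
      have e3 : ∀ r ∈ P, ∑ l : ZMod p × ZMod p, (if l.1 * q.1 + l.2 = q.2 ∧ l.1 * r.1 + l.2 = r.2 then 1 else 0) ≤ (if r = q then p else 0) + 1 := by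
        intro r _
        rw [← Finset.card_filter]
        split_ifs with h
        · subst h
          refine le_trans (Finset.card_le_card_of_injOn (t := univ) (fun l => l.1) (by intro _ _; simp) ?_) (by simp [ZMod.card])
          intro l hl l' hl' e
          simp only [mem_coe, mem_filter, mem_univ, true_and] at hl hl' e
          refine Prod.ext e ?_
          have := hl.1.trans hl'.1.symm
          rw [e] at this
          exact add_left_cancel this
        · rw [zero_add, Finset.card_le_one]
          intro l hl l' hl'
          simp only [mem_filter, mem_univ, true_and] at hl hl'
          have hne : q.1 ≠ r.1 := by
            intro e
            apply h
            refine Prod.ext e.symm ?_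
            rw [← hl.1, ← hl.2, e]
          have : (l.1 - l'.1) * (q.1 - r.1) = 0 := by linear_combination hl.1 - hl.2 - hl'.1 + hl'.2
          have e1 := sub_eq_zero.1 ((mul_eq_zero.1 this).resolve_right (sub_ne_zero.2 hne))
          refine Prod.ext e1 ?_
          have := hl.1.trans hl'.1.symm
          rw [e1] at this
          exact add_left_cancel this
      refine (Finset.sum_le_sum e3).trans ?_
      rw [Finset.sum_add_distrib, Finset.sum_ite_eq' P q]
      simp [hq]
    refine (Finset.sum_le_sum e2).trans ?_
    rw [Finset.sum_const, smul_eq_mul]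
    exact le_of_eq (by ring)
  have s1' : ∑ l, (i l : ℝ) = p * P.card := by exact_mod_cast s1
  have s2' : ∑ l, (i l : ℝ)^2 ≤ p * P.card + (P.card:ℝ)^2 := by exact_mod_cast s2
  have hcard : ((univ : Finset (ZMod p × ZMod p)).card : ℝ) = (p:ℝ)^2 := by
    rw [Finset.card_univ, Fintype.card_prod, ZMod.card]; push_cast; ring
  have var : ∑ l, ((i l : ℝ) - P.card / p)^2 ≤ p * P.card := by
    have : ∑ l, ((i l : ℝ) - P.card / p)^2 = ∑ l, (i l : ℝ)^2 - 2 * (P.card / p) * ∑ l, (i l : ℝ) + p^2 * (P.card / p)^2 := by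
      rw [← hcard, ← nsmul_eq_mul, ← Finset.sum_const, Finset.mul_sum, ← Finset.sum_sub_distrib, ← Finset.sum_add_distrib]
      exact Finset.sum_congr rfl fun l _ => by ring
    rw [this, s1']
    have e1 : 2 * ((P.card:ℝ) / p) * (p * P.card) = 2 * (P.card:ℝ)^2 := by field_simp
    have e2 : (p:ℝ)^2 * (P.card / p)^2 = (P.card:ℝ)^2 := by field_simp
    rw [e1, e2]; linarith
  have e : ((∑ l ∈ L, i l : ℕ) - (L.card * P.card / p : ℝ)) = ∑ l ∈ L, ((i l : ℝ) - P.card / p) := by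
    rw [Finset.sum_sub_distrib, Finset.sum_const, nsmul_eq_mul]; push_cast; ring
  rw [e]
  refine sq_sum_le_card_mul_sum_sq.trans ?_
  refine mul_le_mul_of_nonneg_left ?_ (Nat.cast_nonneg _)
  refine le_trans ?_ var
  exact Finset.sum_le_sum_of_subset_of_nonneg (subset_univ _) fun l _ _ => sq_nonneg _

theorem sum_R {G : Type*} [CommGroup G] [DecidableEq G] [Fintype G] (A : Finset G) : ∑ u, R A u = A.card ^ 2 := by
  rw [pow_two, ← Finset.card_product, Finset.card_eq_sum_card_fiberwise (f := fun q => q.1 / q.2) (t := univ) (by intro _ _; simp)]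
  refine Finset.sum_congr rfl fun u _ => ?_
  rw [R]
  congr 1
  ext q
  simp [div_eq_iff_eq_mul]

theorem sum_rep {G : Type*} [CommGroup G] [DecidableEq G] [Fintype G] (A U : Finset G) : ∑ u, rep A U u = A.card * U.card := by
  rw [← Finset.card_product, Finset.card_eq_sum_card_fiberwise (f := fun q => q.1 * q.2) (t := univ) (by intro _ _; simp)]
  rfl

theorem rep_le1 {G : Type*} [CommGroup G] [DecidableEq G] [Fintype G] (A U : Finset G) (u : G) : rep A U u ≤ A.card := by
  unfold rep
  refine Finset.card_le_card_of_injOn (fun q => q.1) ?_ ?_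
  · intro q hq; simp at hq ⊢; exact hq.1.1
  · intro q hq q' hq' h
    simp only [mem_coe, mem_filter] at hq hq' h
    refine Prod.ext h ?_
    have := hq.2.trans hq'.2.symm
    rw [h] at this
    exact mul_left_cancel this

theorem rep_le2 {G : Type*} [CommGroup G] [DecidableEq G] [Fintype G] (A U : Finset G) (u : G) : rep A U u ≤ U.card := by
  unfold rep
  refine Finset.card_le_card_of_injOn (fun q => q.2) ?_ ?_
  · intro q hq; simp at hq ⊢; exact hq.1.2
  · intro q hq q' hq' h
    simp only [mem_coe, mem_filter] at hq hq' h
    refine Prod.ext ?_ h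
    have := hq.2.trans hq'.2.symm
    rw [h] at this
    exact mul_right_cancel this

theorem EU_le {G : Type*} [CommGroup G] [DecidableEq G] [Fintype G] (A U : Finset G) : EU A U ≤ A.card * U.card ^ 2 := by
  unfold EU
  calc _ ≤ ∑ x, rep A U x * U.card := Finset.sum_le_sum fun x _ => by rw [pow_two]; exact Nat.mul_le_mul_left _ (rep_le2 A U x)
    _ = _ := by rw [← Finset.sum_mul, sum_rep]; ring

end PP

namespace PP

theorem numE1 (n r t m K S J : ℝ) (hn : 0 < n) (hr : 0 ≤ r) (ht : 1 ≤ t) (htn : t ≤ n) (hm : 1 ≤ m) (hK : 1 ≤ K) (hS : 0 ≤ S)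
    (hJ : J ≤ 129000 * (n*t)^3 + 2736 * (n + m * t^2) * (4*K) * (n*t)^2) (h : (n*r*t^2)^2 ≤ m^2 * (S * J)) :
    r^4 * t^2 ≤ 151000^2 * m^6 * K^2 * S^2 * n^2 := by
  have ht0 : 0 < t := by linarith
  have hk : n + m * t^2 ≤ 2 * m * (n*t) := by
    have a1 : n ≤ m * (n*t) := by nlinarith [mul_pos hn ht0, mul_nonneg hn.le (sub_nonneg.2 ht), mul_nonneg (sub_nonneg.2 hm) (mul_pos hn ht0).le]
    have a2 : m * t^2 ≤ m * (n * t) := by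
      apply mul_le_mul_of_nonneg_left _ (by linarith); nlinarith
    linarith
  have hmK : 1 ≤ m * K := by nlinarith
  have hJ2 : J ≤ 151000 * (m*K) * (n*t)^3 := by
    have b1 : 2736 * (n + m * t^2) * (4*K) * (n*t)^2 ≤ 2736 * (2 * m * (n*t)) * (4*K) * (n*t)^2 := by gcongr
    have b2 : (n*t)^3 ≤ (m*K) * (n*t)^3 := le_mul_of_one_le_left (by positivity) hmK
    have b3 : 0 ≤ (m*K) * (n*t)^3 := by positivity
    nlinarith
  have h2 : (n*r*t^2)^2 ≤ m^2 * (S * (151000 * (m*K) * (n*t)^3)) := h.trans (by gcongr)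
  have h3 : r^2 * t ≤ 151000 * m^3 * K * S * n := by
    have : (n^2*t^3) * (r^2 * t) ≤ (n^2*t^3) * (151000 * m^3 * K * S * n) := by
      calc _ = (n*r*t^2)^2 := by ring
        _ ≤ _ := h2
        _ = _ := by ring
    exact le_of_mul_le_mul_left this (by positivity)
  calc r^4*t^2 = (r^2*t)^2 := by ring
    _ ≤ (151000 * m^3 * K * S * n)^2 := by gcongr
    _ = _ := by ring

theorem numE2 (n r d p m K S : ℝ) (hn : 0 < n) (hr : 0 ≤ r) (hd : 0 ≤ d) (hm : 1 ≤ m) (hK : 1 ≤ K) (hS : n ≤ S) (hp : n^5 ≤ p^3) (hp0 : 0 < p)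
    (h1 : r * d ≤ n^2) (h2 : p^2 ≤ 144 * n^2 * d) : r^4 * d ≤ 151000^2 * m^6 * K^2 * S^2 * n^2 := by
  have a1 : r * p^2 ≤ 144 * n^4 := by
    calc r * p^2 ≤ r * (144 * n^2 * d) := by gcongr
      _ = 144 * n^2 * (r*d) := by ring
      _ ≤ 144 * n^2 * n^2 := by gcongr
      _ = _ := by ring
  have a2 : r^3 ≤ 144^3 * n^2 := by
    have : n^10 * r^3 ≤ n^10 * (144^3 * n^2) := by
      calc n^10 * r^3 = (n^5)^2 * r^3 := by ring
        _ ≤ (p^3)^2 * r^3 := by gcongr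
        _ = (r*p^2)^3 := by ring
        _ ≤ (144 * n^4)^3 := by gcongr
        _ = _ := by ring
    exact le_of_mul_le_mul_left this (by positivity)
  have a3 : 1 ≤ m^6 * K^2 := by
    have := one_le_pow₀ hm (n := 6)
    have := one_le_pow₀ hK (n := 2)
    nlinarith
  calc r^4 * d = r^3 * (r*d) := by ring
    _ ≤ (144^3 * n^2) * n^2 := by gcongr
    _ ≤ 151000^2 * (S^2 * n^2) := by
      have : n^2 ≤ S^2 := by gcongr
      have : n^2*n^2 ≤ S^2 *n^2:= by gcongr
      nlinarith
    _ ≤ 151000^2 * (m^6 * K^2 * (S^2 * n^2)) := by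
      apply mul_le_mul_of_nonneg_left _ (by norm_num)
      exact le_mul_of_one_le_left (by positivity) a3
    _ = _ := by ring

section setting
variable {p : ℕ} [Fact p.Prime] (A : Finset (ZMod p)ˣ) (g h : (ZMod p)ˣ → (ZMod p)ˣ)

theorem E4_bound (hA : A.Nonempty) (m : ℕ) (hm1 : 1 ≤ m) (hm : ∀ t, (univ.filter fun x => g x * h x = t).card ≤ m)
    (hp : A.card ^ 5 ≤ p ^ 3) :
    (E4 A : ℝ) ≤ 2^4 * (Nat.log 2 A.card + 1 : ℕ) * (151000^2 * (m:ℝ)^6 * (Nat.log 2 A.card + 1 : ℕ)^2 * ((Sset A g h).card:ℝ)^2 * (A.card:ℝ)^2) := by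
  have hp0 : 0 < p := (Fact.out : p.Prime).pos
  have hn0 : 0 < A.card := hA.card_pos
  have hnS := n_le_S A g h hA
  have hnlog : A.card ≤ 2^(Nat.log 2 A.card + 1) := (Nat.lt_pow_succ_log_self (by norm_num) _).le
  unfold E4
  refine dyadic (R A) A.card 4 (by norm_num) (R_le A) _ ?_
  intro r hr
  set D := univ.filter fun x => r ≤ R A x with hD
  set K := Nat.log 2 A.card + 1 with hK
  have hrD : r * D.card ≤ A.card ^ 2 := by
    rw [← sum_R, mul_comm, ← smul_eq_mul, ← Finset.sum_const]
    refine (Finset.sum_le_sum (g := R A) fun x hx => (Finset.mem_filter.1 hx).2).trans ?_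
    exact Finset.sum_le_sum_of_subset (subset_univ _)
  have hDn : D.card ≤ A.card ^ 2 := (Nat.le_mul_of_pos_left _ hr).trans hrD
  rcases Nat.eq_zero_or_pos D.card with hD0 | hD0
  · rw [hD0]; push_cast; rw [mul_zero]; positivity
  by_cases hc : 144 * (A.card ^ 2 * D.card) < p ^ 2
  · have hl := level4 A g h m hm D r (fun d hd => (Finset.mem_filter.1 hd).2)
    have hcs := jc_cs (val A) (L1 A D g h) (Sset A g h)
    have hN : (val A).card * (L1 A D g h).card ≤ A.card ^ 2 * D.card := by
      rw [card_val, pow_two, mul_assoc]; exact Nat.mul_le_mul_left _ (L1_card A g h D)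
    have hsq : ((Real.sqrt D.card))^2 = (D.card:ℝ) := Real.sq_sqrt (by positivity)
    have hJ := J_bound2 p (val A) (L1 A D g h) (A.card + m * D.card) (by rw [card_val]; omega)
      (L1_lines A g h m hm D) (lt_of_le_of_lt (Nat.mul_le_mul_left _ hN) hc) (A.card * Real.sqrt D.card) (by positivity)
      (by rw [mul_pow, hsq]; exact_mod_cast hN) (4 * K) (by
        calc _ ≤ A.card ^ 2 * D.card := hN
          _ ≤ A.card ^ 2 * A.card ^ 2 := Nat.mul_le_mul_left _ hDn
          _ = A.card ^ 4 := by ring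
          _ ≤ (2^K)^4 := Nat.pow_le_pow_left hnlog 4
          _ = _ := by rw [← pow_mul, mul_comm])
    have hfin : (A.card * r * D.card)^2 ≤ m^2 * ((Sset A g h).card * J (val A) (L1 A D g h)) := by
      calc _ ≤ (m * ∑ z ∈ Sset A g h, jc (val A) (L1 A D g h) z)^2 := Nat.pow_le_pow_left hl 2
        _ = m^2 * (∑ z ∈ Sset A g h, jc (val A) (L1 A D g h) z)^2 := by ring
        _ ≤ _ := Nat.mul_le_mul_left _ hcs
    have hfinR : ((A.card:ℝ) * r * (Real.sqrt D.card)^2)^2 ≤ (m:ℝ)^2 * ((Sset A g h).card * J (val A) (L1 A D g h)) := by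
      rw [hsq]; exact_mod_cast hfin
    have := numE1 A.card r (Real.sqrt D.card) m K (Sset A g h).card (J (val A) (L1 A D g h)) (by exact_mod_cast hn0) (by positivity)
      (by rw [Real.one_le_sqrt]; exact_mod_cast hD0) (by rw [Real.sqrt_le_left (by positivity)]; exact_mod_cast hDn)
      (by exact_mod_cast hm1) (by exact_mod_cast (by omega : 1 ≤ K)) (by positivity)
      (by rw [hsq]; push_cast at hJ; exact hJ) hfinR
    rw [hsq] at this
    exact this
  · refine numE2 A.card r D.card p m K (Sset A g h).card (by exact_mod_cast hn0) (by positivity) (by positivity) (by exact_mod_cast hm1) (by exact_mod_cast (by omega : 1 ≤ K)) (by exact_mod_cast hnS) (by exact_mod_cast hp) (by exact_mod_cast hp0) (by exact_mod_cast hrD) ?_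
    rw [not_lt] at hc
    rw [← mul_assoc] at hc
    exact_mod_cast hc
end setting
end PP

namespace PP

theorem numU1 (n U S M m K J e : ℝ) (hn : 1 ≤ n) (hU : 1 ≤ U) (hnS : n ≤ S) (hUn : U ≤ n^2) (hM : 0 ≤ M) (hM2 : M^2 = S*n*U) (hm : 1 ≤ m) (hK : 1 ≤ K)
    (he0 : 0 ≤ e) (hc : S ≤ n * U)
    (hJ : J ≤ 129000 * M^3 + 2736 * (S + n + m * U) * (5*K) * M^2) (h : n^2 * e ≤ m^2 * J) :
    e^2 * n ≤ 171000^2 * m^6 * K^2 * S^3 * U^3 := by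
  have hS0 : 0 < S := by linarith
  have hn0 : 0 < n := by linarith
  have hU0 : 0 < U := by linarith
  have s1 : S ≤ M := by
    refine (abs_le_of_sq_le_sq' ?_ hM).2
    rw [hM2]; nlinarith
  have s2 : n ≤ M := hnS.trans s1
  have s3 : U ≤ M := by
    refine (abs_le_of_sq_le_sq' ?_ hM).2
    rw [hM2]; 
    have : U ≤ S * n := by nlinarith
    nlinarith
  have hk : S + n + m * U ≤ 3 * m * M := by nlinarith [mul_le_mul_of_nonneg_left s3 (by linarith : 0 ≤ m)]
  have hmK : 1 ≤ m * K := by nlinarith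
  have hJ2 : J ≤ 171000 * (m*K) * M^3 := by
    have b1 : 2736 * (S + n + m * U) * (5*K) * M^2 ≤ 2736 * (3 * m * M) * (5*K) * M^2 := by gcongr
    have b2 : M^3 ≤ (m*K) * M^3 := le_mul_of_one_le_left (by positivity) hmK
    have b3 : 0 ≤ (m*K) * M^3 := by positivity
    nlinarith
  have h2 : n^2 * e ≤ 171000 * m^3 * K * M^3 := by
    calc n^2 * e ≤ _ := h
      _ ≤ m^2 * (171000 * (m*K) * M^3) := by gcongr
      _ = _ := by ring
  have h3 : n^3 * (e^2 * n) ≤ n^3 * (171000^2 * m^6 * K^2 * S^3 * U^3) := by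
    calc _ = (n^2 * e)^2 := by ring
      _ ≤ (171000 * m^3 * K * M^3)^2 := by gcongr
      _ = 171000^2 * m^6 * K^2 * (M^2)^3 := by ring
      _ = _ := by rw [hM2]; ring
  exact le_of_mul_le_mul_left h3 (by positivity)

theorem numU2 (n U S m K e : ℝ) (hn : 1 ≤ n) (hU : 1 ≤ U) (hm : 1 ≤ m) (hK : 1 ≤ K)
    (he0 : 0 ≤ e) (hc : n * U ≤ S) (h : e ≤ n * U^2) :
    e^2 * n ≤ 171000^2 * m^6 * K^2 * S^3 * U^3 := by
  have a3 : 1 ≤ 171000^2 * (m^6 * K^2) := by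
    have := one_le_pow₀ hm (n := 6)
    have := one_le_pow₀ hK (n := 2)
    nlinarith
  have hS0 : 0 ≤ S := by nlinarith
  calc e^2 * n ≤ (n*U^2)^2 * n := by gcongr
    _ = (n*U)^3 * U^1 := by ring
    _ ≤ S^3 * U^3 := by
      have : U^1 ≤ U^3 := pow_le_pow_right₀ hU (by norm_num)
      gcongr
    _ ≤ (171000^2 * (m^6 * K^2)) * (S^3 * U^3) := le_mul_of_one_le_left (by positivity) a3
    _ = _ := by ring

theorem numU3 (n U S m p r X I l : ℝ) (hn : 1 ≤ n) (hU : 0 ≤ U) (hS : 0 ≤ S) (hm : 1 ≤ m) (hp : 0 < p) (hr : 0 ≤ r) (hX : 0 < X) (hI : 0 ≤ I)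
    (hl : l ≤ n * U) (h0 : r * X ≤ n * U)
    (h1 : n * r * X ≤ m * I) (h2 : (I - l * (S * X) / p)^2 ≤ l * (p * (S * X))) :
    r^2 * X ≤ 4 * m^2 * (p*S*U/n + S*n*U^2/p) := by
  have hn0 : 0 < n := by linarith
  have q1 : 0 ≤ p*S*U/n := by positivity
  have q2 : 0 ≤ S*n*U^2/p := by positivity
  have hT : l * (S*X) / p ≤ n * U * (S * X) / p := by gcongr
  have hm2 : m ≤ m^2 := by nlinarith
  by_cases hc : I ≤ 2 * (n * U * (S * X) / p)
  · have a1 : r ≤ 2 * m * (U * S / p) := by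
      have : (n*X) * r ≤ (n*X) * (2 * m * (U * S / p)) := by
        calc (n*X) * r = n * r * X := by ring
          _ ≤ m * I := h1
          _ ≤ m * (2 * (n * U * (S * X) / p)) := by gcongr
          _ = _ := by ring
      exact le_of_mul_le_mul_left this (by positivity)
    calc r^2 * X = r * (r*X) := by ring
      _ ≤ (2 * m * (U * S / p)) * (n*U) := by gcongr
      _ = 2 * m * (S*n*U^2/p) := by ring
      _ ≤ 4 * m^2 * (S*n*U^2/p) := by apply mul_le_mul_of_nonneg_right _ q2; nlinarith
      _ ≤ _ := by gcongr; linarith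
  · rw [not_le] at hc
    have a1 : I / 2 ≤ I - l * (S * X) / p := by linarith
    have a2 : (I/2)^2 ≤ n * U * (p * (S * X)) := by
      calc (I/2)^2 ≤ (I - l * (S * X) / p)^2 := by gcongr
        _ ≤ _ := h2
        _ ≤ _ := by gcongr
    have a3 : r^2 * X ≤ 4 * m^2 * (p*S*U/n) := by
      have : (n^2*X) * (r^2*X) ≤ (n^2*X) * (4 * m^2 * (p*S*U/n)) := by
        calc (n^2*X) * (r^2*X) = (n*r*X)^2 := by ring
          _ ≤ (m*I)^2 := by gcongr
          _ = 4 * m^2 * (I/2)^2 := by ring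
          _ ≤ 4 * m^2 * (n * U * (p * (S * X))) := by gcongr
          _ = _ := by field_simp
      exact le_of_mul_le_mul_left this (by positivity)
    calc _ ≤ _ := a3
      _ ≤ _ := by gcongr; linarith

theorem numU4 (n U S Q W m p K e : ℝ) (hn : 1 ≤ n) (hU : 0 ≤ U) (hS : 0 ≤ S) (hQ : 0 ≤ Q) (hm : 1 ≤ m) (hK : 1 ≤ K) (hp : 0 < p) (he0 : 0 ≤ e)
    (hSW : S ≤ W) (hQW : Q ≤ W) (hW : W^3 ≤ n^4) (hnp : n^5 ≤ p^3) (hUQ : U * n ≤ Q^2) (hc : p^2 ≤ 144 * (S*n*U))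
    (h : e ≤ 2^2 * K * (4 * m^2 * (p*S*U/n + S*n*U^2/p))) :
    e^2 * n ≤ 171000^2 * m^6 * K^2 * W^3 * U^3 := by
  have hn0 : 0 < n := by linarith
  have hW0 : 0 ≤ W := hS.trans hSW
  have b1 : (p*S*U/n)^2 * n ≤ 144 * (W^3*U^3) := by
    calc (p*S*U/n)^2 * n = p^2 * (S^2*U^2/n) := by field_simp
      _ ≤ (144 * (S*n*U)) * (S^2*U^2/n) := by gcongr
      _ = 144 * (S^3*U^3) := by field_simp
      _ ≤ _ := by gcongr
  have w : n^2 * W ≤ p^2 := by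
    have : (n^2*W)^3 ≤ (p^2)^3 := by
      calc (n^2*W)^3 = n^6 * W^3 := by ring
        _ ≤ n^6 * n^4 := by gcongr
        _ = (n^5)^2 := by ring
        _ ≤ (p^3)^2 := by gcongr
        _ = _ := by ring
    exact le_of_pow_le_pow_left₀ (by norm_num) (by positivity) this
  have b2 : (S*n*U^2/p)^2 * n ≤ W^3*U^3 := by
    rw [div_pow, div_mul_eq_mul_div, div_le_iff₀ (by positivity)]
    calc (S*n*U^2)^2 * n = S^2 * n^2 * (U*n) * U^3 := by ring
      _ ≤ W^2 * n^2 * (W^2) * U^3 := by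
        have : Q^2 ≤ W^2 := by gcongr
        have := hUQ.trans this
        gcongr
      _ = W^3 * U^3 * (n^2 * W) := by ring
      _ ≤ W^3 * U^3 * p^2 := by gcongr
  have b3 : (p*S*U/n + S*n*U^2/p)^2 * n ≤ 290 * (W^3*U^3) := by
    have : (p*S*U/n + S*n*U^2/p)^2 ≤ 2 * ((p*S*U/n)^2 + (S*n*U^2/p)^2) := by nlinarith [sq_nonneg (p*S*U/n - S*n*U^2/p)]
    nlinarith
  have hm46 : m^4 ≤ m^6 := pow_le_pow_right₀ hm (by norm_num)
  calc e^2 * n ≤ (2^2 * K * (4 * m^2 * (p*S*U/n + S*n*U^2/p)))^2 * n := by gcongr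
    _ = 256 * K^2 * m^4 * ((p*S*U/n + S*n*U^2/p)^2 * n) := by ring
    _ ≤ 256 * K^2 * m^4 * (290 * (W^3*U^3)) := by gcongr
    _ = 74240 * (m^4 * (K^2 * W^3 * U^3)) := by ring
    _ ≤ 171000^2 * (m^6 * (K^2 * W^3 * U^3)) := by gcongr; norm_num
    _ = _ := by ring

section setting
variable {p : ℕ} [Fact p.Prime] (A : Finset (ZMod p)ˣ) (g h : (ZMod p)ˣ → (ZMod p)ˣ)

theorem sum_jc_eq (X : Finset (ZMod p)ˣ) (Y : Finset (ZMod p)) (L : Finset (ZMod p × ZMod p)) :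
    ∑ z ∈ X, jc Y L z = ∑ l ∈ L, ((Y ×ˢ val X).filter fun q => l.1 * q.1 + l.2 = q.2).card := by
  have : ∑ z ∈ X, jc Y L z = ∑ z ∈ val X, jc Y L z := by
    unfold val; rw [Finset.sum_image]
    intro a _ b _ hab; exact Units.val_injective hab
  rw [this]
  unfold jc
  simp only [Finset.card_filter, Finset.sum_product]
  have e : ∀ l ∈ L, ∑ y ∈ Y, ∑ z ∈ val X, (if l.1 * y + l.2 = z then 1 else 0) = ∑ z ∈ val X, ∑ y ∈ Y, (if l.1 * y + l.2 = z then 1 else 0) := fun l _ => Finset.sum_comm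
  rw [Finset.sum_congr rfl e, Finset.sum_comm (s := L)]
  exact Finset.sum_congr rfl fun z _ => Finset.sum_comm

theorem EU_bound (hA : A.Nonempty) (m : ℕ) (hm1 : 1 ≤ m) (hm : ∀ t, (univ.filter fun x => g x * h x = t).card ≤ m)
    (hp : A.card ^ 5 ≤ p ^ 3) (W : ℕ) (hSW : (Sset A g h).card ≤ W) (hQW : (A * A).card ≤ W) (hW : W^3 ≤ A.card ^ 4) (U : Finset (ZMod p)ˣ) (hUA : U ⊆ A / A) :
    (EU A U : ℝ)^2 * A.card ≤ 171000^2 * (m:ℝ)^6 * (Nat.log 2 A.card + 1 : ℕ)^2 * (W:ℝ)^3 * (U.card:ℝ)^3 := by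
  have hp0 : 0 < p := (Fact.out : p.Prime).pos
  have hn0 : 0 < A.card := hA.card_pos
  have hnS := n_le_S A g h hA
  have hnlog : A.card ≤ 2^(Nat.log 2 A.card + 1) := (Nat.lt_pow_succ_log_self (by norm_num) _).le
  set K := Nat.log 2 A.card + 1 with hK
  have hK1 : (1:ℝ) ≤ K := by exact_mod_cast (by omega : 1 ≤ K)
  have hn1 : (1:ℝ) ≤ A.card := by exact_mod_cast hn0
  have hm1' : (1:ℝ) ≤ m := by exact_mod_cast hm1
  have hSW' : ((Sset A g h).card : ℝ) ≤ W := by exact_mod_cast hSW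
  have hUn : U.card ≤ A.card ^ 2 := by
    rw [pow_two]; exact (Finset.card_le_card hUA).trans Finset.card_div_le
  have hSn : (Sset A g h).card ≤ A.card ^ 2 := by
    rw [pow_two]; exact Finset.card_image₂_le _ _ _
  have hEU := EU_le A U
  rcases Nat.eq_zero_or_pos U.card with hU0 | hU0
  · have : EU A U = 0 := by rw [hU0] at hEU; simpa using hEU
    rw [this, hU0]; simp
  have hU1 : (1:ℝ) ≤ U.card := by exact_mod_cast hU0
  have mono : 171000^2 * (m:ℝ)^6 * (K:ℝ)^2 * ((Sset A g h).card:ℝ)^3 * (U.card:ℝ)^3 ≤ 171000^2 * (m:ℝ)^6 * (K:ℝ)^2 * (W:ℝ)^3 * (U.card:ℝ)^3 := by gcongr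
  by_cases hc : 144 * ((Sset A g h).card * A.card * U.card) < p ^ 2
  · refine le_trans ?_ mono
    rcases le_total (A.card * U.card) (Sset A g h).card with hcc | hcc
    · exact numU2 _ _ _ _ _ _ hn1 hU1 hm1' hK1 (by positivity) (by exact_mod_cast hcc) (by exact_mod_cast hEU)
    · have hN : (Sset A g h).card * (L2 A U g h).card ≤ (Sset A g h).card * A.card * U.card := by
        rw [mul_assoc]; exact Nat.mul_le_mul_left _ (L2_card A g h U)
      have hsq : (Real.sqrt ((Sset A g h).card * A.card * U.card))^2 = ((Sset A g h).card * A.card * U.card : ℝ) := Real.sq_sqrt (by positivity)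
      have hJ := J_bound2 p (Sset A g h) (L2 A U g h) ((Sset A g h).card + A.card + m * U.card) (by omega)
        (fun α β γ hab => (L2_lines A g h m hm U α β γ hab).trans (by omega)) (lt_of_le_of_lt (Nat.mul_le_mul_left _ hN) hc)
        (Real.sqrt ((Sset A g h).card * A.card * U.card)) (by positivity)
        (by rw [hsq]; exact_mod_cast hN) (5 * K) (by
          calc _ ≤ (Sset A g h).card * A.card * U.card := hN
            _ ≤ A.card ^ 2 * A.card * A.card ^ 2 := by gcongr
            _ = A.card ^ 5 := by ring
            _ ≤ (2^K)^5 := Nat.pow_le_pow_left hnlog 5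
            _ = _ := by rw [← pow_mul, mul_comm])
      have hfin : A.card ^ 2 * EU A U ≤ m^2 * J (Sset A g h) (L2 A U g h) := by
        rw [J_eq, EU, Finset.mul_sum, Finset.mul_sum]
        calc _ ≤ ∑ z : (ZMod p)ˣ, m^2 * jc (Sset A g h) (L2 A U g h) (z : ZMod p) ^ 2 := by
              refine Finset.sum_le_sum fun z _ => ?_
              rw [← mul_pow, ← mul_pow]
              exact Nat.pow_le_pow_left (rep_bound A g h m hm U z) 2
          _ = ∑ z ∈ val univ, m^2 * jc (Sset A g h) (L2 A U g h) z ^ 2 := by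
              unfold val; rw [Finset.sum_image]
              intro a _ b _ hab; exact Units.val_injective hab
          _ ≤ _ := Finset.sum_le_sum_of_subset (subset_univ _)
      exact numU1 _ _ _ _ _ _ _ _ hn1 hU1 (by exact_mod_cast hnS) (by exact_mod_cast hUn) (by positivity) hsq hm1' hK1 (by positivity) (by exact_mod_cast hcc)
        (by push_cast at hJ; exact hJ) (by exact_mod_cast hfin)
  · rw [not_lt] at hc
    have hUQ : U.card * A.card ≤ (A * A).card ^ 2 := by
      have := Finset.ruzsa_triangle_inequality_div_mul_mul A A A
      rw [pow_two]
      exact (Nat.mul_le_mul_right _ (Finset.card_le_card hUA)).trans this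
    refine numU4 A.card U.card (Sset A g h).card (A * A).card W m p K (EU A U) hn1 (by positivity) (by positivity) (by positivity) hm1' hK1 (by exact_mod_cast hp0) (by positivity)
      hSW' (by exact_mod_cast hQW) (by exact_mod_cast hW) (by exact_mod_cast hp) (by exact_mod_cast hUQ) (by exact_mod_cast hc) ?_
    unfold EU
    refine dyadic (rep A U) A.card 2 (by norm_num) (rep_le1 A U) _ ?_
    intro r hr
    set X := univ.filter fun x => r ≤ rep A U x with hX
    rcases Nat.eq_zero_or_pos X.card with hX0 | hX0
    · rw [hX0]; push_cast; rw [mul_zero]; positivity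
    have hrX : r * X.card ≤ A.card * U.card := by
      rw [← sum_rep, mul_comm, ← smul_eq_mul, ← Finset.sum_const]
      refine (Finset.sum_le_sum (g := rep A U) fun x hx => (Finset.mem_filter.1 hx).2).trans ?_
      exact Finset.sum_le_sum_of_subset (subset_univ _)
    have hI : A.card * r * X.card ≤ m * ∑ z ∈ X, jc (Sset A g h) (L2 A U g h) z := by
      rw [Finset.mul_sum, mul_comm, ← smul_eq_mul, ← Finset.sum_const]
      refine Finset.sum_le_sum fun x hx => ?_
      exact (Nat.mul_le_mul_left _ (Finset.mem_filter.1 hx).2).trans (rep_bound A g h m hm U x)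
    rw [sum_jc_eq] at hI
    have h2 := second_moment p (Sset A g h ×ˢ val X) (L2 A U g h)
    rw [Finset.card_product, card_val] at h2
    refine numU3 A.card U.card (Sset A g h).card m p r X.card _ (L2 A U g h).card hn1 (by positivity) (by positivity) hm1' (by exact_mod_cast hp0) (by positivity) (by exact_mod_cast hX0) (Nat.cast_nonneg _)
      (by exact_mod_cast L2_card A g h U) (by exact_mod_cast hrX) (by exact_mod_cast hI) ?_
    rw [Nat.cast_mul] at h2
    exact h2
end setting
end PP

namespace PP

/-- the absolute constant -/
def C0 : ℝ := 524288 * 171000^2 * (16 * 151000^2)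

theorem numF (n Q S W m K b E : ℝ) (hn : 1 ≤ n) (hQ : 0 ≤ Q) (hS : 0 ≤ S) (hSW : S ≤ W) (hQW : Q ≤ W) (hm : 1 ≤ m) (hK : 1 ≤ K)
    (hb : b = 171000^2 * m^6 * K^2 * W^3 / n)
    (h1 : n^12 ≤ 524288 * K^2 * b * Q^4 * E) (h2 : E ≤ 2^4 * K * (151000^2 * m^6 * K^2 * S^2 * n^2)) :
    n^11 ≤ C0 * m^12 * K^7 * W^9 := by
  have hn0 : 0 < n := by linarith
  have hW0 : 0 ≤ W := hS.trans hSW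
  have hb0 : 0 ≤ b := by rw [hb]; positivity
  have : n * n^11 ≤ n * (C0 * m^12 * K^7 * W^9) := by
    calc n * n^11 = n^12 := by ring
      _ ≤ _ := h1
      _ ≤ 524288 * K^2 * b * Q^4 * (2^4 * K * (151000^2 * m^6 * K^2 * S^2 * n^2)) := by gcongr
      _ ≤ 524288 * K^2 * b * W^4 * (2^4 * K * (151000^2 * m^6 * K^2 * W^2 * n^2)) := by gcongr
      _ = _ := by rw [hb, C0]; field_simp; ring
  exact le_of_mul_le_mul_left this hn0

section setting
variable {p : ℕ} [Fact p.Prime] (A : Finset (ZMod p)ˣ) (g h : (ZMod p)ˣ → (ZMod p)ˣ)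

theorem main_units (hA : A.Nonempty) (m : ℕ) (hm1 : 1 ≤ m) (hm : ∀ t, (univ.filter fun x => g x * h x = t).card ≤ m)
    (hp : A.card ^ 5 ≤ p ^ 3) (W : ℕ) (hSW : (Sset A g h).card ≤ W) (hQW : (A * A).card ≤ W) :
    (A.card:ℝ)^11 ≤ C0 * (m:ℝ)^12 * (Nat.log 2 A.card + 1 : ℕ)^7 * (W:ℝ)^9 := by
  have hn0 : 0 < A.card := hA.card_pos
  have hn1 : (1:ℝ) ≤ A.card := by exact_mod_cast hn0
  have hm1' : (1:ℝ) ≤ m := by exact_mod_cast hm1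
  have hK1 : (1:ℝ) ≤ (Nat.log 2 A.card + 1 : ℕ) := by exact_mod_cast (by omega : 1 ≤ Nat.log 2 A.card + 1)
  by_cases hW : W^3 ≤ A.card ^ 4
  · have hE := E4_bound A g h hA m hm1 hm hp
    have hG := group_lemma A hA (171000^2 * (m:ℝ)^6 * (Nat.log 2 A.card + 1 : ℕ)^2 * (W:ℝ)^3 / A.card) (by positivity) (by
      intro U hU
      have := EU_bound A g h hA m hm1 hm hp W hSW hQW hW U hU
      rw [div_mul_eq_mul_div, le_div_iff₀ (by linarith)]
      exact this)
    exact numF A.card (A * A).card (Sset A g h).card W m (Nat.log 2 A.card + 1 : ℕ) _ (E4 A) hn1 (by positivity) (by positivity) (by exact_mod_cast hSW) (by exact_mod_cast hQW)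
      hm1' hK1 rfl (by push_cast at hG ⊢; exact hG) hE
  · rw [not_le] at hW
    have hW' : (A.card:ℝ)^4 ≤ (W:ℝ)^3 := by exact_mod_cast hW.le
    have hC : 1 ≤ C0 * (m:ℝ)^12 * (Nat.log 2 A.card + 1 : ℕ)^7 := by
      have a1 := one_le_pow₀ hm1' (n := 12)
      have a2 := one_le_pow₀ hK1 (n := 7)
      have a3 : 1 ≤ C0 := by norm_num [C0]
      exact one_le_mul_of_one_le_of_one_le (one_le_mul_of_one_le_of_one_le a3 a1) a2
    calc (A.card:ℝ)^11 ≤ (A.card:ℝ)^12 := pow_le_pow_right₀ hn1 (by norm_num)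
      _ = ((A.card:ℝ)^4)^3 := by ring
      _ ≤ ((W:ℝ)^3)^3 := by gcongr
      _ = (W:ℝ)^9 := by ring
      _ ≤ _ := le_mul_of_one_le_left (by positivity) hC
end setting

theorem numZ (n W D l : ℝ) (hn : 1 ≤ n) (hW : 0 ≤ W) (hD : 0 < D) (hl : 0 < l) (h : n^11 ≤ D * l^7 * W^9) :
    D ^ (-(1/9:ℝ)) * l ^ (-(7/9:ℝ)) * n ^ ((11:ℝ)/9) ≤ W := by
  have hn0 : 0 < n := by linarith
  have h1 : (n^11) ^ (1/9:ℝ) ≤ (D * l^7 * W^9) ^ (1/9:ℝ) := Real.rpow_le_rpow (by positivity) h (by norm_num)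
  have e1 : (n^11) ^ (1/9:ℝ) = n ^ ((11:ℝ)/9) := by
    rw [← Real.rpow_natCast, ← Real.rpow_mul hn0.le]; norm_num
  have e2 : (D * l^7 * W^9) ^ (1/9:ℝ) = D ^ (1/9:ℝ) * l ^ (7/9:ℝ) * W := by
    rw [Real.mul_rpow (by positivity) (by positivity), Real.mul_rpow (by positivity) (by positivity)]
    congr 1
    · congr 1
      rw [← Real.rpow_natCast, ← Real.rpow_mul hl.le]; norm_num
    · rw [← Real.rpow_natCast, ← Real.rpow_mul hW]; norm_num
  rw [e1, e2] at h1
  rw [Real.rpow_neg hD.le, Real.rpow_neg hl.le, ← mul_inv, inv_mul_le_iff₀ (by positivity)]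
  exact h1

theorem K_le (n : ℕ) (hn : 1 ≤ n) : ((Nat.log 2 n + 1 : ℕ):ℝ) ≤ 2 * Real.log (2 * n) := by
  have h1 : Nat.log 2 n + 1 = Nat.log 2 (n * 2) := (Nat.log_mul_base (by norm_num) (by omega)).symm
  rw [h1]
  have h2 := Real.natLog_le_logb (n * 2) 2
  refine h2.trans ?_
  have hl : (1/2:ℝ) < Real.log 2 := by have := Real.log_two_gt_d9; linarith
  rw [Real.logb, div_le_iff₀ (by push_cast; linarith)]
  push_cast
  rw [mul_comm (n:ℝ) 2]
  have : 0 ≤ Real.log (2 * n) := Real.log_nonneg (by have : (1:ℝ) ≤ n := by exact_mod_cast hn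
                                                     linarith)
  nlinarith
end PP

theorem product_expander_eleven_ninths :
    ∀ m : ℕ, 1 ≤ m → ∃ C > (0:ℝ), ∃ c ≥ (0:ℝ),
      ∀ (p : ℕ) [Fact p.Prime], p ≠ 2 →
      ∀ g h : ZMod p → ZMod p,
      (∀ x : ZMod p, x ≠ 0 → g x ≠ 0) → (∀ x : ZMod p, x ≠ 0 → h x ≠ 0) →
      mu (fun x => g x * h x) ≤ m →
      ∀ A : Finset (ZMod p), A.Nonempty → (0:ZMod p) ∉ A →
      (A.card : ℝ) ≤ (p:ℝ) ^ ((3:ℝ)/5) →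
      C * (Real.log (2 * (A.card:ℝ))) ^ (-c) * (A.card : ℝ) ^ ((11:ℝ)/9) ≤
        max ((Finset.image₂ (fun x y => g x * (h x + y)) A A).card : ℝ) (((A * A).card : ℝ)) := by
  intro m hm1
  have hD : (0:ℝ) < PP.C0 * (m:ℝ)^12 * 2^7 := by
    have : (0:ℝ) < m := by exact_mod_cast hm1
    have : 0 < PP.C0 := by norm_num [PP.C0]
    positivity
  refine ⟨(PP.C0 * (m:ℝ)^12 * 2^7) ^ (-(1/9:ℝ)), Real.rpow_pos_of_pos hD _, 7/9, by norm_num, ?_⟩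
  intro p _ _ g h hg hh hmu A hA hA0 hAp
  set A' : Finset (ZMod p)ˣ := univ.filter (fun u : (ZMod p)ˣ => (u : ZMod p) ∈ A) with hA'
  have hval : PP.val A' = A := by
    ext x
    simp only [PP.val, hA', mem_image, mem_filter, mem_univ, true_and]
    constructor
    · rintro ⟨u, hu, rfl⟩; exact hu
    · intro hx
      have hx0 : x ≠ 0 := fun e => hA0 (e ▸ hx)
      exact ⟨Units.mk0 x hx0, hx, rfl⟩
  have hcard : A'.card = A.card := by rw [← hval, PP.card_val]
  set g' : (ZMod p)ˣ → (ZMod p)ˣ := fun u => Units.mk0 (g u) (hg u u.ne_zero) with hg'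
  set h' : (ZMod p)ˣ → (ZMod p)ˣ := fun u => Units.mk0 (h u) (hh u u.ne_zero) with hh'
  have hS : PP.Sset A' g' h' = Finset.image₂ (fun x y => g x * (h x + y)) A A := by
    conv_rhs => rw [← hval]
    unfold PP.Sset PP.val
    rw [Finset.image₂_image_left, Finset.image₂_image_right]
    rfl
  have hQ : (A' * A').card = (A * A).card := by
    rw [← PP.card_val (A' * A')]
    congr 1
    conv_rhs => rw [← hval]
    unfold PP.val
    exact Finset.image_mul (Units.coeHom (ZMod p))
  have hm : ∀ t, (univ.filter fun x => g' x * h' x = t).card ≤ m := by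
    intro t
    refine le_trans ?_ hmu
    refine le_trans ?_ (Finset.le_sup (f := fun t => (Finset.univ.filter fun x : ZMod p => x ≠ 0 ∧ g x * h x = t).card) (b := (t : ZMod p)) (by simp))
    refine Finset.card_le_card_of_injOn (fun u => (u : ZMod p)) ?_ (fun a _ b _ hab => Units.val_injective hab)
    intro u hu
    simp only [coe_filter, mem_univ, true_and, Set.mem_setOf_eq] at hu ⊢
    refine ⟨u.ne_zero, ?_⟩
    rw [← hu]
    simp [hg', hh']
  have hA'ne : A'.Nonempty := by rw [← Finset.card_pos, hcard]; exact hA.card_pos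
  have hp5 : A'.card ^ 5 ≤ p ^ 3 := by
    rw [hcard]
    have h1 : (A.card:ℝ)^5 ≤ ((p:ℝ) ^ ((3:ℝ)/5))^5 := by gcongr
    have h2 : ((p:ℝ) ^ ((3:ℝ)/5))^5 = (p:ℝ)^3 := by
      rw [← Real.rpow_natCast, ← Real.rpow_mul (by positivity), ← Real.rpow_natCast]; norm_num
    rw [h2] at h1
    exact_mod_cast h1
  have key := PP.main_units A' g' h' hA'ne m hm1 hm hp5 (max (PP.Sset A' g' h').card (A' * A').card) (le_max_left _ _) (le_max_right _ _)
  rw [hS, hQ, hcard] at key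
  have hn1 : (1:ℝ) ≤ A.card := by exact_mod_cast hA.card_pos
  have hl : 0 < Real.log (2 * (A.card:ℝ)) := Real.log_pos (by linarith)
  have hK := PP.K_le A.card hA.card_pos
  rw [← Nat.cast_max]
  refine PP.numZ _ _ _ _ hn1 (Nat.cast_nonneg _) hD hl ?_
  refine key.trans ?_
  have hC0 : 0 ≤ PP.C0 := by norm_num [PP.C0]
  calc _ ≤ PP.C0 * (m:ℝ)^12 * (2 * Real.log (2 * (A.card:ℝ)))^7 * _ := by gcongr
    _ = _ := by ring
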